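/- Let P be a d-dimensional simplicial polytope that is a maximizer of the isotropic constant, i.e., L_P ≥ L_K for every d-dimensional convex body K. Then P is a simplex, i.e., the convex hull of d+1 affinely independent points. -/

import Mathlib

open MeasureTheory Finset
open scoped ProbabilityTheory
open scoped RealInnerProductSpace

noncomputable section

abbrev Euc (d : ℕ) := EuclideanSpace ℝ (Fin d)

section GeneralSpace

variable {V : Type*} [NormedAddCommGroup V] [NormedSpace ℝ V]

/-- The dimension of a set: the rank of the direction of its affine span. -/
noncomputable def sdim (F : Set V) : ℕ := Module.finrank ℝ (affineSpan ℝ F).direction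

/-- `F` is a simplex with `n` vertices (an `(n-1)`-dimensional simplex). -/
def IsSimplexWith (n : ℕ) (F : Set V) : Prop :=
  ∃ w : Fin n → V, AffineIndependent ℝ w ∧ F = convexHull ℝ (Set.range w)

/-- A polytope is the convex hull of finitely many points. -/
def IsPolytope (P : Set V) : Prop := ∃ S : Finset V, P = convexHull ℝ (S : Set V)

/-- A facet of a `d`-dimensional polytope: an exposed face of dimension `d - 1`. -/
def IsFacetOf (d : ℕ) (P F : Set V) : Prop := IsExposed ℝ P F ∧ sdim F = d - 1

/-- A `d`-dimensional simplicial polytope: a polytope of dimension `d`, each facet of which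
is a `(d-1)`-dimensional simplex (i.e. has `d` affinely independent vertices). -/
def IsSimplicialPolytope (d : ℕ) (P : Set V) : Prop :=
  IsPolytope P ∧ sdim P = d ∧ ∀ F : Set V, IsFacetOf d P F → IsSimplexWith d F

end GeneralSpace

/-- A convex body: compact, convex, with nonempty interior. -/
def IsConvexBody {d : ℕ} (K : Set (Euc d)) : Prop :=
  IsCompact K ∧ Convex ℝ K ∧ (interior K).Nonempty

/-- The barycenter `μ_K` of the uniform distribution on `K`. -/
noncomputable def centroid {d : ℕ} (K : Set (Euc d)) : Euc d :=
  (volume K).toReal⁻¹ • ∫ x in K, x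

/-- The covariance matrix `A(K)` of the uniform distribution on `K`. -/
noncomputable def covMatrix {d : ℕ} (K : Set (Euc d)) : Matrix (Fin d) (Fin d) ℝ :=
  Matrix.of fun i j =>
    (volume K).toReal⁻¹ * ∫ x in K, (x i - centroid K i) * (x j - centroid K j)

/-- The isotropic constant `L_K`, defined by `L_K ^ (2d) = det A(K) / vol(K) ^ 2`. -/
noncomputable def isoConst {d : ℕ} (K : Set (Euc d)) : ℝ :=
  ((covMatrix K).det / (volume K).toReal ^ 2) ^ ((2 * (d : ℝ))⁻¹)

/-- `K` is isotropic: its barycenter is the origin and its covariance matrix is the identity. -/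
def IsIsotropic {d : ℕ} (K : Set (Euc d)) : Prop :=
  centroid K = 0 ∧ covMatrix K = 1

/-- `P` is a local extremum (local maximum or local minimum) of `K ↦ L_K` among convex bodies,
with respect to the Hausdorff metric. -/
def IsLocalExtremumOfIsoConst {d : ℕ} (P : Set (Euc d)) : Prop :=
  (∃ ε > 0, ∀ K : Set (Euc d), IsConvexBody K →
      Metric.hausdorffDist K P < ε → isoConst K ≤ isoConst P) ∨
  (∃ ε > 0, ∀ K : Set (Euc d), IsConvexBody K →
      Metric.hausdorffDist K P < ε → isoConst P ≤ isoConst K)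

/-- The polar angle of `(a, b) ∈ ℝ²`, normalized to lie in `[-π, π)`. -/
noncomputable def polarAngle (a b : ℝ) : ℝ :=
  if Complex.arg ⟨a, b⟩ = Real.pi then -Real.pi else Complex.arg ⟨a, b⟩

/-- The standard solid simplex `{x ≥ 0, ∑ x ≤ 1}`. -/
def solidSimplex (ι : Type*) [Fintype ι] : Set (ι → ℝ) :=
  {x | (∀ i, 0 ≤ x i) ∧ ∑ i, x i ≤ 1}

theorem isClosed_solidSimplex (ι : Type*) [Fintype ι] : IsClosed (solidSimplex ι) := by
  have : solidSimplex ι = (⋂ i, {x : ι → ℝ | 0 ≤ x i}) ∩ {x | ∑ i, x i ≤ 1} := by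
    ext x; simp [solidSimplex]
  rw [this]
  exact (isClosed_iInter fun i => isClosed_le (by fun_prop) (by fun_prop)).inter
    (isClosed_le (by fun_prop) (by fun_prop))

theorem integrableOn_exp_neg_mul_pow (n : ℕ) :
    IntegrableOn (fun s : ℝ => Real.exp (-s) * s ^ n) (Set.Ioi 0) := by
  have h := Real.GammaIntegral_convergent (s := n + 1) (by positivity)
  refine h.congr_fun (fun s _ => ?_) measurableSet_Ioi
  simp [Real.rpow_natCast]

theorem integral_exp_neg_mul_pow (n : ℕ) :
    ∫ s in Set.Ioi (0 : ℝ), Real.exp (-s) * s ^ n = (n.factorial : ℝ) := by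
  rw [← Real.Gamma_nat_eq_factorial, Real.Gamma_eq_integral (by positivity)]
  refine setIntegral_congr_fun measurableSet_Ioi (fun s _ => ?_)
  simp [Real.rpow_natCast]

theorem lintegral_exp_neg_mul_pow (n : ℕ) :
    ∫⁻ s in Set.Ioi (0 : ℝ), ENNReal.ofReal (Real.exp (-s) * s ^ n)
      = ENNReal.ofReal (n.factorial : ℝ) := by
  rw [← integral_exp_neg_mul_pow, ofReal_integral_eq_lintegral_ofReal
    (integrableOn_exp_neg_mul_pow n)]
  refine (ae_restrict_iff' measurableSet_Ioi).2 (.of_forall fun s hs => ?_)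
  have : (0 : ℝ) < s := hs
  positivity

theorem lintegral_exp_neg_Ici (a : ℝ) :
    ∫⁻ s in Set.Ici a, ENNReal.ofReal (Real.exp (-s)) = ENNReal.ofReal (Real.exp (-a)) := by
  rw [Measure.restrict_congr_set Ioi_ae_eq_Ici.symm, ← integral_exp_neg_Ioi,
    ofReal_integral_eq_lintegral_ofReal (integrableOn_exp_neg_Ioi a)]
  exact .of_forall fun s => (Real.exp_pos _).le

section Dirichlet
variable {ι : Type*} [Fintype ι]

/-- The monomial with exponents `m` restricted to the positive orthant. -/
def orthantMonomial (m : ι → ℕ) (x : ι → ℝ) : ℝ :=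
  ∏ i, (Set.Ioi (0 : ℝ)).indicator (fun y => y ^ m i) (x i)

theorem orthantMonomial_nonneg (m : ι → ℕ) (x : ι → ℝ) : 0 ≤ orthantMonomial m x :=
  Finset.prod_nonneg fun i _ => Set.indicator_nonneg (fun y (hy : 0 < y) => by positivity) _

theorem measurable_orthantMonomial (m : ι → ℕ) : Measurable (orthantMonomial m) := by
  unfold orthantMonomial
  refine Finset.measurable_prod _ fun i _ => ?_
  exact (Measurable.indicator (by fun_prop) measurableSet_Ioi).comp (measurable_pi_apply i)

theorem orthantMonomial_eq_zero (m : ι → ℕ) {x : ι → ℝ} (h : ∑ i, x i < 0) :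
    orthantMonomial m x = 0 := by
  obtain ⟨i, -, hi⟩ := Finset.exists_lt_of_sum_lt (f := x) (g := fun _ => (0 : ℝ)) (s := univ)
    (by simpa using h)
  exact Finset.prod_eq_zero (mem_univ i) (Set.indicator_of_notMem (by simpa using hi.le) _)

theorem orthantMonomial_smul (m : ι → ℕ) {s : ℝ} (hs : 0 < s) (x : ι → ℝ) :
    orthantMonomial m (s • x) = s ^ (∑ i, m i) * orthantMonomial m x := by
  unfold orthantMonomial
  rw [← Finset.prod_pow_eq_pow_sum, ← Finset.prod_mul_distrib]
  refine Finset.prod_congr rfl fun i _ => ?_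
  by_cases h : 0 < x i
  · rw [Set.indicator_of_mem (show (s • x) i ∈ Set.Ioi 0 by simpa using mul_pos hs h),
      Set.indicator_of_mem (show x i ∈ Set.Ioi 0 from h)]
    simp [mul_pow]
  · rw [Set.indicator_of_notMem (show (s • x) i ∉ Set.Ioi 0 by
      simpa using mul_nonpos_of_nonneg_of_nonpos hs.le (not_lt.1 h)),
      Set.indicator_of_notMem (show x i ∉ Set.Ioi 0 from h), mul_zero]

theorem lintegral_orthantMonomial_mul_exp (m : ι → ℕ) :
    ∫⁻ x : ι → ℝ, ENNReal.ofReal (orthantMonomial m x) * ENNReal.ofReal (Real.exp (-∑ i, x i))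
      = ENNReal.ofReal (∏ i, ((m i).factorial : ℝ)) := by
  let f : ι → ℝ → ℝ := fun i => (Set.Ioi (0 : ℝ)).indicator fun s => Real.exp (-s) * s ^ m i
  have hf : ∀ x : ι → ℝ, orthantMonomial m x * Real.exp (-∑ i, x i) = ∏ i, f i (x i) := by
    intro x
    rw [← Finset.sum_neg_distrib, Real.exp_sum, orthantMonomial, ← Finset.prod_mul_distrib]
    refine Finset.prod_congr rfl fun i _ => ?_
    by_cases h : x i ∈ Set.Ioi 0
    · simp only [f, Set.indicator_of_mem h]; ring
    · simp only [f, Set.indicator_of_notMem h, zero_mul]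
  have h_int : ∀ i, Integrable (f i) := fun i =>
    (integrable_indicator_iff measurableSet_Ioi).2 (integrableOn_exp_neg_mul_pow _)
  have hnn : ∀ i s, 0 ≤ f i s := fun i s => Set.indicator_nonneg (fun y (hy : 0 < y) => by positivity) _
  have h1 : ∫ x : ι → ℝ, ∏ i, f i (x i) = ∏ i, ((m i).factorial : ℝ) := by
    rw [integral_fintype_prod_volume_eq_prod f]
    refine Finset.prod_congr rfl fun i _ => ?_
    rw [integral_indicator measurableSet_Ioi, integral_exp_neg_mul_pow]
  have h2 : Integrable fun x : ι → ℝ => ∏ i, f i (x i) := Integrable.fintype_prod h_int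
  rw [← h1, ofReal_integral_eq_lintegral_ofReal h2
    (.of_forall fun x => Finset.prod_nonneg fun i _ => hnn i _)]
  refine lintegral_congr fun x => ?_
  rw [← ENNReal.ofReal_mul (orthantMonomial_nonneg m x), hf]

theorem lintegral_orthantMonomial_scale (m : ι → ℕ) {s : ℝ} (hs : 0 < s) :
    ∫⁻ x in {x : ι → ℝ | ∑ i, x i ≤ s}, ENNReal.ofReal (orthantMonomial m x)
      = ENNReal.ofReal (s ^ (Fintype.card ι + ∑ i, m i)) *
        ∫⁻ x in {x : ι → ℝ | ∑ i, x i ≤ 1}, ENNReal.ofReal (orthantMonomial m x) := by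
  have hm : Measurable fun x : ι → ℝ => ENNReal.ofReal (orthantMonomial m x) :=
    (measurable_orthantMonomial m).ennreal_ofReal
  have hS : ∀ s : ℝ, MeasurableSet {x : ι → ℝ | ∑ i, x i ≤ s} := fun s =>
    (isClosed_le (by fun_prop) (by fun_prop)).measurableSet
  have hmap := Measure.map_addHaar_smul (volume : Measure (ι → ℝ)) (inv_ne_zero hs.ne')
  have key : ∫⁻ x in {x : ι → ℝ | ∑ i, x i ≤ s}, ENNReal.ofReal (orthantMonomial m x)
      = ∫⁻ x, ({x : ι → ℝ | ∑ i, x i ≤ 1}.indicator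
          (fun x => ENNReal.ofReal (s ^ (∑ i, m i)) * ENNReal.ofReal (orthantMonomial m x)))
          (s⁻¹ • x) := by
    rw [← lintegral_indicator (hS s)]
    refine lintegral_congr fun x => ?_
    have hiff : (∑ i, (s⁻¹ • x) i ≤ 1) ↔ ∑ i, x i ≤ s := by
      simp only [Pi.smul_apply, smul_eq_mul, ← Finset.mul_sum]
      rw [inv_mul_le_iff₀ hs, mul_one]
    by_cases h : ∑ i, x i ≤ s
    · rw [Set.indicator_of_mem (show x ∈ {x : ι → ℝ | ∑ i, x i ≤ s} from h),
        Set.indicator_of_mem (show s⁻¹ • x ∈ {x : ι → ℝ | ∑ i, x i ≤ 1} from hiff.2 h),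
        ← ENNReal.ofReal_mul (by positivity), ← orthantMonomial_smul m hs,
        smul_inv_smul₀ hs.ne']
    · rw [Set.indicator_of_notMem (show x ∉ {x : ι → ℝ | ∑ i, x i ≤ s} from h),
        Set.indicator_of_notMem (show s⁻¹ • x ∉ {x : ι → ℝ | ∑ i, x i ≤ 1} from
          fun h' => h (hiff.1 h'))]
  rw [key, ← lintegral_map (f := {x : ι → ℝ | ∑ i, x i ≤ 1}.indicator
          (fun x => ENNReal.ofReal (s ^ (∑ i, m i)) * ENNReal.ofReal (orthantMonomial m x)))
      ((hm.const_mul _).indicator (hS 1)) (measurable_const_smul _), hmap,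
    lintegral_smul_measure, lintegral_indicator (hS 1), lintegral_const_mul _ hm, smul_eq_mul,
    ← mul_assoc, ← ENNReal.ofReal_mul (by positivity)]
  congr 2
  rw [Module.finrank_fintype_fun_eq_card, inv_pow, inv_inv, abs_of_pos (by positivity), pow_add]

theorem lintegral_orthantMonomial (m : ι → ℕ) :
    ∫⁻ x in {x : ι → ℝ | ∑ i, x i ≤ 1}, ENNReal.ofReal (orthantMonomial m x)
      = ENNReal.ofReal ((∏ i, ((m i).factorial : ℝ)) /
          ((Fintype.card ι + ∑ i, m i).factorial : ℝ)) := by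
  set N := Fintype.card ι + ∑ i, m i with hN
  set I := ∫⁻ x in {x : ι → ℝ | ∑ i, x i ≤ 1}, ENNReal.ofReal (orthantMonomial m x) with hI
  have hm : Measurable fun x : ι → ℝ => ENNReal.ofReal (orthantMonomial m x) :=
    (measurable_orthantMonomial m).ennreal_ofReal
  have hS : ∀ s : ℝ, MeasurableSet {x : ι → ℝ | ∑ i, x i ≤ s} := fun s =>
    (isClosed_le (by fun_prop) (by fun_prop)).measurableSet
  have h := lintegral_orthantMonomial_mul_exp m
  have e1 : ∀ x : ι → ℝ,
      ENNReal.ofReal (orthantMonomial m x) * ENNReal.ofReal (Real.exp (-∑ i, x i))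
      = ∫⁻ s : ℝ, {p : (ι → ℝ) × ℝ | ∑ i, p.1 i ≤ p.2}.indicator
        (fun p => ENNReal.ofReal (orthantMonomial m p.1) * ENNReal.ofReal (Real.exp (-p.2))) (x, s) := by
    intro x
    rw [← lintegral_exp_neg_Ici, ← lintegral_const_mul _ (by fun_prop),
      ← lintegral_indicator measurableSet_Ici]
    rfl
  have hmeas : MeasurableSet {p : (ι → ℝ) × ℝ | ∑ i, p.1 i ≤ p.2} :=
    (isClosed_le (by fun_prop) (by fun_prop)).measurableSet
  simp_rw [e1] at h
  rw [lintegral_lintegral_swap (by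
    refine Measurable.aemeasurable ?_
    refine Measurable.indicator ?_ hmeas
    exact (hm.comp measurable_fst).mul (by fun_prop))] at h
  have e2 : ∀ s : ℝ, s ≠ 0 → ∫⁻ x : ι → ℝ, {p : (ι → ℝ) × ℝ | ∑ i, p.1 i ≤ p.2}.indicator
        (fun p => ENNReal.ofReal (orthantMonomial m p.1) * ENNReal.ofReal (Real.exp (-p.2))) (x, s)
      = (Set.Ioi (0 : ℝ)).indicator
          (fun s => ENNReal.ofReal (Real.exp (-s) * s ^ N) * I) s := by
    intro s hs0
    have e3 : ∫⁻ x : ι → ℝ, {p : (ι → ℝ) × ℝ | ∑ i, p.1 i ≤ p.2}.indicator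
        (fun p => ENNReal.ofReal (orthantMonomial m p.1) * ENNReal.ofReal (Real.exp (-p.2))) (x, s)
      = (∫⁻ x in {x : ι → ℝ | ∑ i, x i ≤ s}, ENNReal.ofReal (orthantMonomial m x))
          * ENNReal.ofReal (Real.exp (-s)) := by
      rw [← lintegral_mul_const _ hm, ← lintegral_indicator (hS s)]
      rfl
    rw [e3]
    rcases lt_or_gt_of_ne hs0 with hs | hs
    · rw [Set.indicator_of_notMem (by simpa using hs.le)]
      rw [setLIntegral_congr_fun (g := fun _ => 0) (hS s) (fun x hx => ?_)]
      · simp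
      · simp only [orthantMonomial_eq_zero m (lt_of_le_of_lt hx hs), ENNReal.ofReal_zero]
    · rw [Set.indicator_of_mem (show s ∈ Set.Ioi 0 from hs), lintegral_orthantMonomial_scale m hs,
        ENNReal.ofReal_mul (Real.exp_pos _).le]
      ring
  rw [lintegral_congr_ae ((Measure.ae_ne volume (0 : ℝ)).mono e2),
    lintegral_indicator measurableSet_Ioi, lintegral_mul_const _ (by fun_prop),
    lintegral_exp_neg_mul_pow] at h
  have hpos : (0 : ℝ) < (N.factorial : ℝ) := by positivity
  rw [ENNReal.ofReal_div_of_pos hpos, ← h, mul_comm]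
  refine (ENNReal.mul_div_cancel_right ?_ ENNReal.ofReal_ne_top).symm
  simpa using hpos.ne'

/-- Dirichlet's integral over the solid simplex. -/
theorem integral_solidSimplex_prod_pow (m : ι → ℕ) :
    ∫ x in solidSimplex ι, ∏ i, x i ^ m i
      = (∏ i, ((m i).factorial : ℝ)) / ((Fintype.card ι + ∑ i, m i).factorial : ℝ) := by
  have hS : MeasurableSet {x : ι → ℝ | ∑ i, x i ≤ 1} :=
    (isClosed_le (by fun_prop) (by fun_prop)).measurableSet
  have h1 : ∫ x in solidSimplex ι, ∏ i, x i ^ m i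
      = ∫ x in {x : ι → ℝ | ∑ i, x i ≤ 1}, orthantMonomial m x := by
    rw [← integral_indicator (isClosed_solidSimplex ι).measurableSet, ← integral_indicator hS]
    have hne : ∀ᵐ x : ι → ℝ, ∀ i, x i ≠ 0 := by
      rw [ae_all_iff]
      intro i
      exact (Measure.tendsto_eval_ae_ae (μ := fun _ : ι => (volume : Measure ℝ)) (i := i)).eventually
        (Measure.ae_ne volume (0 : ℝ))
    refine integral_congr_ae (hne.mono fun x hx => ?_)
    by_cases h0 : ∀ i, 0 ≤ x i
    · have he : orthantMonomial m x = ∏ i, x i ^ m i :=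
        Finset.prod_congr rfl fun i _ => Set.indicator_of_mem
          (show x i ∈ Set.Ioi 0 from lt_of_le_of_ne (h0 i) (hx i).symm) _
      by_cases h : ∑ i, x i ≤ 1
      · simp [Set.indicator, solidSimplex, h, h0, he]
      · simp [Set.indicator, solidSimplex, h]
    · have hz : orthantMonomial m x = 0 := by
        push Not at h0
        obtain ⟨i, hi⟩ := h0
        exact Finset.prod_eq_zero (mem_univ i) (Set.indicator_of_notMem (by simpa using hi.le) _)
      simp [Set.indicator, solidSimplex, h0, hz]
  rw [h1, integral_eq_lintegral_of_nonneg_ae (.of_forall (orthantMonomial_nonneg m))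
    (measurable_orthantMonomial m).aestronglyMeasurable, lintegral_orthantMonomial,
    ENNReal.toReal_ofReal (by positivity)]

end Dirichlet

section ConeSimplex
variable {ι : Type*} [Fintype ι]

theorem measureReal_solidSimplex :
    volume.real (solidSimplex ι) = 1 / ((Fintype.card ι).factorial : ℝ) := by
  have := integral_solidSimplex_prod_pow (ι := ι) 0
  simpa using this

theorem integral_solidSimplex_apply (i : ι) :
    ∫ x in solidSimplex ι, x i
      = volume.real (solidSimplex ι) / ((Fintype.card ι : ℝ) + 1) := by
  classical
  have := integral_solidSimplex_prod_pow (ι := ι) (Pi.single i 1)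
  have h1 : ∀ x : ι → ℝ, ∏ j, x j ^ (Pi.single i 1 : ι → ℕ) j = x i := by
    intro x
    rw [Finset.prod_eq_single i] <;> simp +contextual
  have h2 : ∏ j, (((Pi.single i 1 : ι → ℕ) j).factorial : ℝ) = 1 :=
    Finset.prod_eq_one fun j _ => by
      rcases eq_or_ne j i with rfl | h <;> simp [*]
  rw [measureReal_solidSimplex]
  simp_rw [h1, h2] at this
  rw [this, Finset.sum_pi_single' , if_pos (mem_univ i), Nat.factorial_succ]
  push_cast
  field_simp

theorem integral_solidSimplex_mul [DecidableEq ι] (i j : ι) :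
    ∫ x in solidSimplex ι, x i * x j
      = volume.real (solidSimplex ι) * (1 + if i = j then 1 else 0)
        / (((Fintype.card ι : ℝ) + 1) * ((Fintype.card ι : ℝ) + 2)) := by
  have := integral_solidSimplex_prod_pow (ι := ι) (Pi.single i 1 + Pi.single j 1)
  have h1 : ∀ x : ι → ℝ, ∏ k, x k ^ (Pi.single i 1 + Pi.single j 1 : ι → ℕ) k = x i * x j := by
    intro x
    simp_rw [Pi.add_apply, pow_add, Finset.prod_mul_distrib]
    rw [Finset.prod_eq_single i (by simp +contextual) (by simp),
      Finset.prod_eq_single j (by simp +contextual) (by simp)]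
    simp
  have h2 : ∏ k, (((Pi.single i 1 + Pi.single j 1 : ι → ℕ) k).factorial : ℝ)
      = 1 + if i = j then 1 else 0 := by
    rw [Finset.prod_eq_single_of_mem i (mem_univ _)]
    · rcases eq_or_ne i j with rfl | h
      · simp; norm_num
      · simp [h]
    · intro k _ hk
      rcases eq_or_ne k j with rfl | h <;> simp [*]
  have h3 : ∑ k, (Pi.single i 1 + Pi.single j 1 : ι → ℕ) k = 2 := by
    simp [Finset.sum_add_distrib, Finset.sum_pi_single']
  rw [measureReal_solidSimplex]
  simp_rw [h1] at this
  rw [this, h2, h3, Nat.factorial_succ, Nat.factorial_succ]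
  push_cast
  field_simp
  ring

variable {E : Type*} [NormedAddCommGroup E] [InnerProductSpace ℝ E] [FiniteDimensional ℝ E]
  [MeasurableSpace E] [BorelSpace E]

/-- The simplex with vertices `0` and the vectors of the basis `b`. -/
def coneSimplex (b : Module.Basis ι ℝ E) : Set E :=
  {x | (∀ i, 0 ≤ b.repr x i) ∧ ∑ i, b.repr x i ≤ 1}

omit [FiniteDimensional ℝ E] [MeasurableSpace E] [BorelSpace E] in
theorem coneSimplex_eq_preimage (b : Module.Basis ι ℝ E) :
    coneSimplex b = b.equivFunL ⁻¹' solidSimplex ι := rfl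

theorem isCompact_solidSimplex (ι : Type*) [Fintype ι] : IsCompact (solidSimplex ι) := by
  refine Metric.isCompact_of_isClosed_isBounded (isClosed_solidSimplex ι)
    ((isCompact_univ_pi fun _ : ι => isCompact_Icc (a := (0 : ℝ)) (b := 1)).isBounded.subset ?_)
  intro x hx i _
  exact ⟨hx.1 i, (Finset.single_le_sum (fun j _ => hx.1 j) (mem_univ i)).trans hx.2⟩

omit [FiniteDimensional ℝ E] [MeasurableSpace E] [BorelSpace E] in
theorem isCompact_coneSimplex (b : Module.Basis ι ℝ E) : IsCompact (coneSimplex b) := by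
  rw [coneSimplex_eq_preimage]
  exact b.equivFunL.toHomeomorph.isCompact_preimage.2 (isCompact_solidSimplex ι)

theorem exists_integral_coneSimplex (b : Module.Basis ι ℝ E) :
    ∃ c : ℝ, 0 < c ∧ ∀ g : (ι → ℝ) → ℝ,
      ∫ x in coneSimplex b, g (b.equivFunL x) = c * ∫ y in solidSimplex ι, g y := by
  let μ : Measure (ι → ℝ) := (volume : Measure E).map b.equivFunL
  have hμ : μ.IsAddHaarMeasure := b.equivFunL.isAddHaarMeasure_map volume
  have h := Measure.isAddLeftInvariant_eq_smul μ (volume : Measure (ι → ℝ))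
  have hpos : 0 < Measure.addHaarScalarFactor μ volume :=
    Measure.addHaarScalarFactor_pos_of_isAddHaarMeasure μ volume
  generalize Measure.addHaarScalarFactor μ volume = c at h hpos
  refine ⟨c, by exact_mod_cast hpos, fun g => ?_⟩
  have he : MeasurableEmbedding b.equivFunL := b.equivFunL.toHomeomorph.measurableEmbedding
  rw [coneSimplex_eq_preimage, ← he.setIntegral_map]
  change ∫ y in solidSimplex ι, g y ∂μ = _
  rw [h, Measure.restrict_smul, integral_smul_nnreal_measure]
  rfl

theorem measureReal_coneSimplex_pos (b : Module.Basis ι ℝ E) :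
    0 < volume.real (coneSimplex b) := by
  obtain ⟨c, hc, h⟩ := exists_integral_coneSimplex b
  have := h fun _ => 1
  simp only [integral_const, MeasurableSet.univ, measureReal_restrict_apply, Set.univ_inter,
    smul_eq_mul, mul_one] at this
  rw [this, measureReal_solidSimplex]
  positivity

theorem integral_coneSimplex_repr (b : Module.Basis ι ℝ E) (i : ι) :
    ∫ x in coneSimplex b, b.repr x i
      = volume.real (coneSimplex b) / ((Fintype.card ι : ℝ) + 1) := by
  obtain ⟨c, hc, h⟩ := exists_integral_coneSimplex b
  have h0 := h fun _ => 1
  simp only [integral_const, MeasurableSet.univ, measureReal_restrict_apply, Set.univ_inter,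
    smul_eq_mul, mul_one] at h0
  have h1 := h fun y => y i
  rw [integral_solidSimplex_apply, ← mul_div_assoc, ← h0] at h1
  exact h1

theorem integral_coneSimplex_repr_mul [DecidableEq ι] (b : Module.Basis ι ℝ E) (i j : ι) :
    ∫ x in coneSimplex b, b.repr x i * b.repr x j
      = volume.real (coneSimplex b) * (1 + if i = j then 1 else 0)
        / (((Fintype.card ι : ℝ) + 1) * ((Fintype.card ι : ℝ) + 2)) := by
  obtain ⟨c, hc, h⟩ := exists_integral_coneSimplex b
  have h0 := h fun _ => 1
  simp only [integral_const, MeasurableSet.univ, measureReal_restrict_apply, Set.univ_inter,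
    smul_eq_mul, mul_one] at h0
  have h1 := h fun y => y i * y j
  rw [integral_solidSimplex_mul, ← mul_div_assoc, ← mul_assoc, ← h0] at h1
  exact h1

omit [FiniteDimensional ℝ E] [MeasurableSpace E] [BorelSpace E] in
theorem continuous_repr (b : Module.Basis ι ℝ E) (i : ι) : Continuous fun x => b.repr x i :=
  (continuous_apply i).comp b.equivFunL.continuous

theorem integral_coneSimplex_norm_sq (b : Module.Basis ι ℝ E) (q : E) (p : ι → E) :
    ∫ x in coneSimplex b, ‖q + ∑ i, b.repr x i • p i‖ ^ 2
      = volume.real (coneSimplex b) * (‖q‖ ^ 2 + 2 * ⟪q, ∑ i, p i⟫ / ((Fintype.card ι : ℝ) + 1)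
        + (‖∑ i, p i‖ ^ 2 + ∑ i, ‖p i‖ ^ 2)
          / (((Fintype.card ι : ℝ) + 1) * ((Fintype.card ι : ℝ) + 2))) := by
  classical
  have hc := continuous_repr b
  have h_int : ∀ g : E → ℝ, Continuous g → IntegrableOn g (coneSimplex b) := fun g hg =>
    hg.continuousOn.integrableOn_compact (isCompact_coneSimplex b)
  have hexp : ∀ x : E, ‖q + ∑ i, b.repr x i • p i‖ ^ 2
      = ‖q‖ ^ 2 + ∑ i, (2 * ⟪q, p i⟫) * b.repr x i
        + ∑ i, ∑ j, ⟪p i, p j⟫ * (b.repr x i * b.repr x j) := by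
    intro x
    rw [norm_add_sq_real, inner_sum, ← real_inner_self_eq_norm_sq (∑ i, b.repr x i • p i),
      sum_inner, Finset.mul_sum]
    congr 1
    · congr 1
      refine Finset.sum_congr rfl fun i _ => ?_
      rw [real_inner_smul_right]; ring
    · refine Finset.sum_congr rfl fun i _ => ?_
      rw [inner_sum]
      refine Finset.sum_congr rfl fun j _ => ?_
      rw [real_inner_smul_right, real_inner_smul_left]; ring
  simp_rw [hexp]
  rw [integral_add (h_int _ (by fun_prop)) (h_int _ (by fun_prop)),
    integral_add (h_int _ (by fun_prop)) (h_int _ (by fun_prop)),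
    integral_finsetSum _ (fun i _ => h_int _ (by fun_prop)),
    integral_finsetSum _ (fun i _ => h_int _ (by fun_prop))]
  have h2 : ∀ i, ∫ x in coneSimplex b, ∑ j, ⟪p i, p j⟫ * (b.repr x i * b.repr x j)
      = ∑ j, ⟪p i, p j⟫ * (volume.real (coneSimplex b) * (1 + if i = j then 1 else 0)
        / (((Fintype.card ι : ℝ) + 1) * ((Fintype.card ι : ℝ) + 2))) := by
    intro i
    rw [integral_finsetSum _ (fun j _ => h_int _ (by fun_prop))]
    refine Finset.sum_congr rfl fun j _ => ?_
    rw [integral_const_mul, integral_coneSimplex_repr_mul]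
  simp_rw [h2, integral_const_mul, integral_coneSimplex_repr]
  have h3 : ∀ i j, ⟪p i, p j⟫ * (volume.real (coneSimplex b) * (1 + if i = j then 1 else 0)
        / (((Fintype.card ι : ℝ) + 1) * ((Fintype.card ι : ℝ) + 2)))
      = (⟪p i, p j⟫ + if i = j then ⟪p i, p j⟫ else 0) * (volume.real (coneSimplex b)
        / (((Fintype.card ι : ℝ) + 1) * ((Fintype.card ι : ℝ) + 2))) := by
    intro i j; split_ifs <;> ring
  simp_rw [h3, ← Finset.sum_mul, Finset.sum_add_distrib]
  simp only [Finset.sum_ite_eq, mem_univ, if_true]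
  have h4 : ∑ i, ∑ j, ⟪p i, p j⟫ = ‖∑ i, p i‖ ^ 2 := by
    rw [← real_inner_self_eq_norm_sq, sum_inner]; simp_rw [inner_sum]
  rw [h4, integral_const, inner_sum, ← Finset.mul_sum]
  simp_rw [real_inner_self_eq_norm_sq]
  simp only [MeasurableSet.univ, measureReal_restrict_apply, Set.univ_inter, smul_eq_mul]
  ring

end ConeSimplex

section Covariance
variable {d : ℕ}

theorem continuous_euc_apply (i : Fin d) : Continuous fun x : Euc d => x i :=
  (EuclideanSpace.proj (𝕜 := ℝ) i).continuous

theorem IsCompact.integrableOn_continuous {E : Type*} [TopologicalSpace E] [T2Space E]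
    [MeasurableSpace E] [OpensMeasurableSpace E] [SecondCountableTopology E]
    {μ : Measure E} [IsFiniteMeasureOnCompacts μ] {F : Type*} [NormedAddCommGroup F]
    {K : Set E} (hK : IsCompact K) {g : E → F} (hg : Continuous g) : IntegrableOn g K μ :=
  hg.continuousOn.integrableOn_compact hK

theorem integral_euc_apply {K : Set (Euc d)} (hK : IsCompact K) (i : Fin d) :
    (∫ x in K, x) i = ∫ x in K, x i :=
  ((EuclideanSpace.proj (𝕜 := ℝ) i).integral_comp_comm
    (hK.integrableOn_continuous continuous_id)).symm

theorem centroid_apply {K : Set (Euc d)} (hK : IsCompact K) (i : Fin d) :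
    centroid K i = (volume.real K)⁻¹ * ∫ x in K, x i := by
  simp [_root_.centroid, integral_euc_apply hK, Measure.real]

theorem IsConvexBody.measureReal_pos {K : Set (Euc d)} (hK : IsConvexBody K) :
    0 < volume.real K := by
  refine ENNReal.toReal_pos ?_ hK.1.measure_lt_top.ne
  exact (Measure.measure_pos_of_nonempty_interior volume hK.2.2).ne'

theorem covMatrix_apply {K : Set (Euc d)} (hK : IsCompact K) (h0 : 0 < volume.real K)
    (i j : Fin d) :
    covMatrix K i j = (volume.real K)⁻¹ * (∫ x in K, x i * x j)
      - ((volume.real K)⁻¹ * ∫ x in K, x i) * ((volume.real K)⁻¹ * ∫ x in K, x j) := by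
  have hc := fun i => continuous_euc_apply (d := d) i
  have h_int : ∀ g : Euc d → ℝ, Continuous g → IntegrableOn g K := fun g hg =>
    hK.integrableOn_continuous hg
  change (volume.real K)⁻¹ * ∫ x in K, (x i - centroid K i) * (x j - centroid K j) = _
  have hexp : ∀ x : Euc d, (x i - centroid K i) * (x j - centroid K j)
      = x i * x j - centroid K j * x i - centroid K i * x j + centroid K i * centroid K j := by
    intro x; ring
  simp_rw [hexp]
  rw [integral_add (h_int _ (by fun_prop)) (h_int _ (by fun_prop)),
    integral_sub (h_int _ (by fun_prop)) (h_int _ (by fun_prop)),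
    integral_sub (h_int _ (by fun_prop)) (h_int _ (by fun_prop)), integral_const_mul,
    integral_const_mul, integral_const]
  simp only [MeasurableSet.univ, measureReal_restrict_apply, Set.univ_inter, smul_eq_mul,
    centroid_apply hK]
  field_simp
  ring

theorem setIntegral_image_affine {K : Set (Euc d)} (hK : MeasurableSet K)
    (f : Euc d ≃L[ℝ] Euc d) (t : Euc d) (g : Euc d → ℝ) :
    ∫ x in (fun x => f x + t) '' K, g x
      = |(f : Euc d →L[ℝ] Euc d).det| * ∫ x in K, g (f x + t) := by
  rw [integral_image_eq_integral_abs_det_fderiv_smul volume hK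
    (f := fun x => f x + t) (f' := fun _ => (f : Euc d →L[ℝ] Euc d))
    (fun x _ => (((f : Euc d →L[ℝ] Euc d).hasFDerivAt).add_const t).hasFDerivWithinAt)
    (fun x _ y _ h => f.injective (add_right_cancel h))]
  simp_rw [smul_eq_mul]
  rw [integral_const_mul]

theorem measureReal_image_affine {K : Set (Euc d)} (hK : MeasurableSet K)
    (f : Euc d ≃L[ℝ] Euc d) (t : Euc d) :
    volume.real ((fun x => f x + t) '' K)
      = |(f : Euc d →L[ℝ] Euc d).det| * volume.real K := by
  have := setIntegral_image_affine hK f t fun _ => 1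
  simpa using this

/-- The matrix of a linear map in the standard basis. -/
def stdMatrix (f : Euc d ≃L[ℝ] Euc d) : Matrix (Fin d) (Fin d) ℝ :=
  LinearMap.toMatrix (EuclideanSpace.basisFun (Fin d) ℝ).toBasis
    (EuclideanSpace.basisFun (Fin d) ℝ).toBasis (f : Euc d →ₗ[ℝ] Euc d)

theorem det_stdMatrix (f : Euc d ≃L[ℝ] Euc d) :
    (stdMatrix f).det = (f : Euc d →L[ℝ] Euc d).det := by
  rw [stdMatrix, LinearMap.det_toMatrix]; rfl

theorem apply_eq_sum_stdMatrix (f : Euc d ≃L[ℝ] Euc d) (x : Euc d) (i : Fin d) :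
    f x i = ∑ j, stdMatrix f i j * x j := by
  have h := LinearMap.toMatrix_mulVec_repr (EuclideanSpace.basisFun (Fin d) ℝ).toBasis
    (EuclideanSpace.basisFun (Fin d) ℝ).toBasis (f : Euc d →ₗ[ℝ] Euc d) x
  have := congrFun h i
  simpa [Matrix.mulVec, dotProduct, stdMatrix] using this.symm

theorem abs_det_pos (f : Euc d ≃L[ℝ] Euc d) : 0 < |(f : Euc d →L[ℝ] Euc d).det| :=
  abs_pos.2 (LinearEquiv.isUnit_det' f.toLinearEquiv).ne_zero

theorem continuous_affine (f : Euc d ≃L[ℝ] Euc d) (t : Euc d) :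
    Continuous fun x => f x + t := f.continuous.add continuous_const

theorem centroid_image_affine {K : Set (Euc d)} (hK : IsCompact K) (h0 : 0 < volume.real K)
    (f : Euc d ≃L[ℝ] Euc d) (t : Euc d) (i : Fin d) :
    centroid ((fun x => f x + t) '' K) i = (∑ k, stdMatrix f i k * centroid K k) + t i := by
  have hc := fun i => continuous_euc_apply (d := d) i
  have h_int : ∀ g : Euc d → ℝ, Continuous g → IntegrableOn g K := fun g hg =>
    hK.integrableOn_continuous hg
  have hD := abs_det_pos f
  have hK' : IsCompact ((fun x => f x + t) '' K) := hK.image (continuous_affine f t)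
  rw [centroid_apply hK', measureReal_image_affine hK.measurableSet,
    setIntegral_image_affine hK.measurableSet]
  have : ∀ x : Euc d, (f x + t) i = (∑ k, stdMatrix f i k * x k) + t i := by
    intro x; rw [PiLp.add_apply, apply_eq_sum_stdMatrix]
  simp_rw [this]
  rw [integral_add (h_int _ (by fun_prop)) (h_int _ (by fun_prop)),
    integral_finsetSum _ (fun k _ => h_int _ (by fun_prop))]
  simp_rw [integral_const_mul, centroid_apply hK, integral_const]
  simp only [MeasurableSet.univ, measureReal_restrict_apply, Set.univ_inter, smul_eq_mul]
  have e : ∑ k, stdMatrix f i k * ((volume.real K)⁻¹ * ∫ x in K, x k)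
      = (volume.real K)⁻¹ * ∑ k, stdMatrix f i k * ∫ x in K, x k := by
    rw [Finset.mul_sum]; exact Finset.sum_congr rfl fun k _ => by ring
  rw [e]
  field_simp

theorem covMatrix_image_affine {K : Set (Euc d)} (hK : IsCompact K) (h0 : 0 < volume.real K)
    (f : Euc d ≃L[ℝ] Euc d) (t : Euc d) :
    covMatrix ((fun x => f x + t) '' K) = stdMatrix f * covMatrix K * (stdMatrix f).transpose := by
  have hc := fun i => continuous_euc_apply (d := d) i
  have h_int : ∀ g : Euc d → ℝ, Continuous g → IntegrableOn g K := fun g hg =>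
    hK.integrableOn_continuous hg
  have hD := abs_det_pos f
  have hK' : IsCompact ((fun x => f x + t) '' K) := hK.image (continuous_affine f t)
  have hcen := centroid_image_affine hK h0 f t
  ext i j
  change (volume.real ((fun x => f x + t) '' K))⁻¹ * ∫ x in (fun x => f x + t) '' K,
    (x i - centroid ((fun x => f x + t) '' K) i)
      * (x j - centroid ((fun x => f x + t) '' K) j) = _
  rw [measureReal_image_affine hK.measurableSet, setIntegral_image_affine hK.measurableSet]
  have hx : ∀ (x : Euc d) i, (f x + t) i - centroid ((fun x => f x + t) '' K) i
      = ∑ k, stdMatrix f i k * (x k - centroid K k) := by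
    intro x i
    rw [hcen, PiLp.add_apply, apply_eq_sum_stdMatrix]
    simp_rw [mul_sub, Finset.sum_sub_distrib]; ring
  simp_rw [hx, Finset.sum_mul_sum]
  rw [integral_finsetSum _ (fun k _ => h_int _ (by fun_prop))]
  have h2 : ∀ k, ∫ x in K, ∑ l, stdMatrix f i k * (x k - centroid K k)
      * (stdMatrix f j l * (x l - centroid K l))
      = ∑ l, stdMatrix f i k * stdMatrix f j l * (volume.real K * covMatrix K k l) := by
    intro k
    rw [integral_finsetSum _ (fun l _ => h_int _ (by fun_prop))]
    refine Finset.sum_congr rfl fun l _ => ?_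
    have : covMatrix K k l
        = (volume.real K)⁻¹ * ∫ x in K, (x k - centroid K k) * (x l - centroid K l) := rfl
    rw [this, mul_inv_cancel_left₀ h0.ne', ← integral_const_mul]
    congr 1; ext x; ring
  simp_rw [h2, Matrix.mul_apply, Matrix.transpose_apply, Finset.mul_sum, Finset.sum_mul]
  rw [Finset.sum_comm]
  refine Finset.sum_congr rfl fun l _ => Finset.sum_congr rfl fun k _ => ?_
  field_simp

theorem det_covMatrix_div_image_affine {K : Set (Euc d)} (hK : IsCompact K)
    (h0 : 0 < volume.real K) (f : Euc d ≃L[ℝ] Euc d) (t : Euc d) :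
    (covMatrix ((fun x => f x + t) '' K)).det / volume.real ((fun x => f x + t) '' K) ^ 2
      = (covMatrix K).det / volume.real K ^ 2 := by
  have hD := abs_det_pos f
  rw [covMatrix_image_affine hK h0, measureReal_image_affine hK.measurableSet, Matrix.det_mul,
    Matrix.det_mul, Matrix.det_transpose, det_stdMatrix, mul_pow, sq_abs]
  have : (f : Euc d →L[ℝ] Euc d).det ≠ 0 := abs_pos.1 hD
  field_simp

theorem IsConvexBody.image_affine {K : Set (Euc d)} (hK : IsConvexBody K)
    (f : Euc d ≃L[ℝ] Euc d) (t : Euc d) : IsConvexBody ((fun x => f x + t) '' K) := by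
  have e : (fun x => f x + t) '' K = (Homeomorph.addRight t) '' (f.toHomeomorph '' K) := by
    rw [Set.image_image]; rfl
  refine ⟨hK.1.image (continuous_affine f t), ?_, ?_⟩
  · have := (hK.2.1.linear_image (f : Euc d →ₗ[ℝ] Euc d)).translate t
    rw [Set.image_image] at this
    simpa [add_comm] using this
  · rw [e, ← Homeomorph.image_interior, ← Homeomorph.image_interior]
    exact (hK.2.2.image _).image _

theorem dotProduct_covMatrix_mulVec {K : Set (Euc d)} (hK : IsCompact K) (a : Fin d → ℝ) :
    a ⬝ᵥ (covMatrix K).mulVec a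
      = (volume.real K)⁻¹ * ∫ x in K, (∑ i, a i * (x i - centroid K i)) ^ 2 := by
  have hc := fun i => continuous_euc_apply (d := d) i
  have h_int : ∀ g : Euc d → ℝ, Continuous g → IntegrableOn g K := fun g hg =>
    hK.integrableOn_continuous hg
  simp_rw [sq, Finset.sum_mul_sum]
  rw [integral_finsetSum _ (fun k _ => h_int _ (by fun_prop)), Finset.mul_sum]
  refine Finset.sum_congr rfl fun i _ => ?_
  rw [integral_finsetSum _ (fun k _ => h_int _ (by fun_prop)), Matrix.mulVec, dotProduct,
    Finset.mul_sum, Finset.mul_sum]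
  refine Finset.sum_congr rfl fun j _ => ?_
  have e : ∀ x : Euc d, a i * (x i - centroid K i) * (a j * (x j - centroid K j))
      = (a i * a j) * ((x i - centroid K i) * (x j - centroid K j)) := fun x => by ring
  simp_rw [e]
  rw [integral_const_mul]
  simp [covMatrix, Measure.real]
  ring

theorem posDef_covMatrix {K : Set (Euc d)} (hK : IsConvexBody K) : (covMatrix K).PosDef := by
  have hc := fun i => continuous_euc_apply (d := d) i
  refine Matrix.PosDef.of_dotProduct_mulVec_pos ?_ fun a ha => ?_
  · ext i j
    simp [covMatrix, mul_comm]
  · rw [star_trivial, dotProduct_covMatrix_mulVec hK.1]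
    refine mul_pos (inv_pos.2 hK.measureReal_pos) ?_
    have hcont : Continuous fun x : Euc d => (∑ i, a i * (x i - centroid K i)) ^ 2 := by fun_prop
    rw [setIntegral_pos_iff_support_of_nonneg_ae (.of_forall fun x => sq_nonneg _)
      (hK.1.integrableOn_continuous hcont)]
    by_contra hzero
    have hz : volume (Function.support (fun x : Euc d => (∑ i, a i * (x i - centroid K i)) ^ 2)
        ∩ interior K) = 0 :=
      le_antisymm ((measure_mono (Set.inter_subset_inter_right _ interior_subset)).trans
        (not_lt.1 hzero)) bot_le
    have hemp := (hcont.isOpen_support.inter isOpen_interior).measure_eq_zero_iff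
      (μ := volume) |>.1 hz
    have hval : ∀ x ∈ interior K, ∑ i, a i * (x i - centroid K i) = 0 := by
      intro x hx
      by_contra hne
      exact Set.eq_empty_iff_forall_notMem.1 hemp x ⟨pow_ne_zero 2 hne, hx⟩
    obtain ⟨x, hx⟩ := hK.2.2
    have hlim : Filter.Tendsto (fun s : ℝ => x + s • WithLp.toLp 2 a)
        (nhdsWithin 0 (Set.Ioi 0)) (nhds x) := by
      have : Continuous fun s : ℝ => x + s • WithLp.toLp 2 a := by fun_prop
      simpa using (this.tendsto 0).mono_left nhdsWithin_le_nhds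
    obtain ⟨s, hs, hs0⟩ := ((hlim.eventually (isOpen_interior.mem_nhds hx)).and
      self_mem_nhdsWithin).exists
    have h1 := hval x hx
    have h2 := hval _ hs
    have h3 : s * ∑ i, a i * a i = 0 := by
      rw [← sub_eq_zero.2 (h2.trans h1.symm), ← Finset.sum_sub_distrib, Finset.mul_sum]
      refine Finset.sum_congr rfl fun i _ => ?_
      simp only [PiLp.add_apply, PiLp.smul_apply, smul_eq_mul]
      ring
    have hs0' : s ≠ 0 := (show (0 : ℝ) < s from hs0).ne'
    refine ha (funext fun i => ?_)
    have := (Finset.sum_eq_zero_iff_of_nonneg fun i _ => mul_self_nonneg (a i)).1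
      ((mul_eq_zero.1 h3).resolve_left hs0') i (mem_univ i)
    exact mul_self_eq_zero.1 this

theorem exists_stdMatrix_eq {M : Matrix (Fin d) (Fin d) ℝ} (hM : IsUnit M.det) :
    ∃ f : Euc d ≃L[ℝ] Euc d, stdMatrix f = M := by
  refine ⟨(Matrix.toLinearEquiv (EuclideanSpace.basisFun (Fin d) ℝ).toBasis M
    hM).toContinuousLinearEquiv, ?_⟩
  rw [stdMatrix]
  exact LinearMap.toMatrix_toLin _ _ M

open scoped MatrixOrder in
/-- Every convex body has an affine image in isotropic position. -/
theorem exists_isIsotropic_image {K : Set (Euc d)} (hK : IsConvexBody K) :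
    ∃ (f : Euc d ≃L[ℝ] Euc d) (t : Euc d), IsIsotropic ((fun x => f x + t) '' K) := by
  have hA := posDef_covMatrix hK
  obtain ⟨B, hB⟩ := CStarAlgebra.nonneg_iff_eq_star_mul_self.mp hA.posSemidef.nonneg
  have hB' : covMatrix K = B.transpose * B := hB
  have hdet : B.det ≠ 0 := fun h => hA.det_pos.ne' (by rw [hB', Matrix.det_mul, h, mul_zero])
  have hu : IsUnit B.transpose.det := by simpa using hdet
  obtain ⟨f, hf⟩ := exists_stdMatrix_eq
    (M := (B.transpose)⁻¹) (by simpa using hdet)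
  refine ⟨f, -f (centroid K), ?_, ?_⟩
  · ext i
    rw [centroid_image_affine hK.1 hK.measureReal_pos, ← apply_eq_sum_stdMatrix]
    simp
  · rw [covMatrix_image_affine hK.1 hK.measureReal_pos, hf, hB', ← Matrix.mul_assoc,
      Matrix.nonsing_inv_mul _ hu, Matrix.one_mul, Matrix.transpose_nonsing_inv,
      Matrix.transpose_transpose, Matrix.mul_nonsing_inv _ (by simpa using hdet)]

theorem one_add_sum_le_prod_one_add {ι : Type*} (s : Finset ι) (a : ι → ℝ)
    (ha : ∀ i ∈ s, 0 ≤ a i) : 1 + ∑ i ∈ s, a i ≤ ∏ i ∈ s, (1 + a i) := by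
  classical
  induction s using Finset.induction_on with
  | empty => simp
  | insert i s hi ih =>
    rw [Finset.sum_insert hi, Finset.prod_insert hi]
    have h1 := ih fun j hj => ha j (Finset.mem_insert_of_mem hj)
    have h2 := ha i (Finset.mem_insert_self i s)
    have h3 : 0 ≤ ∑ j ∈ s, a j :=
      Finset.sum_nonneg fun j hj => ha j (Finset.mem_insert_of_mem hj)
    nlinarith

theorem Matrix.PosSemidef.one_add_trace_le_det {M : Matrix (Fin d) (Fin d) ℝ}
    (hM : M.PosSemidef) : 1 + M.trace ≤ (1 + M).det := by
  have h := hM.isHermitian.charpoly_eq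
  have h1 := congrArg (Polynomial.eval (-1)) h
  rw [Matrix.eval_charpoly, Polynomial.eval_prod] at h1
  have h2 : (Matrix.scalar (Fin d) (-1 : ℝ) - M) = -(1 + M) := by
    rw [map_neg, map_one]; abel
  have h3 : ∀ i, Polynomial.eval (-1) (Polynomial.X - Polynomial.C (hM.isHermitian.eigenvalues i))
      = -(1 + hM.isHermitian.eigenvalues i) := by intro i; simp; ring
  rw [h2, Matrix.det_neg] at h1
  have h4 : ((-1 : ℝ) ^ Fintype.card (Fin d)) * (1 + M).det
      = (-1) ^ Fintype.card (Fin d) * ∏ i, (1 + hM.isHermitian.eigenvalues i) := by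
    rw [h1, ← Finset.card_univ, ← Finset.prod_const, ← Finset.prod_mul_distrib]
    refine Finset.prod_congr rfl fun i _ => ?_
    rw [neg_one_mul]
    exact h3 i
  have h5 := mul_left_cancel₀ (pow_ne_zero _ (by norm_num)) h4
  rw [h5, hM.isHermitian.trace_eq_sum_eigenvalues]
  exact one_add_sum_le_prod_one_add _ _ fun i _ => hM.eigenvalues_nonneg i

end Covariance

section VectorBasis
variable {E : Type*} [NormedAddCommGroup E] [InnerProductSpace ℝ E] [FiniteDimensional ℝ E]

/-- A finite set of vectors that is a basis of the ambient space. -/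
structure IsVectorBasis (B : Finset E) : Prop where
  indep : LinearIndependent ℝ ((↑) : B → E)
  span_eq : Submodule.span ℝ (B : Set E) = ⊤

/-- The basis attached to a finite set of basis vectors. -/
def IsVectorBasis.basis {B : Finset E} (h : IsVectorBasis B) : Module.Basis B ℝ E :=
  Module.Basis.mk h.indep (by
    rw [Subtype.range_coe_subtype, Finset.setOfPred_mem, h.span_eq])

omit [FiniteDimensional ℝ E] in
theorem IsVectorBasis.basis_apply {B : Finset E} (h : IsVectorBasis B) (v : B) :
    h.basis v = v := by
  simp [IsVectorBasis.basis]

open Classical in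
/-- The coordinate functional of `v` with respect to the basis `B`
(zero if `B` is not a basis or `v ∉ B`). -/
def vcoord (B : Finset E) (v : E) : E →L[ℝ] ℝ :=
  if h : IsVectorBasis B ∧ v ∈ B then
    LinearMap.toContinuousLinearMap (h.1.basis.coord ⟨v, h.2⟩) else 0

namespace IsVectorBasis
variable {B : Finset E} (h : IsVectorBasis B)
include h

theorem vcoord_eq_repr (v : B) (x : E) : vcoord B (v : E) x = h.basis.repr x v := by
  rw [vcoord, dif_pos ⟨h, v.2⟩]; simp

theorem sum_vcoord_smul (x : E) : ∑ v ∈ B, vcoord B v x • v = x := by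
  rw [← Finset.sum_coe_sort B (fun v => vcoord B v x • v)]
  conv_rhs => rw [← h.basis.sum_repr x]
  exact Finset.sum_congr rfl fun v _ => by rw [h.vcoord_eq_repr, h.basis_apply]

theorem vcoord_sum_smul (c : E → ℝ) {v : E} (hv : v ∈ B) :
    vcoord B v (∑ w ∈ B, c w • w) = c v := by
  have e : ∑ w ∈ B, c w • w = ∑ w : B, c w • h.basis w := by
    rw [← Finset.sum_coe_sort B (fun v => c v • v)]
    exact Finset.sum_congr rfl fun w _ => by rw [h.basis_apply]
  rw [e, h.vcoord_eq_repr ⟨v, hv⟩, h.basis.repr_sum_self (fun w : B => c w)]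

theorem vcoord_self {v : E} (hv : v ∈ B) : vcoord B v v = 1 := by
  rw [h.vcoord_eq_repr ⟨v, hv⟩]
  have := h.basis.repr_self ⟨v, hv⟩
  rw [h.basis_apply] at this
  simp only at this
  rw [this]; simp

theorem vcoord_of_ne {v w : E} (hw : w ∈ B) (hvw : v ≠ w) : vcoord B v w = 0 := by
  by_cases hv : v ∈ B
  · rw [h.vcoord_eq_repr ⟨v, hv⟩]
    have := h.basis.repr_self ⟨w, hw⟩
    rw [h.basis_apply] at this
    simp only at this
    rw [this, Finsupp.single_eq_of_ne]
    simpa [Subtype.ext_iff] using hvw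
  · rw [vcoord, dif_neg (fun h => hv h.2)]; simp

theorem ext_vcoord {x y : E} (hxy : ∀ v ∈ B, vcoord B v x = vcoord B v y) : x = y := by
  rw [← h.sum_vcoord_smul x, ← h.sum_vcoord_smul y]
  exact Finset.sum_congr rfl fun v hv => by rw [hxy v hv]

omit [FiniteDimensional ℝ E] in
theorem card_eq : B.card = Module.finrank ℝ E := by
  rw [Module.finrank_eq_card_basis h.basis, Fintype.card_coe]

end IsVectorBasis

/-- The functional equal to `1` on every vector of the basis `B`. -/
def sumCoord (B : Finset E) : E →L[ℝ] ℝ := ∑ v ∈ B, vcoord B v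

theorem sumCoord_apply (B : Finset E) (x : E) : sumCoord B x = ∑ v ∈ B, vcoord B v x := by
  simp [sumCoord]

theorem IsVectorBasis.sumCoord_self {B : Finset E} (h : IsVectorBasis B) {v : E} (hv : v ∈ B) :
    sumCoord B v = 1 := by
  rw [sumCoord_apply, Finset.sum_eq_single v (fun w _ hw => h.vcoord_of_ne hv hw)
    (fun h => absurd hv h), h.vcoord_self hv]

theorem IsVectorBasis.eq_sumCoord {B : Finset E} (h : IsVectorBasis B) {l : E →L[ℝ] ℝ}
    (hl : ∀ v ∈ B, l v = 1) : l = sumCoord B := by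
  ext x
  conv_lhs => rw [← h.sum_vcoord_smul x]
  rw [map_sum, sumCoord_apply]
  exact Finset.sum_congr rfl fun v hv => by simp [hl v hv]

/-- The cone generated by the basis `B`. -/
def vcone (B : Finset E) : Set E := {x | ∀ v ∈ B, 0 ≤ vcoord B v x}

theorem isClosed_vcone (B : Finset E) : IsClosed (vcone B) := by
  simp only [vcone, Set.ofPred_forall]
  exact isClosed_iInter fun v => isClosed_iInter fun _ =>
    isClosed_le continuous_const (vcoord B v).continuous

theorem smul_mem_vcone {B : Finset E} {x : E} (hx : x ∈ vcone B) {c : ℝ} (hc : 0 ≤ c) :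
    c • x ∈ vcone B := fun v hv => by
  rw [map_smul, smul_eq_mul]; exact mul_nonneg hc (hx v hv)

theorem IsVectorBasis.convexHull_subset_vcone {B : Finset E} (h : IsVectorBasis B) :
    convexHull ℝ (B : Set E) ⊆ vcone B := by
  refine convexHull_min (fun w hw v hv => ?_) ?_
  · by_cases hvw : v = w
    · subst hvw; rw [h.vcoord_self hv]; exact zero_le_one
    · rw [h.vcoord_of_ne hw hvw]
  · intro x hx y hy a b ha hb _ v hv
    have h1 := hx v hv
    have h2 := hy v hv
    simp only [map_add, map_smul, smul_eq_mul]
    positivity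

theorem IsVectorBasis.mem_convexHull {B : Finset E} (h : IsVectorBasis B) {x : E}
    (hx : x ∈ vcone B) (h1 : sumCoord B x = 1) : x ∈ convexHull ℝ (B : Set E) := by
  rw [Finset.mem_convexHull']
  refine ⟨fun v => vcoord B v x, hx, ?_, h.sum_vcoord_smul x⟩
  rw [← h1, sumCoord_apply]

/-- `B` is the vertex set of a facet of `P`, where `P` contains the origin in its interior. -/
structure IsFacetBase (P : Set E) (B : Finset E) : Prop where
  isBasis : IsVectorBasis B
  subset : (B : Set E) ⊆ P
  le_one : ∀ x ∈ P, sumCoord B x ≤ 1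
  mem_vcone : ∀ x ∈ P, sumCoord B x = 1 → x ∈ vcone B

/-- A vertex of a facet is an extreme point. -/
theorem IsFacetBase.eq_of_combo {P : Set E} {B : Finset E} (hB : IsFacetBase P B) {v x y : E}
    (hv : v ∈ B) (hx : x ∈ P) (hy : y ∈ P) {a b : ℝ} (ha : 0 < a) (hb : 0 < b) (hab : a + b = 1)
    (h : a • x + b • y = v) : x = v := by
  have h1 := hB.le_one x hx
  have h2 := hB.le_one y hy
  have h3 : a * sumCoord B x + b * sumCoord B y = 1 := by
    rw [← hB.isBasis.sumCoord_self hv, ← h]; simp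
  have h4 : sumCoord B x = 1 := by nlinarith
  have h5 : sumCoord B y = 1 := by nlinarith
  have hxc := hB.mem_vcone x hx h4
  have hyc := hB.mem_vcone y hy h5
  have h0 : ∀ w ∈ B, w ≠ v → vcoord B w x = 0 := by
    intro w hw hwv
    have e : a * vcoord B w x + b * vcoord B w y = 0 := by
      rw [← hB.isBasis.vcoord_of_ne hv hwv, ← h]; simp
    have := hxc w hw
    have := hyc w hw
    nlinarith [mul_nonneg ha.le (hxc w hw), mul_nonneg hb.le (hyc w hw)]
  refine hB.isBasis.ext_vcoord fun w hw => ?_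
  by_cases hwv : w = v
  · subst hwv
    rw [hB.isBasis.vcoord_self hw, ← h4, sumCoord_apply]
    exact (Finset.sum_eq_single w (fun u hu huw => h0 u hu huw) (fun h => absurd hw h)).symm
  · rw [h0 w hw hwv, hB.isBasis.vcoord_of_ne hv hwv]

theorem IsFacetBase.mem_extremePoints {P : Set E} {B : Finset E} (hB : IsFacetBase P B) {v : E}
    (hv : v ∈ B) : v ∈ P.extremePoints ℝ := by
  refine ⟨hB.subset hv, fun x hx y hy hxy => ?_⟩
  obtain ⟨a, b, ha, hb, hab, h⟩ := hxy
  exact hB.eq_of_combo hv hx hy ha hb hab h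

end VectorBasis

section Covering
variable {E : Type*} [NormedAddCommGroup E] [InnerProductSpace ℝ E] [FiniteDimensional ℝ E]

omit [FiniteDimensional ℝ E] in
theorem exists_pos_smul_mem_not_interior {P : Set E} (hc : IsCompact P) (hconv : Convex ℝ P)
    (h0 : 0 ∈ interior P) {x : E} (hx : x ≠ 0) : ∃ r : ℝ, 0 < r ∧ r • x ∈ P ∧ r • x ∉ interior P := by
  have hn : P ∈ nhds (0 : E) := mem_interior_iff_mem_nhds.1 h0
  have hg : 0 < gauge P x := by
    rw [gauge_pos (absorbent_nhds_zero hn) (hc.isVonNBounded ℝ)]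
    exact hx
  have h1 : gauge P ((gauge P x)⁻¹ • x) = 1 := by
    rw [gauge_smul_of_nonneg (by positivity), smul_eq_mul, inv_mul_cancel₀ hg.ne']
  refine ⟨(gauge P x)⁻¹, by positivity, ?_, ?_⟩
  · exact hc.isClosed.closure_subset ((gauge_le_one_iff_mem_closure hconv hn).1 h1.le)
  · rw [← gauge_lt_one_iff_mem_interior hconv hn, h1]; exact lt_irrefl _

omit [FiniteDimensional ℝ E] in
theorem exists_support {P : Set E} (hconv : Convex ℝ P)
    (h0 : 0 ∈ interior P) {y : E} (hy : y ∉ interior P) :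
    ∃ l : E →L[ℝ] ℝ, l y = 1 ∧ ∀ x ∈ P, l x ≤ 1 := by
  obtain ⟨f, hf⟩ := geometric_hahn_banach_open_point hconv.interior isOpen_interior hy
  have hfy : 0 < f y := by simpa using hf 0 h0
  refine ⟨(f y)⁻¹ • f, by simp [hfy.ne'], fun x hx => ?_⟩
  have hcl : x ∈ closure (interior P) := by
    rw [hconv.closure_interior_eq_closure_of_nonempty_interior ⟨0, h0⟩]
    exact subset_closure hx
  have : f x ≤ f y := closure_minimal (fun z hz => (hf z hz).le)
    (isClosed_le f.continuous continuous_const) hcl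
  simp only [smul_apply, smul_eq_mul]
  rw [inv_mul_le_iff₀ hfy]; linarith

omit [FiniteDimensional ℝ E] in
theorem mem_convexHull_filter {S : Finset E} {l : E →L[ℝ] ℝ} (hl : ∀ s ∈ S, l s ≤ 1) {x : E}
    (hx : x ∈ convexHull ℝ (S : Set E)) (h1 : l x = 1) :
    x ∈ convexHull ℝ ({s ∈ S | l s = 1} : Set E) := by
  classical
  rw [Finset.mem_convexHull'] at hx
  obtain ⟨w, hw0, hw1, rfl⟩ := hx
  have hz : ∑ s ∈ S, w s * (1 - l s) = 0 := by
    simp_rw [mul_sub, Finset.sum_sub_distrib, mul_one, hw1]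
    rw [map_sum] at h1
    simp only [map_smul, smul_eq_mul] at h1
    rw [h1, sub_self]
  have hz' := (Finset.sum_eq_zero_iff_of_nonneg fun s hs =>
    mul_nonneg (hw0 s hs) (sub_nonneg.2 (hl s hs))).1 hz
  have hw2 : ∀ s ∈ S, s ∉ S.filter (fun s => l s = 1) → w s = 0 := by
    intro s hs hs'
    have : l s ≠ 1 := fun h => hs' (Finset.mem_filter.2 ⟨hs, h⟩)
    exact (mul_eq_zero.1 (hz' s hs)).resolve_right fun h => this (by linarith)
  have e : ({s ∈ S | l s = 1} : Set E) = ((S.filter fun s => l s = 1 : Finset E) : Set E) := by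
    ext; simp
  rw [e, Finset.mem_convexHull']
  refine ⟨w, fun s hs => hw0 s (Finset.mem_filter.1 hs).1, ?_, ?_⟩
  · exact (Finset.sum_subset (Finset.filter_subset _ _) hw2).trans hw1
  · exact Finset.sum_subset (Finset.filter_subset _ _) fun s hs hs' => by
      rw [hw2 s hs hs', zero_smul]

theorem sdim_eq_of_span_eq_top {F : Set E} {l : E →L[ℝ] ℝ} (hl : ∀ x ∈ F, l x = 1)
    (hspan : Submodule.span ℝ F = ⊤) (hd : 0 < Module.finrank ℝ E) :
    sdim F = Module.finrank ℝ E - 1 := by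
  have hne : F.Nonempty := by
    by_contra h
    rw [Set.not_nonempty_iff_eq_empty] at h
    rw [h, Submodule.span_empty] at hspan
    have := finrank_top ℝ E
    rw [← hspan, finrank_bot] at this
    omega
  obtain ⟨y, hy⟩ := hne
  set D := (affineSpan ℝ F).direction with hD
  have hker : D ≤ LinearMap.ker (l : E →ₗ[ℝ] ℝ) := by
    rw [hD, direction_affineSpan, vectorSpan_def, Submodule.span_le]
    rintro _ ⟨a, ha, b, hb, rfl⟩
    simp [hl a ha, hl b hb]
  have hlt : LinearMap.ker (l : E →ₗ[ℝ] ℝ) ≠ ⊤ := by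
    intro h
    have : y ∈ LinearMap.ker (l : E →ₗ[ℝ] ℝ) := h ▸ Submodule.mem_top
    simp [hl y hy] at this
  have h1 : Module.finrank ℝ D < Module.finrank ℝ E :=
    (Submodule.finrank_mono hker).trans_lt (Submodule.finrank_lt hlt)
  have htop : D ⊔ Submodule.span ℝ {y} = ⊤ := by
    rw [eq_top_iff, ← hspan, Submodule.span_le]
    intro x hx
    rw [show x = (x - y) + y by abel]
    refine Submodule.add_mem_sup ?_ (Submodule.mem_span_singleton_self y)
    exact AffineSubspace.vsub_mem_direction (subset_affineSpan ℝ F hx) (subset_affineSpan ℝ F hy)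
  have h2 := Submodule.finrank_add_le_finrank_add_finrank D (Submodule.span ℝ {y})
  rw [htop, finrank_top] at h2
  have h3 : Module.finrank ℝ (Submodule.span ℝ {y}) ≤ 1 := by
    simpa using finrank_span_le_card (R := ℝ) ({y} : Set E)
  rw [sdim, ← hD]
  omega

theorem exists_isFacetBase_mem_vcone {S : Finset E} {P : Set E}
    (hP : P = convexHull ℝ (S : Set E)) (h0 : 0 ∈ interior P)
    (hd : 0 < Module.finrank ℝ E)
    (hfac : ∀ F : Set E, IsFacetOf (Module.finrank ℝ E) P F →
      IsSimplexWith (Module.finrank ℝ E) F)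
    {x : E} (hx : ∀ T ⊆ S, Submodule.span ℝ (T : Set E) ≠ ⊤ → x ∉ Submodule.span ℝ (T : Set E)) :
    ∃ B, IsFacetBase P B ∧ x ∈ vcone B := by
  classical
  have hc : IsCompact P := hP ▸ S.finite_toSet.isCompact_convexHull ℝ
  have hconv : Convex ℝ P := hP ▸ convex_convexHull ℝ _
  have hx0 : x ≠ 0 := by
    rintro rfl
    refine hx ∅ (Finset.empty_subset _) ?_ (Submodule.zero_mem _)
    intro h
    have := finrank_top ℝ E
    rw [← h, Finset.coe_empty, Submodule.span_empty, finrank_bot] at this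
    omega
  obtain ⟨r, hr, hrP, hri⟩ := exists_pos_smul_mem_not_interior hc hconv h0 hx0
  obtain ⟨l, hl1, hlP⟩ := exists_support hconv h0 hri
  have hSP : (S : Set E) ⊆ P := hP ▸ subset_convexHull ℝ _
  set F : Set E := {z ∈ P | l z = 1} with hF
  set T := S.filter fun s => l s = 1 with hT
  have hTF : (T : Set E) ⊆ F := fun s hs => by
    have := Finset.mem_filter.1 (Finset.mem_coe.1 hs)
    exact ⟨hSP this.1, this.2⟩
  have hyT : r • x ∈ convexHull ℝ (T : Set E) := by
    have := mem_convexHull_filter (S := S) (l := l) (fun s hs => hlP s (hSP hs))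
      (hP ▸ hrP) hl1
    convert this
    ext; simp [hT]
  have hspanT : Submodule.span ℝ (T : Set E) = ⊤ := by
    by_contra hne
    refine hx T (Finset.filter_subset _ _) hne ?_
    have h1 : r • x ∈ Submodule.span ℝ (T : Set E) :=
      convexHull_min Submodule.subset_span (Submodule.convex _) hyT
    exact (Submodule.smul_mem_iff _ hr.ne').1 h1
  have hexp : IsExposed ℝ P F := by
    intro _
    refine ⟨l, ?_⟩
    ext z
    constructor
    · rintro ⟨hz, hz1⟩
      exact ⟨hz, fun y hy => by rw [hz1]; exact hlP y hy⟩
    · rintro ⟨hz, hz1⟩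
      exact ⟨hz, le_antisymm (hlP z hz) (hl1 ▸ hz1 _ hrP)⟩
  have hspanF : Submodule.span ℝ F = ⊤ := by
    rw [eq_top_iff, ← hspanT]; exact Submodule.span_mono hTF
  obtain ⟨w, hw, hFw⟩ := hfac F ⟨hexp, sdim_eq_of_span_eq_top (l := l) (fun x hx => hx.2) hspanF hd⟩
  set B : Finset E := Finset.univ.image w with hB
  have hBr : (B : Set E) = Set.range w := by simp [hB]
  have hcard : B.card = Module.finrank ℝ E := by
    rw [hB, Finset.card_image_of_injective _ hw.injective, Finset.card_univ, Fintype.card_fin]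
  have hBF : (B : Set E) ⊆ F := by rw [hFw, hBr]; exact subset_convexHull ℝ _
  have hspanB : Submodule.span ℝ (B : Set E) = ⊤ := by
    rw [eq_top_iff, ← hspanF, Submodule.span_le, hFw, ← hBr]
    exact convexHull_min Submodule.subset_span (Submodule.convex _)
  have hbas : IsVectorBasis B := by
    refine ⟨linearIndependent_of_top_le_span_of_card_eq_finrank ?_ ?_, hspanB⟩
    · rw [Subtype.range_coe_subtype, Finset.setOfPred_mem, hspanB]
    · rw [Fintype.card_coe, hcard]
  have hlB : l = sumCoord B := hbas.eq_sumCoord fun v hv => (hBF hv).2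
  have hmem : ∀ z ∈ P, sumCoord B z = 1 → z ∈ vcone B := by
    intro z hz h1
    refine hbas.convexHull_subset_vcone ?_
    rw [hBr, ← hFw]
    exact ⟨hz, hlB ▸ h1⟩
  refine ⟨B, ⟨hbas, hBF.trans fun z hz => hz.1, hlB ▸ hlP, hmem⟩, ?_⟩
  have := smul_mem_vcone (hmem _ hrP (hlB ▸ hl1)) (inv_pos.2 hr).le
  rwa [smul_smul, inv_mul_cancel₀ hr.ne', one_smul] at this

theorem dense_compl_biUnion_submodule [MeasurableSpace E] [BorelSpace E]
    (M : Finset (Submodule ℝ E)) (hM : ∀ p ∈ M, p ≠ ⊤) :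
    Dense {x : E | ∀ p ∈ M, x ∉ p} := by
  have : ∀ᵐ x : E, ∀ p ∈ M, x ∉ p := by
    rw [Filter.eventually_all_finset]
    intro p hp
    exact measure_eq_zero_iff_ae_notMem.1 (Measure.addHaar_submodule volume p (hM p hp))
  exact Measure.dense_of_ae this

/-- The facets of a simplicial polytope around the origin: there are finitely many of them,
and their cones cover the space. -/
theorem exists_facets [MeasurableSpace E] [BorelSpace E] {S : Finset E} {P : Set E}
    (hP : P = convexHull ℝ (S : Set E)) (h0 : 0 ∈ interior P)
    (hd : 0 < Module.finrank ℝ E)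
    (hfac : ∀ F : Set E, IsFacetOf (Module.finrank ℝ E) P F →
      IsSimplexWith (Module.finrank ℝ E) F) :
    ∃ 𝓕 : Finset (Finset E), (∀ B, B ∈ 𝓕 ↔ IsFacetBase P B) ∧ ∀ x, ∃ B ∈ 𝓕, x ∈ vcone B := by
  classical
  have hsub : ∀ B, IsFacetBase P B → B ∈ S.powerset := by
    intro B hB
    rw [Finset.mem_powerset]
    intro v hv
    have := hB.mem_extremePoints hv
    rw [hP] at this
    exact extremePoints_convexHull_subset this
  refine ⟨S.powerset.filter (IsFacetBase P), fun B => ?_, ?_⟩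
  · rw [Finset.mem_filter]
    exact ⟨fun h => h.2, fun h => ⟨hsub B h, h⟩⟩
  set 𝓕 := S.powerset.filter (IsFacetBase P) with h𝓕
  have hclosed : IsClosed (⋃ B ∈ 𝓕, vcone B) :=
    𝓕.finite_toSet.isClosed_biUnion fun B _ => isClosed_vcone B
  set M : Finset (Submodule ℝ E) :=
    (S.powerset.image fun T : Finset E => Submodule.span ℝ (T : Set E)).filter (· ≠ ⊤) with hM
  have hdense := dense_compl_biUnion_submodule M fun p hp => (Finset.mem_filter.1 hp).2
  have hss : {x : E | ∀ p ∈ M, x ∉ p} ⊆ ⋃ B ∈ 𝓕, vcone B := by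
    intro x hx
    obtain ⟨B, hB, hxB⟩ := exists_isFacetBase_mem_vcone hP h0 hd hfac (x := x) (by
      intro T hT hne
      exact hx _ (Finset.mem_filter.2 ⟨Finset.mem_image_of_mem _ (Finset.mem_powerset.2 hT), hne⟩))
    exact Set.mem_biUnion (Finset.mem_filter.2 ⟨hsub B hB, hB⟩) hxB
  intro x
  have := hclosed.closure_subset_iff.2 hss (hdense x)
  simpa using this

end Covering

section SimplicialAround
variable {E : Type*} [NormedAddCommGroup E] [InnerProductSpace ℝ E] [FiniteDimensional ℝ E]

/-- `P` is a convex body around the origin whose facets are the simplices spanned by the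
members of `𝓕`. -/
structure IsSimplicialAround (P : Set E) (𝓕 : Finset (Finset E)) : Prop where
  isCompact : IsCompact P
  convex : Convex ℝ P
  zero_mem_interior : 0 ∈ interior P
  mem_iff : ∀ B, B ∈ 𝓕 ↔ IsFacetBase P B
  cover : ∀ x, ∃ B ∈ 𝓕, x ∈ vcone B

/-- The simplex spanned by the origin and the basis `B`. -/
def vsolid (B : Finset E) : Set E := {x | x ∈ vcone B ∧ sumCoord B x ≤ 1}

theorem IsVectorBasis.vsolid_eq_coneSimplex {B : Finset E} (h : IsVectorBasis B) :
    vsolid B = coneSimplex h.basis := by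
  ext x
  have e : sumCoord B x = ∑ v : B, h.basis.repr x v := by
    rw [sumCoord_apply, ← Finset.sum_coe_sort]
    exact Finset.sum_congr rfl fun v _ => h.vcoord_eq_repr v x
  constructor
  · rintro ⟨h1, h2⟩
    exact ⟨fun v => by rw [← h.vcoord_eq_repr]; exact h1 v v.2, e ▸ h2⟩
  · rintro ⟨h1, h2⟩
    exact ⟨fun v hv => by rw [h.vcoord_eq_repr ⟨v, hv⟩]; exact h1 ⟨v, hv⟩, e ▸ h2⟩

namespace IsSimplicialAround
variable {P : Set E} {𝓕 : Finset (Finset E)} (hP : IsSimplicialAround P 𝓕)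
include hP

theorem zero_mem : (0 : E) ∈ P := interior_subset hP.zero_mem_interior

theorem vsolid_subset {B : Finset E} (hB : B ∈ 𝓕) : vsolid B ⊆ P := by
  have hB' := (hP.mem_iff B).1 hB
  rintro x ⟨hx, h1⟩
  have h2 : 0 ≤ sumCoord B x := by rw [sumCoord_apply]; exact Finset.sum_nonneg hx
  rcases h2.eq_or_lt with h2 | h2
  · have : x = 0 := by
      refine hB'.isBasis.ext_vcoord fun v hv => ?_
      rw [sumCoord_apply] at h2
      rw [map_zero]
      exact (Finset.sum_eq_zero_iff_of_nonneg hx).1 h2.symm v hv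
    rw [this]; exact hP.zero_mem
  · have h3 : (sumCoord B x)⁻¹ • x ∈ convexHull ℝ (B : Set E) := by
      refine hB'.isBasis.mem_convexHull (smul_mem_vcone hx (inv_pos.2 h2).le) ?_
      rw [map_smul, smul_eq_mul, inv_mul_cancel₀ h2.ne']
    have h4 := convexHull_min hB'.subset hP.convex h3
    have := hP.convex.smul_mem_of_zero_mem hP.zero_mem h4 ⟨h2.le, h1⟩
    rwa [smul_smul, mul_inv_cancel₀ h2.ne', one_smul] at this

theorem mem_of_forall_sumCoord_le {x : E} (hx : ∀ B ∈ 𝓕, sumCoord B x ≤ 1) : x ∈ P := by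
  obtain ⟨B, hB, hxB⟩ := hP.cover x
  exact hP.vsolid_subset hB ⟨hxB, hx B hB⟩

theorem mem_of_sumCoord_eq_one {B B' : Finset E} (hB : B ∈ 𝓕) (hB' : B' ∈ 𝓕) {v : E}
    (hv : v ∈ B) (h1 : sumCoord B' v = 1) : v ∈ B' := by
  have hB1 := (hP.mem_iff B).1 hB
  have hB2 := (hP.mem_iff B').1 hB'
  have hvc := hB2.isBasis.mem_convexHull (hB2.mem_vcone v (hB1.subset hv) h1) h1
  have hsub := convexHull_min hB2.subset hP.convex
  exact extremePoints_convexHull_subset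
    (inter_extremePoints_subset_extremePoints_of_subset hsub ⟨hvc, hB1.mem_extremePoints hv⟩)

theorem eq_of_subset {B B' : Finset E} (hB : B ∈ 𝓕) (hB' : B' ∈ 𝓕) (h : B ⊆ B') : B = B' :=
  Finset.eq_of_subset_of_card_le h (by
    rw [((hP.mem_iff B).1 hB).isBasis.card_eq, ((hP.mem_iff B').1 hB').isBasis.card_eq])

/-- The barycenter of a facet lies strictly inside every other facet inequality. -/
theorem sumCoord_sum_lt {B B' : Finset E} (hB : B ∈ 𝓕) (hB' : B' ∈ 𝓕) (h : B ≠ B') :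
    sumCoord B' (∑ v ∈ B, v) < B.card := by
  have hB1 := (hP.mem_iff B).1 hB
  have hB2 := (hP.mem_iff B').1 hB'
  rw [map_sum]
  have hcard : (B.card : ℝ) = ∑ v ∈ B, (1 : ℝ) := by simp
  rw [hcard]
  refine Finset.sum_lt_sum (fun v hv => hB2.le_one v (hB1.subset hv)) ?_
  by_contra! hcon
  refine h (hP.eq_of_subset hB hB' fun v hv => ?_)
  exact hP.mem_of_sumCoord_eq_one hB hB' hv
    (le_antisymm (hB2.le_one v (hB1.subset hv)) (hcon v hv))

/-- Adding a point that violates only one facet inequality adds a single simplex. -/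
theorem convexHull_insert_eq {B : Finset E} (hB : B ∈ 𝓕) {q : E} (hq : 1 ≤ sumCoord B q)
    (hq' : ∀ B' ∈ 𝓕, B' ≠ B → sumCoord B' q ≤ 1) :
    convexHull ℝ (insert q P) = P ∪ convexHull ℝ (insert q (B : Set E)) := by
  have hB1 := (hP.mem_iff B).1 hB
  have hcase : ∀ p ∈ P, ∀ a b : ℝ, 0 ≤ a → 0 ≤ b → a + b = 1 →
      sumCoord B (a • q + b • p) ≤ 1 → a • q + b • p ∈ P := by
    intro p hp a b ha hb hab h1
    refine hP.mem_of_forall_sumCoord_le fun B' hB' => ?_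
    by_cases hBB : B' = B
    · rw [hBB]; exact h1
    · have h2 := hq' B' hB' hBB
      have h3 := ((hP.mem_iff B').1 hB').le_one p hp
      simp only [map_add, map_smul, smul_eq_mul]
      nlinarith
  refine subset_antisymm ?_ (Set.union_subset ((Set.subset_insert _ _).trans
    (subset_convexHull ℝ _)) (convexHull_mono (Set.insert_subset_insert hB1.subset)))
  rw [convexHull_insert ⟨0, hP.zero_mem⟩, hP.convex.convexHull_eq]
  intro x hx
  rw [convexJoin_singleton_left] at hx
  simp only [Set.mem_iUnion] at hx
  obtain ⟨p, hp, a, b, ha, hb, hab, rfl⟩ := hx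
  by_cases h1 : sumCoord B (a • q + b • p) ≤ 1
  · exact Or.inl (hcase p hp a b ha hb hab h1)
  right
  push Not at h1
  simp only [map_add, map_smul, smul_eq_mul] at h1
  have hp1 := hB1.le_one p hp
  have hqp : 0 < sumCoord B q - sumCoord B p := by nlinarith
  set s := (1 - sumCoord B p) / (sumCoord B q - sumCoord B p) with hs
  have hs0 : 0 ≤ s := div_nonneg (by linarith) hqp.le
  have hs1 : s ≤ 1 := by rw [hs, div_le_one hqp]; linarith
  have hsa : s < a := by
    rw [hs, div_lt_iff₀ hqp]
    have : b = 1 - a := by linarith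
    subst this; nlinarith
  have hs' : s * (sumCoord B q - sumCoord B p) = 1 - sumCoord B p := div_mul_cancel₀ _ hqp.ne'
  have hp'1 : sumCoord B (s • q + (1 - s) • p) = 1 := by
    simp only [map_add, map_smul, smul_eq_mul]; linarith
  have hp' := hcase p hp s (1 - s) hs0 (by linarith) (by ring) hp'1.le
  have hpB := hB1.isBasis.mem_convexHull (hB1.mem_vcone _ hp' hp'1) hp'1
  have hq1 : q ∈ convexHull ℝ (insert q (B : Set E)) :=
    subset_convexHull ℝ _ (Set.mem_insert _ _)
  have hpB' := convexHull_mono (Set.subset_insert q (B : Set E)) hpB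
  have hb1 : 0 < 1 - s := by linarith
  have := convex_convexHull ℝ (insert q (B : Set E)) hq1 hpB'
    (a := (a - s) / (1 - s)) (b := b / (1 - s)) (div_nonneg (by linarith) hb1.le)
    (div_nonneg hb hb1.le) (by field_simp; linarith)
  convert this using 1
  rw [smul_add, smul_smul, smul_smul, ← add_assoc, ← add_smul, div_mul_cancel₀ _ hb1.ne']
  congr 2
  field_simp
  have : b = 1 - a := by linarith
  rw [this]; ring

end IsSimplicialAround

end SimplicialAround

section SimplexPiece
variable {d : ℕ}

/-- The linear part of the affine map taking the origin to `q` and fixing the basis `B`. -/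
def shearAt (B : Finset (Euc d)) (q : Euc d) : Euc d →L[ℝ] Euc d :=
  ContinuousLinearMap.id ℝ (Euc d) - (sumCoord B).smulRight q

theorem shearAt_apply (B : Finset (Euc d)) (q x : Euc d) :
    shearAt B q x = x - sumCoord B x • q := by simp [shearAt]

theorem shearAt_injective {B : Finset (Euc d)} {q : Euc d} (hq : sumCoord B q ≠ 1) :
    Function.Injective (shearAt B q) := by
  rw [injective_iff_map_eq_zero]
  intro x hx
  rw [shearAt_apply, sub_eq_zero] at hx
  have h1 : sumCoord B x = sumCoord B x * sumCoord B q := by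
    conv_lhs => rw [hx]
    simp
  have h2 : sumCoord B x = 0 := by
    by_contra h
    exact hq (mul_left_cancel₀ h (by rw [← h1, mul_one]))
  rw [hx, h2, zero_smul]

theorem continuous_det_shearAt (B : Finset (Euc d)) : Continuous fun q => (shearAt B q).det := by
  refine ContinuousLinearMap.continuous_det.comp ?_
  exact continuous_const.sub ((ContinuousLinearMap.smulRightL ℝ _ _ (sumCoord B)).continuous)

theorem det_shearAt_self {B : Finset (Euc d)} (hB : IsVectorBasis B) {k : Euc d} (hk : k ∈ B) :
    (shearAt B k).det = 0 := by
  by_contra h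
  have hk0 : k ≠ 0 := by
    rintro rfl
    have := hB.sumCoord_self hk
    simp at this
  have hinj := (LinearMap.equivOfDetNeZero (shearAt B k : Euc d →ₗ[ℝ] Euc d) h).injective
  refine hk0 (hinj ?_)
  change shearAt B k k = shearAt B k 0
  rw [shearAt_apply, hB.sumCoord_self hk]
  simp

theorem image_vsolid_eq {B : Finset (Euc d)} (hB : IsVectorBasis B) (q : Euc d) :
    (fun x => shearAt B q x + q) '' vsolid B = convexHull ℝ (insert q (B : Set (Euc d))) := by
  classical
  apply subset_antisymm
  · rintro _ ⟨x, ⟨hx, h1⟩, rfl⟩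
    have h0 : 0 ≤ sumCoord B x := by rw [sumCoord_apply]; exact Finset.sum_nonneg hx
    have e : shearAt B q x + q = (1 - sumCoord B x) • q + ∑ v ∈ B, vcoord B v x • v := by
      rw [hB.sum_vcoord_smul, shearAt_apply]; module
    simp only [e]
    rcases h0.eq_or_lt with h0 | h0
    · have : ∀ v ∈ B, vcoord B v x = 0 := by
        rw [sumCoord_apply] at h0
        exact (Finset.sum_eq_zero_iff_of_nonneg hx).1 h0.symm
      rw [Finset.sum_eq_zero fun v hv => by rw [this v hv, zero_smul], ← h0, sub_zero, one_smul,
        add_zero]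
      exact subset_convexHull ℝ _ (Set.mem_insert _ _)
    · have hx' : (sumCoord B x)⁻¹ • x ∈ convexHull ℝ (B : Set (Euc d)) := by
        refine hB.mem_convexHull (smul_mem_vcone hx (inv_pos.2 h0).le) ?_
        rw [map_smul, smul_eq_mul, inv_mul_cancel₀ h0.ne']
      have := convex_convexHull ℝ (insert q (B : Set (Euc d)))
        (subset_convexHull ℝ _ (Set.mem_insert _ _))
        (convexHull_mono (Set.subset_insert q (B : Set (Euc d))) hx')
        (sub_nonneg.2 h1) h0.le (by ring)
      rw [hB.sum_vcoord_smul]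
      rwa [smul_smul, mul_inv_cancel₀ h0.ne', one_smul] at this
  · refine convexHull_min ?_ ?_
    · intro x hx
      rcases hx with rfl | hx
      · refine ⟨0, ⟨fun v _ => by simp, by simp⟩, by simp⟩
      · refine ⟨x, ⟨hB.convexHull_subset_vcone (subset_convexHull ℝ _ hx),
          (hB.sumCoord_self hx).le⟩, ?_⟩
        simp [shearAt_apply, hB.sumCoord_self hx]
    · have hc : Convex ℝ (vsolid B) := by
        intro x hx y hy a b ha hb hab
        refine ⟨fun v hv => ?_, ?_⟩
        · have h1 := hx.1 v hv
          have h2 := hy.1 v hv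
          simp only [map_add, map_smul, smul_eq_mul]; positivity
        · have h1 := hx.2
          have h2 := hy.2
          simp only [map_add, map_smul, smul_eq_mul]; nlinarith
      have := (hc.linear_image (shearAt B q : Euc d →ₗ[ℝ] Euc d)).translate q
      rw [Set.image_image] at this
      simpa [add_comm] using this

/-- The mean square norm over the simplex with vertices `q` and the points of `B`. -/
def meanSqNorm (B : Finset (Euc d)) (q : Euc d) : ℝ :=
  ‖q‖ ^ 2 + 2 * ⟪q, ∑ v ∈ B, (v - q)⟫ / ((d : ℝ) + 1)
    + (‖∑ v ∈ B, (v - q)‖ ^ 2 + ∑ v ∈ B, ‖v - q‖ ^ 2) / (((d : ℝ) + 1) * ((d : ℝ) + 2))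

theorem exists_equiv_of_injective {f : Euc d →L[ℝ] Euc d} (hf : Function.Injective f) :
    ∃ g : Euc d ≃L[ℝ] Euc d, (g : Euc d →L[ℝ] Euc d) = f :=
  ⟨(LinearEquiv.ofInjectiveEndo (f : Euc d →ₗ[ℝ] Euc d) hf).toContinuousLinearEquiv, by
    ext x; rfl⟩

theorem measureReal_simplexPiece {B : Finset (Euc d)} (hB : IsVectorBasis B) {q : Euc d}
    (hq : sumCoord B q ≠ 1) :
    volume.real (convexHull ℝ (insert q (B : Set (Euc d))))
      = |(shearAt B q).det| * volume.real (vsolid B) := by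
  obtain ⟨g, hg⟩ := exists_equiv_of_injective (shearAt_injective hq)
  have hc : IsCompact (vsolid B) := hB.vsolid_eq_coneSimplex ▸ isCompact_coneSimplex hB.basis
  rw [← image_vsolid_eq hB, ← hg]
  exact measureReal_image_affine hc.measurableSet g q

theorem integral_simplexPiece_norm_sq {B : Finset (Euc d)} (hB : IsVectorBasis B) {q : Euc d}
    (hq : sumCoord B q ≠ 1) :
    ∫ x in convexHull ℝ (insert q (B : Set (Euc d))), ‖x‖ ^ 2
      = volume.real (convexHull ℝ (insert q (B : Set (Euc d)))) * meanSqNorm B q := by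
  rw [measureReal_simplexPiece hB hq]
  obtain ⟨g, hg⟩ := exists_equiv_of_injective (shearAt_injective hq)
  have hc : IsCompact (vsolid B) := hB.vsolid_eq_coneSimplex ▸ isCompact_coneSimplex hB.basis
  rw [← image_vsolid_eq hB, ← hg]
  refine (setIntegral_image_affine hc.measurableSet g q _).trans ?_
  rw [mul_assoc]
  congr 1
  have hgx : ∀ x, g x + q = q + ∑ v : B, hB.basis.repr x v • ((v : Euc d) - q) := by
    intro x
    have h1 : g x = shearAt B q x := by rw [← hg]; rfl
    have h2 : ∑ v : B, hB.basis.repr x v • ((v : Euc d) - q)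
        = ∑ v ∈ B, vcoord B v x • (v - q) := by
      rw [← Finset.sum_coe_sort B (fun v => vcoord B v x • (v - q))]
      exact Finset.sum_congr rfl fun v _ => by rw [hB.vcoord_eq_repr]
    rw [h1, h2, shearAt_apply]
    simp_rw [smul_sub, Finset.sum_sub_distrib]
    rw [hB.sum_vcoord_smul, ← Finset.sum_smul, ← sumCoord_apply]
    abel
  simp_rw [hgx]
  rw [hB.vsolid_eq_coneSimplex, integral_coneSimplex_norm_sq, Fintype.card_coe, hB.card_eq,
    finrank_euclideanSpace_fin, Finset.sum_coe_sort B (fun v => v - q),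
    Finset.sum_coe_sort B (fun v => ‖v - q‖ ^ 2), meanSqNorm]

theorem continuous_meanSqNorm (B : Finset (Euc d)) : Continuous (meanSqNorm B) := by
  unfold meanSqNorm
  fun_prop

theorem meanSqNorm_eq {B : Finset (Euc d)} (hB : B.card = d) (k : Euc d) :
    meanSqNorm B k = (‖∑ v ∈ B, v‖ ^ 2 + 2 * ⟪k, ∑ v ∈ B, v⟫ + 2 * ‖k‖ ^ 2 + ∑ v ∈ B, ‖v‖ ^ 2)
      / (((d : ℝ) + 1) * ((d : ℝ) + 2)) := by
  have h1 : ∑ v ∈ B, (v - k) = ∑ v ∈ B, v - (d : ℝ) • k := by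
    rw [Finset.sum_sub_distrib, Finset.sum_const, hB, Nat.cast_smul_eq_nsmul]
  have h2 : ∑ v ∈ B, ‖v - k‖ ^ 2 = ∑ v ∈ B, ‖v‖ ^ 2 - 2 * ⟪k, ∑ v ∈ B, v⟫ + d * ‖k‖ ^ 2 := by
    simp_rw [norm_sub_sq_real, Finset.sum_add_distrib, Finset.sum_sub_distrib]
    rw [Finset.sum_const, hB, nsmul_eq_mul, inner_sum, Finset.mul_sum]
    simp_rw [real_inner_comm k]
  rw [meanSqNorm, h1, h2, norm_sub_sq_real, inner_sub_right, norm_smul, inner_smul_right,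
    inner_smul_right, real_inner_self_eq_norm_sq, real_inner_comm k, Real.norm_natCast]
  field_simp
  ring

end SimplexPiece

section Extremal
variable {d : ℕ}

theorem measure_level_eq_zero {E : Type*} [NormedAddCommGroup E] [NormedSpace ℝ E]
    [FiniteDimensional ℝ E] [MeasurableSpace E] [BorelSpace E] (μ : Measure E)
    [μ.IsAddHaarMeasure] {l : E →L[ℝ] ℝ} (hl : l ≠ 0) (c : ℝ) : μ {x | l x = c} = 0 := by
  rcases Set.eq_empty_or_nonempty {x | l x = c} with h | ⟨y, hy⟩
  · rw [h, measure_empty]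
  have hker : LinearMap.ker (l : E →ₗ[ℝ] ℝ) ≠ ⊤ := by
    intro h
    refine hl (ContinuousLinearMap.ext fun x => ?_)
    have : x ∈ LinearMap.ker (l : E →ₗ[ℝ] ℝ) := h ▸ Submodule.mem_top
    simpa using this
  have e : {x | l x = c} = (AffineSubspace.mk' y (LinearMap.ker (l : E →ₗ[ℝ] ℝ)) : Set E) := by
    ext x
    have hy' : l y = c := hy
    simp [AffineSubspace.mem_mk', sub_eq_zero, hy']
  rw [e]
  refine Measure.addHaar_affineSubspace μ _ fun h => hker ?_
  have := congrArg AffineSubspace.direction h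
  rwa [AffineSubspace.direction_mk', AffineSubspace.direction_top] at this

theorem sq_integral_le {D : Set (Euc d)} (hD : IsCompact D) (hv : 0 < volume.real D)
    {g : Euc d → ℝ} (hg : Continuous g) :
    (∫ x in D, g x) ^ 2 ≤ volume.real D * ∫ x in D, g x ^ 2 := by
  have h_int : ∀ g : Euc d → ℝ, Continuous g → IntegrableOn g D := fun g hg =>
    hD.integrableOn_continuous hg
  set I := ∫ x in D, g x with hI
  set v := volume.real D with hvd
  have h0 : 0 ≤ ∫ x in D, (v * g x - I) ^ 2 := integral_nonneg fun x => sq_nonneg _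
  have e : ∀ x, (v * g x - I) ^ 2 = v ^ 2 * g x ^ 2 - (2 * v * I) * g x + I ^ 2 := by
    intro x; ring
  simp_rw [e] at h0
  rw [integral_add (h_int _ (by fun_prop)) (h_int _ (by fun_prop)),
    integral_sub (h_int _ (by fun_prop)) (h_int _ (by fun_prop)), integral_const_mul,
    integral_const_mul, integral_const] at h0
  simp only [MeasurableSet.univ, measureReal_restrict_apply, Set.univ_inter, smul_eq_mul] at h0
  rw [← hvd, ← hI] at h0
  have : 0 ≤ v * (v * (∫ x in D, g x ^ 2) - I ^ 2) := by nlinarith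
  have := nonneg_of_mul_nonneg_right this hv
  linarith

/-- A simplicial polytope in isotropic position that maximizes the isotropic constant. -/
structure IsExtremalPolytope (P : Set (Euc d)) (𝓕 : Finset (Finset (Euc d))) : Prop
    extends IsSimplicialAround P 𝓕 where
  integral_apply : ∀ i, ∫ x in P, x i = 0
  integral_mul : ∀ i j, ∫ x in P, x i * x j = if i = j then volume.real P else 0
  le_of_isConvexBody : ∀ K : Set (Euc d), IsConvexBody K →
    (covMatrix K).det / volume.real K ^ 2 ≤ 1 / volume.real P ^ 2

namespace IsExtremalPolytope
variable {P : Set (Euc d)} {𝓕 : Finset (Finset (Euc d))} (hP : IsExtremalPolytope P 𝓕)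
include hP

theorem isConvexBody : IsConvexBody P := ⟨hP.isCompact, hP.convex, ⟨0, hP.zero_mem_interior⟩⟩

theorem measureReal_pos : 0 < volume.real P := hP.isConvexBody.measureReal_pos

theorem one_add_le_of_add_piece {K D : Set (Euc d)} (hK : IsConvexBody K) (hD : IsCompact D)
    (hv : 0 < volume.real D)
    (hadd : ∀ g : Euc d → ℝ, Continuous g → ∫ x in K, g x = (∫ x in P, g x) + ∫ x in D, g x) :
    1 + (∫ x in D, ‖x‖ ^ 2) / (volume.real P + volume.real D)
      ≤ (1 + volume.real D / volume.real P) ^ (d + 2) := by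
  have hc := fun i => continuous_euc_apply (d := d) i
  have h_int : ∀ g : Euc d → ℝ, Continuous g → IntegrableOn g D := fun g hg =>
    hD.integrableOn_continuous hg
  have hV := hP.measureReal_pos
  set V := volume.real P with hVd
  set v := volume.real D with hvd
  have hKv : volume.real K = V + v := by
    have := hadd (fun _ => 1) continuous_const
    simpa using this
  set m : Fin d → ℝ := fun i => ∫ x in D, x i with hm
  set N : Matrix (Fin d) (Fin d) ℝ := Matrix.of fun i j =>
    V⁻¹ * ((∫ x in D, x i * x j) - (V + v)⁻¹ * (m i * m j)) with hN
  have hcov : 1 + N = (1 + v / V) • covMatrix K := by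
    ext i j
    rw [Matrix.smul_apply, covMatrix_apply hK.1 hK.measureReal_pos, hKv,
      hadd _ (by fun_prop), hadd _ (hc i), hadd _ (hc j), hP.integral_mul, hP.integral_apply,
      hP.integral_apply]
    by_cases hij : i = j
    · subst hij
      simp only [hN, Matrix.add_apply, Matrix.one_apply_eq, Matrix.of_apply, if_true, hm,
        smul_eq_mul]
      field_simp
      ring
    · simp only [hN, Matrix.add_apply, Matrix.one_apply_ne hij, Matrix.of_apply, if_neg hij, hm,
        smul_eq_mul]
      field_simp
      ring
  have hdot : ∀ a : Fin d → ℝ, a ⬝ᵥ N.mulVec a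
      = V⁻¹ * ((∫ x in D, (∑ i, a i * x i) ^ 2) - (V + v)⁻¹ * (∫ x in D, ∑ i, a i * x i) ^ 2) := by
    intro a
    have e1 : ∫ x in D, ∑ i, a i * x i = ∑ i, a i * m i := by
      rw [integral_finsetSum _ (fun k _ => h_int _ (by fun_prop))]
      simp_rw [integral_const_mul, hm]
    have e2 : ∫ x in D, (∑ i, a i * x i) ^ 2 = ∑ i, ∑ j, a i * a j * ∫ x in D, x i * x j := by
      simp_rw [sq, Finset.sum_mul_sum]
      rw [integral_finsetSum _ (fun k _ => h_int _ (by fun_prop))]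
      refine Finset.sum_congr rfl fun i _ => ?_
      rw [integral_finsetSum _ (fun k _ => h_int _ (by fun_prop))]
      refine Finset.sum_congr rfl fun j _ => ?_
      rw [← integral_const_mul]
      congr 1; ext x; ring
    rw [e1, e2, sq, Finset.sum_mul_sum, Finset.mul_sum, ← Finset.sum_sub_distrib, Finset.mul_sum]
    refine Finset.sum_congr rfl fun i _ => ?_
    rw [Matrix.mulVec, dotProduct, Finset.mul_sum, Finset.mul_sum, ← Finset.sum_sub_distrib,
      Finset.mul_sum]
    refine Finset.sum_congr rfl fun j _ => ?_
    simp only [hN, Matrix.of_apply]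
    ring
  have hCS : ∀ g : Euc d → ℝ, Continuous g →
      (V + v)⁻¹ * (∫ x in D, g x) ^ 2 ≤ v / (V + v) * ∫ x in D, g x ^ 2 := by
    intro g hg
    have := sq_integral_le hD hv hg
    rw [div_mul_eq_mul_div, inv_mul_eq_div]
    gcongr
  have hpsd : N.PosSemidef := by
    refine Matrix.PosSemidef.of_dotProduct_mulVec_nonneg ?_ fun a => ?_
    · ext i j
      simp [hN, mul_comm]
    · rw [star_trivial, hdot]
      refine mul_nonneg (inv_nonneg.2 hV.le) (sub_nonneg.2 ((hCS _ (by fun_prop)).trans ?_))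
      have h0 : 0 ≤ ∫ x in D, (∑ i, a i * x i) ^ 2 := integral_nonneg fun x => sq_nonneg _
      refine mul_le_of_le_one_left h0 ?_
      rw [div_le_one (by positivity)]; linarith
  have htr : (∫ x in D, ‖x‖ ^ 2) / (V + v) ≤ N.trace := by
    have e1 : ∫ x in D, ‖x‖ ^ 2 = ∑ i, ∫ x in D, (x i) ^ 2 := by
      rw [← integral_finsetSum _ (fun k _ => h_int _ (by fun_prop))]
      congr 1; ext x
      rw [EuclideanSpace.norm_sq_eq]
      simp
    rw [e1, Matrix.trace, Finset.sum_div]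
    refine Finset.sum_le_sum fun i _ => ?_
    have h1 := hCS _ (hc i)
    simp only [hN, Matrix.diag_apply, Matrix.of_apply, ← sq, hm]
    rw [inv_mul_eq_div, le_div_iff₀ hV]
    refine le_trans (le_of_eq ?_) (sub_le_sub_left h1 _)
    field_simp
    ring
  have h1 := hpsd.one_add_trace_le_det
  rw [hcov, Matrix.det_smul, Fintype.card_fin] at h1
  have h2 := hP.le_of_isConvexBody K hK
  rw [hKv, ← hVd, div_le_iff₀ (by positivity)] at h2
  have h3 : 1 / V ^ 2 * (V + v) ^ 2 = (1 + v / V) ^ 2 := by field_simp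
  rw [h3] at h2
  calc _ ≤ 1 + N.trace := by linarith
    _ ≤ _ := h1
    _ ≤ (1 + v / V) ^ d * (1 + v / V) ^ 2 := by gcongr
    _ = _ := by rw [← pow_add]

theorem meanSqNorm_le_of_insert {B : Finset (Euc d)} (hB : B ∈ 𝓕) {q : Euc d}
    (hq : 1 < sumCoord B q) (hq' : ∀ B' ∈ 𝓕, B' ≠ B → sumCoord B' q ≤ 1) {t : ℝ}
    (ht : t = |(shearAt B q).det| * volume.real (vsolid B) / volume.real P) :
    meanSqNorm B q ≤ (1 + t) * ∑ i ∈ Finset.range (d + 2), (1 + t) ^ i := by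
  have hB1 := (hP.mem_iff B).1 hB
  have hV := hP.measureReal_pos
  set D := convexHull ℝ (insert q (B : Set (Euc d))) with hD
  set K := convexHull ℝ (insert q P) with hK
  have hKD : K = P ∪ D := hP.convexHull_insert_eq hB hq.le hq'
  have hDc : IsCompact D := by
    refine Set.Finite.isCompact_convexHull ℝ ?_
    exact (B.finite_toSet).insert q
  have hKb : IsConvexBody K := by
    refine ⟨hKD ▸ hP.isCompact.union hDc, convex_convexHull ℝ _, ⟨0, ?_⟩⟩
    exact interior_mono (hKD ▸ Set.subset_union_left) hP.zero_mem_interior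
  have hl0 : sumCoord B ≠ 0 := fun h => by rw [h] at hq; simp at hq; linarith
  have hvD := measureReal_simplexPiece hB1.isBasis hq.ne'
  have hvs : 0 < volume.real (vsolid B) := by
    rw [hB1.isBasis.vsolid_eq_coneSimplex]; exact measureReal_coneSimplex_pos _
  obtain ⟨g, hg⟩ := exists_equiv_of_injective (shearAt_injective hq.ne')
  have hv : 0 < volume.real D := by
    rw [hvD]
    refine mul_pos ?_ hvs
    rw [← hg]; exact abs_det_pos g
  have hDge : D ⊆ {x | 1 ≤ sumCoord B x} := by
    refine convexHull_min ?_ (convex_halfSpace_ge (sumCoord B).toLinearMap.isLinear 1)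
    intro x hx
    rcases hx with rfl | hx
    · exact hq.le
    · exact (hB1.isBasis.sumCoord_self hx).ge
  have hnull : volume (P ∩ D) = 0 := by
    refine measure_mono_null ?_ (measure_level_eq_zero volume hl0 1)
    rintro x ⟨hx, hx'⟩
    exact le_antisymm (hB1.le_one x hx) (hDge hx')
  have hadd : ∀ g : Euc d → ℝ, Continuous g →
      ∫ x in K, g x = (∫ x in P, g x) + ∫ x in D, g x := by
    intro g hg
    rw [hKD]
    exact setIntegral_union₀ hnull hDc.measurableSet.nullMeasurableSet
      (hP.isCompact.integrableOn_continuous hg) (hDc.integrableOn_continuous hg)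
  have h1 := hP.one_add_le_of_add_piece hKb hDc hv hadd
  rw [integral_simplexPiece_norm_sq hB1.isBasis hq.ne'] at h1
  have ht' : t = volume.real D / volume.real P := by rw [ht, hvD]
  have htpos : 0 < t := ht' ▸ div_pos hv hV
  have hDv : volume.real D = t * volume.real P := by rw [ht']; field_simp
  rw [← ht', ← hD, hDv] at h1
  have h2 : t * volume.real P * meanSqNorm B q / (volume.real P + t * volume.real P)
      = t * meanSqNorm B q / (1 + t) := by field_simp
  rw [h2] at h1
  have h3 := geom_sum_mul (1 + t) (d + 2)
  have h4 : t * meanSqNorm B q / (1 + t)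
      ≤ (∑ i ∈ Finset.range (d + 2), (1 + t) ^ i) * t := by
    rw [add_sub_cancel_left] at h3
    linarith
  rw [div_le_iff₀ (by positivity)] at h4
  refine le_of_mul_le_mul_left (a := t) ?_ htpos
  linarith

theorem card_eq {B : Finset (Euc d)} (hB : B ∈ 𝓕) : B.card = d := by
  rw [((hP.mem_iff B).1 hB).isBasis.card_eq, finrank_euclideanSpace_fin]

theorem meanSqNorm_vertex_le {B : Finset (Euc d)} (hB : B ∈ 𝓕) {k : Euc d} (hk : k ∈ B) :
    meanSqNorm B k ≤ d + 2 := by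
  have hB1 := (hP.mem_iff B).1 hB
  have hd : 0 < (d : ℝ) := by
    rw [← hP.card_eq hB]; exact_mod_cast Finset.card_pos.2 ⟨k, hk⟩
  -- a point slightly beyond the barycenter of the facet
  set c : Euc d := (d : ℝ)⁻¹ • ∑ v ∈ B, v with hc
  have hc1 : sumCoord B c = 1 := by
    rw [hc, map_smul, map_sum, Finset.sum_congr rfl fun v hv => hB1.isBasis.sumCoord_self hv,
      Finset.sum_const, hP.card_eq hB]
    simp [hd.ne']
  have hc' : ∀ B' ∈ 𝓕, B' ≠ B → sumCoord B' c < 1 := by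
    intro B' hB' hne
    have := hP.sumCoord_sum_lt hB hB' hne.symm
    rw [hc, map_smul, smul_eq_mul, inv_mul_lt_iff₀ hd, mul_one]
    rwa [hP.card_eq hB] at this
  have hev : ∀ᶠ s in nhdsWithin (1 : ℝ) (Set.Ioi 1), ∀ B' ∈ 𝓕, B' ≠ B →
      sumCoord B' (s • c) < 1 := by
    rw [Filter.eventually_all_finset]
    intro B' hB'
    by_cases hne : B' = B
    · exact .of_forall fun _ h => absurd hne h
    have hcont : Continuous fun s : ℝ => sumCoord B' (s • c) := by fun_prop
    have : ∀ᶠ s in nhds (1 : ℝ), sumCoord B' (s • c) < 1 :=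
      hcont.continuousAt.eventually_lt continuousAt_const (by simpa using hc' B' hB' hne)
    filter_upwards [nhdsWithin_le_nhds this] with s hs _ using hs
  obtain ⟨s, hs, hs1⟩ := (hev.and self_mem_nhdsWithin).exists
  have hs1' : 1 < s := hs1
  set q : ℝ → Euc d := fun ε => (1 - ε) • k + ε • (s • c) with hq
  have hqc : Continuous q := by fun_prop
  have hq0 : q 0 = k := by simp [hq]
  set t : ℝ → ℝ := fun ε => |(shearAt B (q ε)).det| * volume.real (vsolid B) / volume.real P
    with ht
  have htc : Continuous t := by
    have := (continuous_det_shearAt B).comp hqc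
    exact ((continuous_abs.comp this).mul continuous_const).div_const _
  have ht0 : t 0 = 0 := by
    rw [ht]; simp only [hq0, det_shearAt_self hB1.isBasis hk]; simp
  have hineq : ∀ᶠ ε in nhdsWithin (0 : ℝ) (Set.Ioi 0), meanSqNorm B (q ε)
      ≤ (1 + t ε) * ∑ i ∈ Finset.range (d + 2), (1 + t ε) ^ i := by
    filter_upwards [Ioo_mem_nhdsGT (zero_lt_one' ℝ)] with ε hε
    refine hP.meanSqNorm_le_of_insert hB ?_ ?_ rfl
    · simp only [hq, map_add, map_smul, smul_eq_mul, hc1, hB1.isBasis.sumCoord_self hk]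
      nlinarith [hε.1, hε.2]
    · intro B' hB' hne
      have h1 := hs B' hB' hne
      have h2 := ((hP.mem_iff B').1 hB').le_one k (hB1.subset hk)
      simp only [hq, map_add, map_smul, smul_eq_mul] at h1 ⊢
      nlinarith [hε.1, hε.2]
  have hl : Filter.Tendsto (fun ε => meanSqNorm B (q ε)) (nhdsWithin 0 (Set.Ioi 0))
      (nhds (meanSqNorm B k)) := by
    have := ((continuous_meanSqNorm B).comp hqc).tendsto 0
    simp only [Function.comp, hq0] at this
    exact this.mono_left nhdsWithin_le_nhds
  have hr : Filter.Tendsto (fun ε => (1 + t ε) * ∑ i ∈ Finset.range (d + 2), (1 + t ε) ^ i)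
      (nhdsWithin 0 (Set.Ioi 0)) (nhds ((d : ℝ) + 2)) := by
    have hcont : Continuous fun ε => (1 + t ε) * ∑ i ∈ Finset.range (d + 2), (1 + t ε) ^ i := by
      fun_prop
    have := hcont.tendsto 0
    simp only [ht0, add_zero, one_pow, Finset.sum_const, Finset.card_range, one_mul,
      nsmul_eq_mul, mul_one] at this
    push_cast at this
    exact this.mono_left nhdsWithin_le_nhds
  exact le_of_tendsto_of_tendsto hl hr hineq

/-- The first-order optimality condition at a vertex of a facet. -/
theorem vertex_inequality {B : Finset (Euc d)} (hB : B ∈ 𝓕) {k : Euc d} (hk : k ∈ B) :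
    ‖∑ v ∈ B, v‖ ^ 2 + 2 * ⟪k, ∑ v ∈ B, v⟫ + 2 * ‖k‖ ^ 2 + ∑ v ∈ B, ‖v‖ ^ 2
      ≤ ((d : ℝ) + 1) * ((d : ℝ) + 2) ^ 2 := by
  have := hP.meanSqNorm_vertex_le hB hk
  rw [meanSqNorm_eq (hP.card_eq hB), div_le_iff₀ (by positivity)] at this
  linarith

end IsExtremalPolytope

end Extremal

section Equality

theorem integral_finset_biUnion_ae {α ι : Type*} [MeasurableSpace α] {μ : Measure α}
    (t : Finset ι) {s : ι → Set α} (hs : ∀ i ∈ t, MeasurableSet (s i))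
    (hd : ∀ i ∈ t, ∀ j ∈ t, i ≠ j → μ (s i ∩ s j) = 0) {g : α → ℝ}
    (hg : ∀ i ∈ t, IntegrableOn g (s i) μ) :
    ∫ x in ⋃ i ∈ t, s i, g x ∂μ = ∑ i ∈ t, ∫ x in s i, g x ∂μ := by
  classical
  induction t using Finset.induction_on with
  | empty => simp
  | insert i t hi ih =>
    rw [Finset.set_biUnion_insert, Finset.sum_insert hi, setIntegral_union₀,
      ih (fun j hj => hs j (Finset.mem_insert_of_mem hj))
        (fun j hj k hk => hd j (Finset.mem_insert_of_mem hj) k (Finset.mem_insert_of_mem hk))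
        (fun j hj => hg j (Finset.mem_insert_of_mem hj))]
    · rw [AEDisjoint, Set.inter_iUnion₂]
      refine (measure_biUnion_null_iff t.countable_toSet).2 fun j hj => ?_
      exact hd i (Finset.mem_insert_self i t) j (Finset.mem_insert_of_mem hj)
        (fun h => hi (h ▸ hj))
    · exact (Finset.measurableSet_biUnion t
        fun j hj => hs j (Finset.mem_insert_of_mem hj)).nullMeasurableSet
    · exact hg i (Finset.mem_insert_self i t)
    · rw [integrableOn_finset_iUnion]
      exact fun j hj => hg j (Finset.mem_insert_of_mem hj)

variable {d : ℕ}

theorem isCompact_vsolid {B : Finset (Euc d)} (hB : IsVectorBasis B) : IsCompact (vsolid B) :=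
  hB.vsolid_eq_coneSimplex ▸ isCompact_coneSimplex hB.basis

theorem measureReal_vsolid_pos {B : Finset (Euc d)} (hB : IsVectorBasis B) :
    0 < volume.real (vsolid B) :=
  hB.vsolid_eq_coneSimplex ▸ measureReal_coneSimplex_pos hB.basis

theorem integral_vsolid_norm_sq {B : Finset (Euc d)} (hB : IsVectorBasis B) :
    ∫ x in vsolid B, ‖x‖ ^ 2 = volume.real (vsolid B) *
      ((‖∑ v ∈ B, v‖ ^ 2 + ∑ v ∈ B, ‖v‖ ^ 2) / (((d : ℝ) + 1) * ((d : ℝ) + 2))) := by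
  rw [hB.vsolid_eq_coneSimplex]
  have h := integral_coneSimplex_norm_sq hB.basis 0 (fun v : B => (v : Euc d))
  have e : ∀ x, (0 : Euc d) + ∑ v : B, hB.basis.repr x v • (v : Euc d) = x := by
    intro x
    rw [zero_add]
    conv_rhs => rw [← hB.basis.sum_repr x]
    exact Finset.sum_congr rfl fun v _ => by rw [hB.basis_apply]
  simp_rw [e] at h
  rw [h, Fintype.card_coe, hB.card_eq, finrank_euclideanSpace_fin,
    Finset.sum_coe_sort B (fun v => v), Finset.sum_coe_sort B (fun v => ‖v‖ ^ 2)]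
  simp

namespace IsSimplicialAround
variable {E : Type*} [NormedAddCommGroup E] [InnerProductSpace ℝ E] [FiniteDimensional ℝ E]
variable {P : Set E} {𝓕 : Finset (Finset E)} (hP : IsSimplicialAround P 𝓕)
include hP

theorem sumCoord_injOn {B B' : Finset E} (hB : B ∈ 𝓕) (hB' : B' ∈ 𝓕)
    (h : sumCoord B = sumCoord B') : B = B' :=
  hP.eq_of_subset hB hB' fun v hv => hP.mem_of_sumCoord_eq_one hB hB' hv (by
    rw [← h]; exact ((hP.mem_iff B).1 hB).isBasis.sumCoord_self hv)

theorem sumCoord_le_of_mem_vcone {B B' : Finset E} (hB : B ∈ 𝓕) (hB' : B' ∈ 𝓕) {x : E}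
    (hx : x ∈ vcone B) : sumCoord B' x ≤ sumCoord B x := by
  have hB1 := (hP.mem_iff B).1 hB
  have hB2 := (hP.mem_iff B').1 hB'
  conv_lhs => rw [← hB1.isBasis.sum_vcoord_smul x]
  rw [map_sum, sumCoord_apply B]
  refine Finset.sum_le_sum fun v hv => ?_
  rw [map_smul, smul_eq_mul]
  exact mul_le_of_le_one_right (hx v hv) (hB2.le_one v (hB1.subset hv))

theorem eq_biUnion_vsolid : P = ⋃ B ∈ 𝓕, vsolid B := by
  refine subset_antisymm (fun x hx => ?_) (Set.iUnion₂_subset fun B hB => hP.vsolid_subset hB)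
  obtain ⟨B, hB, hxB⟩ := hP.cover x
  exact Set.mem_biUnion hB ⟨hxB, ((hP.mem_iff B).1 hB).le_one x hx⟩

theorem measure_vsolid_inter [MeasurableSpace E] [BorelSpace E] {B B' : Finset E} (hB : B ∈ 𝓕)
    (hB' : B' ∈ 𝓕) (h : B ≠ B') : volume (vsolid B ∩ vsolid B') = 0 := by
  have hl : sumCoord B - sumCoord B' ≠ 0 := fun h0 =>
    h (hP.sumCoord_injOn hB hB' (sub_eq_zero.1 h0))
  refine measure_mono_null ?_ (measure_level_eq_zero volume hl 0)
  rintro x ⟨hx, hx'⟩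
  have h1 := hP.sumCoord_le_of_mem_vcone hB hB' hx.1
  have h2 := hP.sumCoord_le_of_mem_vcone hB' hB hx'.1
  change (sumCoord B - sumCoord B') x = 0
  rw [sub_apply]; linarith

end IsSimplicialAround

namespace IsExtremalPolytope
variable {P : Set (Euc d)} {𝓕 : Finset (Finset (Euc d))} (hP : IsExtremalPolytope P 𝓕)
include hP

theorem integral_eq_sum_vsolid {g : Euc d → ℝ} (hg : Continuous g) :
    ∫ x in P, g x = ∑ B ∈ 𝓕, ∫ x in vsolid B, g x := by
  have hc : ∀ B ∈ 𝓕, IsCompact (vsolid B) := fun B hB =>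
    isCompact_vsolid ((hP.mem_iff B).1 hB).isBasis
  conv_lhs => rw [hP.eq_biUnion_vsolid]
  exact integral_finset_biUnion_ae 𝓕 (fun B hB => (hc B hB).measurableSet)
    (fun B hB B' hB' h => hP.measure_vsolid_inter hB hB' h)
    (fun B hB => (hc B hB).integrableOn_continuous hg)

theorem integral_norm_sq : ∫ x in P, ‖x‖ ^ 2 = d * volume.real P := by
  have hc := fun i => continuous_euc_apply (d := d) i
  have e : ∀ x : Euc d, ‖x‖ ^ 2 = ∑ i, x i * x i := by
    intro x; rw [EuclideanSpace.norm_sq_eq]; simp [sq]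
  simp_rw [e]
  rw [integral_finsetSum _ fun i _ => hP.isCompact.integrableOn_continuous (by fun_prop)]
  simp [hP.integral_mul]

theorem sum_vertex_inequality {B : Finset (Euc d)} (hB : B ∈ 𝓕) :
    (d : ℝ) * (‖∑ v ∈ B, v‖ ^ 2 + ∑ v ∈ B, ‖v‖ ^ 2)
      + 2 * (‖∑ v ∈ B, v‖ ^ 2 + ∑ v ∈ B, ‖v‖ ^ 2)
      = ∑ k ∈ B, (‖∑ v ∈ B, v‖ ^ 2 + 2 * ⟪k, ∑ v ∈ B, v⟫ + 2 * ‖k‖ ^ 2 + ∑ v ∈ B, ‖v‖ ^ 2) := by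
  simp_rw [Finset.sum_add_distrib]
  rw [← Finset.mul_sum, ← Finset.mul_sum, ← sum_inner, real_inner_self_eq_norm_sq,
    Finset.sum_const, Finset.sum_const, hP.card_eq hB, nsmul_eq_mul, nsmul_eq_mul]
  ring

theorem norm_sq_sum_add_le {B : Finset (Euc d)} (hB : B ∈ 𝓕) :
    ‖∑ v ∈ B, v‖ ^ 2 + ∑ v ∈ B, ‖v‖ ^ 2 ≤ d * (((d : ℝ) + 1) * ((d : ℝ) + 2)) := by
  have h1 := hP.sum_vertex_inequality hB
  have h2 := Finset.sum_le_sum fun k (hk : k ∈ B) => hP.vertex_inequality hB hk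
  rw [Finset.sum_const, hP.card_eq hB, nsmul_eq_mul, ← h1] at h2
  have h3 : ((d : ℝ) + 2) * (‖∑ v ∈ B, v‖ ^ 2 + ∑ v ∈ B, ‖v‖ ^ 2)
      ≤ ((d : ℝ) + 2) * (d * (((d : ℝ) + 1) * ((d : ℝ) + 2))) := by linarith
  exact le_of_mul_le_mul_left h3 (by positivity)

theorem norm_sq_sum_add_eq {B : Finset (Euc d)} (hB : B ∈ 𝓕) :
    ‖∑ v ∈ B, v‖ ^ 2 + ∑ v ∈ B, ‖v‖ ^ 2 = d * (((d : ℝ) + 1) * ((d : ℝ) + 2)) := by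
  have hb := fun B (hB : B ∈ 𝓕) => ((hP.mem_iff B).1 hB).isBasis
  have h1 := hP.integral_eq_sum_vsolid (g := fun x => ‖x‖ ^ 2) (by fun_prop)
  have h2 := hP.integral_eq_sum_vsolid (g := fun _ => 1) continuous_const
  simp only [integral_const, MeasurableSet.univ, measureReal_restrict_apply, Set.univ_inter,
    smul_eq_mul, mul_one] at h2
  rw [hP.integral_norm_sq, Finset.sum_congr rfl fun B hB => integral_vsolid_norm_sq (hb B hB),
    h2, Finset.mul_sum] at h1
  have hpos : (0 : ℝ) < ((d : ℝ) + 1) * ((d : ℝ) + 2) := by positivity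
  have h3 := (Finset.sum_eq_sum_iff_of_le (fun B hB => by
    rw [mul_comm]
    refine mul_le_mul_of_nonneg_right ?_ (measureReal_vsolid_pos (hb B hB)).le
    rw [div_le_iff₀ hpos]
    exact hP.norm_sq_sum_add_le hB)).1 h1.symm B hB
  rw [mul_comm (d : ℝ)] at h3
  have h4 := mul_left_cancel₀ (measureReal_vsolid_pos (hb B hB)).ne' h3
  rwa [div_eq_iff hpos.ne'] at h4

/-- The first-order optimality conditions hold with equality. -/
theorem vertex_equation {B : Finset (Euc d)} (hB : B ∈ 𝓕) {k : Euc d} (hk : k ∈ B) :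
    ⟪k, ∑ v ∈ B, v⟫ + ‖k‖ ^ 2 = ((d : ℝ) + 1) * ((d : ℝ) + 2) := by
  have h0 := hP.norm_sq_sum_add_eq hB
  have h1 := hP.sum_vertex_inequality hB
  have h2 : ∑ k ∈ B, (‖∑ v ∈ B, v‖ ^ 2 + 2 * ⟪k, ∑ v ∈ B, v⟫ + 2 * ‖k‖ ^ 2 + ∑ v ∈ B, ‖v‖ ^ 2)
      = ∑ k ∈ B, ((d : ℝ) + 1) * ((d : ℝ) + 2) ^ 2 := by
    rw [← h1, h0, Finset.sum_const, hP.card_eq hB, nsmul_eq_mul]; ring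
  have h3 := (Finset.sum_eq_sum_iff_of_le fun k hk => hP.vertex_inequality hB hk).1 h2 k hk
  linarith

end IsExtremalPolytope

end Equality

section Neighbors
variable {E : Type*} [NormedAddCommGroup E] [InnerProductSpace ℝ E] [FiniteDimensional ℝ E]

/-- Across every ridge of a facet there is a neighbouring facet. -/
theorem IsSimplicialAround.exists_neighbor [DecidableEq E] {P : Set E} {𝓕 : Finset (Finset E)}
    (hP : IsSimplicialAround P 𝓕) {G : Finset E} (hG : G ∈ 𝓕) {r : E} (hr : r ∈ G) :
    ∃ r', r' ∉ G.erase r ∧ insert r' (G.erase r) ∈ 𝓕 ∧ vcoord G r r' < 0 := by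
  have hG1 := (hP.mem_iff G).1 hG
  set R := G.erase r with hR
  set w := ∑ v ∈ R, v with hw
  have hRG : ∀ v ∈ R, v ∈ G := fun v hv => Finset.mem_of_mem_erase hv
  have hRr : ∀ v ∈ R, vcoord G r v = 0 := fun v hv =>
    hG1.isBasis.vcoord_of_ne (hRG v hv) (Finset.ne_of_mem_erase hv).symm
  obtain ⟨B, hB, hfreq⟩ : ∃ B ∈ 𝓕, ∃ᶠ s in nhdsWithin (0 : ℝ) (Set.Ioi 0),
      w - s • r ∈ vcone B := by
    by_contra! hcon
    have hcon' : ∀ B ∈ 𝓕, ∀ᶠ s in nhdsWithin (0 : ℝ) (Set.Ioi 0), w - s • r ∉ vcone B :=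
      fun B hB => Filter.not_frequently.1 (by simpa using hcon B hB)
    have := (Filter.eventually_all_finset 𝓕).2 hcon'
    obtain ⟨s, hs⟩ := this.exists
    obtain ⟨B, hB, hsB⟩ := hP.cover (w - s • r)
    exact hs B hB hsB
  have hB1 := (hP.mem_iff B).1 hB
  have hwB : w ∈ vcone B := by
    refine (isClosed_vcone B).mem_of_frequently_of_tendsto hfreq ?_
    have hc : Continuous fun s : ℝ => w - s • r := by fun_prop
    have := hc.tendsto 0
    simp only [zero_smul, sub_zero] at this
    exact this.mono_left nhdsWithin_le_nhds
  have hwG : w ∈ vcone G := by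
    intro v hv
    rw [hw, map_sum]
    refine Finset.sum_nonneg fun u hu => ?_
    by_cases h : v = u
    · subst h; rw [hG1.isBasis.vcoord_self hv]; exact zero_le_one
    · rw [hG1.isBasis.vcoord_of_ne (hRG u hu) h]
  have hsum : ∑ v ∈ R, sumCoord B v = ∑ v ∈ R, (1 : ℝ) := by
    rw [← map_sum, ← hw, le_antisymm (hP.sumCoord_le_of_mem_vcone hG hB hwG)
      (hP.sumCoord_le_of_mem_vcone hB hG hwB), hw, map_sum]
    exact Finset.sum_congr rfl fun v hv => hG1.isBasis.sumCoord_self (hRG v hv)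
  have hone := (Finset.sum_eq_sum_iff_of_le fun v hv =>
    hB1.le_one v (hG1.subset (hRG v hv))).1 hsum
  have hRB : R ⊆ B := fun v hv => hP.mem_of_sumCoord_eq_one hG hB (hRG v hv) (hone v hv)
  have hcard : B.card = R.card + 1 := by
    rw [hB1.isBasis.card_eq, ← hG1.isBasis.card_eq, hR, Finset.card_erase_add_one hr]
  obtain ⟨r', hr', hins⟩ : ∃ r', r' ∉ R ∧ insert r' R = B := by
    obtain ⟨r', h1, h2⟩ := Finset.exists_eq_insert_iff.2 ⟨hRB, hcard.symm⟩
    exact ⟨r', h1, h2⟩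
  refine ⟨r', hr', hins ▸ hB, ?_⟩
  obtain ⟨s, hs, hs0⟩ := (hfreq.and_eventually self_mem_nhdsWithin).exists
  have hs0' : 0 < s := hs0
  have h1 : vcoord G r (w - s • r) = -s := by
    rw [map_sub, map_smul, hG1.isBasis.vcoord_self hr, hw, map_sum, Finset.sum_eq_zero hRr]
    simp
  have h2 : vcoord G r (w - s • r) = vcoord B r' (w - s • r) * vcoord G r r' := by
    conv_lhs => rw [← hB1.isBasis.sum_vcoord_smul (w - s • r)]
    rw [map_sum, ← hins, Finset.sum_insert hr', Finset.sum_eq_zero (s := R), add_zero, map_smul,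
      smul_eq_mul]
    intro v hv
    rw [map_smul, hRr v hv, smul_zero]
  have h3 := hs r' (hins ▸ Finset.mem_insert_self r' R)
  by_contra! h4
  nlinarith [mul_nonneg h3 h4]

theorem IsVectorBasis.eq_zero_of_inner {B : Finset E} (hB : IsVectorBasis B) {z : E}
    (hz : ∀ v ∈ B, ⟪z, v⟫ = 0) : z = 0 := by
  rw [← inner_self_eq_zero (𝕜 := ℝ)]
  conv_lhs => rw [← hB.sum_vcoord_smul z]
  rw [sum_inner]
  refine Finset.sum_eq_zero fun v hv => ?_
  rw [hB.sum_vcoord_smul, inner_smul_left, real_inner_comm, hz v hv, mul_zero]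

/-- The mirror image of a basis vector in the span of the others is determined by its norm and its
inner products with the others. -/
theorem IsVectorBasis.mirror_unique {B : Finset E} (hB : IsVectorBasis B) {r x y : E}
    (hxr : x ≠ r) (hyr : y ≠ r) (hx : ‖x‖ = ‖r‖) (hy : ‖y‖ = ‖r‖)
    (hxi : ∀ u ∈ B, u ≠ r → ⟪u, x⟫ = ⟪u, r⟫) (hyi : ∀ u ∈ B, u ≠ r → ⟪u, y⟫ = ⟪u, r⟫) :
    x = y := by
  set n := x - r with hn
  have hn0 : n ≠ 0 := sub_ne_zero.2 hxr
  have hnu : ∀ u ∈ B, u ≠ r → ⟪n, u⟫ = 0 := fun u hu h => by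
    rw [hn, inner_sub_left, real_inner_comm, hxi u hu h, real_inner_comm, sub_self]
  have hnr : ⟪n, r⟫ ≠ 0 := by
    intro h
    refine hn0 (hB.eq_zero_of_inner fun v hv => ?_)
    by_cases hvr : v = r
    · rw [hvr, h]
    · exact hnu v hv hvr
  set t := ⟪y - r, r⟫ / ⟪n, r⟫ with ht
  have hyn : y - r = t • n := by
    rw [← sub_eq_zero]
    refine hB.eq_zero_of_inner fun v hv => ?_
    by_cases hvr : v = r
    · rw [hvr, inner_sub_left, inner_smul_left, ht]
      simp [div_mul_cancel₀ _ hnr]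
    · rw [inner_sub_left, inner_smul_left, hnu v hv hvr, inner_sub_left, real_inner_comm,
        hyi v hv hvr, real_inner_comm]
      simp
  have e1 : 2 * ⟪r, n⟫ + ‖n‖ ^ 2 = 0 := by
    have h : x = r + n := by rw [hn]; abel
    have := norm_add_sq_real r n
    rw [← h, hx] at this
    linarith
  have e2 : 2 * (t * ⟪r, n⟫) + t ^ 2 * ‖n‖ ^ 2 = 0 := by
    have h : y = r + t • n := by rw [← hyn]; abel
    have := norm_add_sq_real r (t • n)
    rw [← h, hy, inner_smul_right, norm_smul, mul_pow, Real.norm_eq_abs, sq_abs] at this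
    linarith
  have ht0 : t ≠ 0 := by
    intro h
    rw [h, zero_smul, sub_eq_zero] at hyn
    exact hyr hyn
  have hnn : ‖n‖ ^ 2 ≠ 0 := pow_ne_zero 2 (norm_ne_zero_iff.2 hn0)
  have e3 : t * ((t - 1) * ‖n‖ ^ 2) = 0 := by linear_combination e2 - t * e1
  have ht1 : t = 1 := by
    rcases mul_eq_zero.1 ((mul_eq_zero.1 e3).resolve_left ht0) with h | h
    · linarith
    · exact absurd h hnn
  rw [ht1, one_smul, hn] at hyn
  exact (sub_left_injective hyn).symm

end Neighbors

section Connectivity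
variable {E : Type*} [NormedAddCommGroup E] [InnerProductSpace ℝ E] [FiniteDimensional ℝ E]

theorem vcone_mem_nhds {G : Finset E} {a : E} (ha : ∀ v ∈ G, 0 < vcoord G v a) :
    vcone G ∈ nhds a := by
  have : ∀ᶠ z in nhds a, ∀ v ∈ G, 0 < vcoord G v z := by
    rw [Filter.eventually_all_finset]
    exact fun v hv => continuousAt_const.eventually_lt (vcoord G v).continuous.continuousAt (ha v hv)
  filter_upwards [this] with z hz v hv using (hz v hv).le

theorem union_vcone_mem_nhds [DecidableEq E] {G : Finset E} (hG : IsVectorBasis G) {r r' a : E}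
    (hr : r ∈ G)
    (hr' : r' ∉ G.erase r) (hG' : IsVectorBasis (insert r' (G.erase r)))
    (hneg : vcoord G r r' < 0) (ha0 : vcoord G r a = 0) (ha : ∀ v ∈ G, v ≠ r → 0 < vcoord G v a) :
    vcone G ∪ vcone (insert r' (G.erase r)) ∈ nhds a := by
  set R := G.erase r with hR
  set G' := insert r' R with hGd
  have hRG : ∀ v ∈ R, v ∈ G := fun v hv => Finset.mem_of_mem_erase hv
  have hRr : ∀ v ∈ R, vcoord G r v = 0 := fun v hv =>
    hG.vcoord_of_ne (hRG v hv) (Finset.ne_of_mem_erase hv).symm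
  have hfun : ∀ z, vcoord G r z = vcoord G' r' z * vcoord G r r' := by
    intro z
    conv_lhs => rw [← hG'.sum_vcoord_smul z]
    rw [map_sum, hGd, Finset.sum_insert hr', Finset.sum_eq_zero (s := R), add_zero, map_smul,
      smul_eq_mul]
    intro v hv
    rw [map_smul, hRr v hv, smul_zero]
  have ha' : ∀ v ∈ R, vcoord G' v a = vcoord G v a := by
    intro v hv
    have e : a = ∑ w ∈ G', (if w = r' then 0 else vcoord G w a) • w := by
      rw [hGd, Finset.sum_insert hr', if_pos rfl, zero_smul, zero_add]
      conv_lhs => rw [← hG.sum_vcoord_smul a]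
      rw [← Finset.add_sum_erase G _ hr, ha0, zero_smul, zero_add]
      refine Finset.sum_congr rfl fun w hw => ?_
      rw [if_neg]
      rintro rfl
      exact hr' hw
    conv_lhs => rw [e]
    rw [hG'.vcoord_sum_smul (fun w => if w = r' then 0 else vcoord G w a)
      (Finset.mem_insert_of_mem hv), if_neg]
    rintro rfl
    exact hr' hv
  have hRpos : ∀ v ∈ R, 0 < vcoord G v a := fun v hv => ha v (hRG v hv) (Finset.ne_of_mem_erase hv)
  have hev : ∀ᶠ z in nhds a, ∀ v ∈ R, 0 < vcoord G v z ∧ 0 < vcoord G' v z := by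
    rw [Filter.eventually_all_finset]
    intro v hv
    exact (continuousAt_const.eventually_lt (vcoord G v).continuous.continuousAt
      (hRpos v hv)).and (continuousAt_const.eventually_lt (vcoord G' v).continuous.continuousAt
      (by rw [ha' v hv]; exact hRpos v hv))
  filter_upwards [hev] with z hz
  rcases le_total 0 (vcoord G r z) with h | h
  · left
    intro v hv
    by_cases hvr : v = r
    · rwa [hvr]
    · exact (hz v (Finset.mem_erase.2 ⟨hvr, hv⟩)).1.le
  · right
    intro v hv
    rcases Finset.mem_insert.1 hv with rfl | hv
    · have := hfun z
      by_contra! hcon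
      nlinarith [mul_pos_of_neg_of_neg hcon hneg]
    · exact (hz v hv).2.le

/-- A nonempty family of simplicial cones closed under crossing ridges covers the space. -/
theorem cover_of_closed_under_neighbors [DecidableEq E] [MeasurableSpace E] [BorelSpace E]
    {𝓖 : Finset (Finset E)} (hbas : ∀ G ∈ 𝓖, IsVectorBasis G) (hne : 𝓖.Nonempty)
    (hnb : ∀ G ∈ 𝓖, ∀ r ∈ G, ∃ r', r' ∉ G.erase r ∧ insert r' (G.erase r) ∈ 𝓖 ∧
      vcoord G r r' < 0) (x : E) : ∃ G ∈ 𝓖, x ∈ vcone G := by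
  obtain ⟨F, hF⟩ := hne
  set y := ∑ v ∈ F, v with hy
  set U := ⋃ G ∈ 𝓖, vcone G with hU
  have hUc : IsClosed U := 𝓖.finite_toSet.isClosed_biUnion fun B _ => isClosed_vcone B
  set M : Finset (Submodule ℝ E) := 𝓖.biUnion fun G => G.biUnion fun r => (G.erase r).image
    fun r' => Submodule.span ℝ ((insert y ((G.erase r).erase r') : Finset E) : Set E) with hM
  have hMtop : ∀ p ∈ M, p ≠ ⊤ := by
    intro p hp htop
    simp only [hM, Finset.mem_biUnion, Finset.mem_image] at hp
    obtain ⟨G, hG, r, hr, r', hr', rfl⟩ := hp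
    have h1 := finrank_span_finset_le_card (R := ℝ) (insert y ((G.erase r).erase r'))
    rw [Set.finrank, htop, finrank_top, ← (hbas G hG).card_eq] at h1
    have h2 := Finset.card_insert_le y ((G.erase r).erase r')
    have h3 := Finset.card_erase_add_one hr
    have h4 := Finset.card_erase_add_one hr'
    omega
  have hgen : {x : E | ∀ p ∈ M, x ∉ p} ⊆ U := by
    intro x hx
    set γ : ℝ → E := fun s => y + s • (x - y) with hγ
    have hγc : Continuous γ := by fun_prop
    have key : Set.Icc (0 : ℝ) 1 ⊆ γ ⁻¹' U := by
      refine IsClosed.Icc_subset_of_forall_mem_nhdsWithin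
        ((hUc.preimage hγc).inter isClosed_Icc) ?_ ?_
      · refine Set.mem_biUnion hF ?_
        simp only [hγ, zero_smul, add_zero]
        intro v hv
        rw [hy, map_sum]
        refine Finset.sum_nonneg fun u hu => ?_
        by_cases h : v = u
        · subst h; rw [(hbas F hF).vcoord_self hv]; exact zero_le_one
        · rw [(hbas F hF).vcoord_of_ne hu h]
      · rintro s ⟨hsU, hs0, hs1⟩
        refine nhdsWithin_le_nhds (hγc.continuousAt.preimage_mem_nhds ?_)
        rcases hs0.eq_or_lt with rfl | hs0
        · have : γ 0 = y := by simp [hγ]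
          rw [this]
          refine Filter.mem_of_superset (vcone_mem_nhds (G := F) fun v hv => ?_)
            (Set.subset_biUnion_of_mem (u := vcone) hF)
          rw [hy, map_sum, Finset.sum_eq_single v (fun u hu huv =>
            (hbas F hF).vcoord_of_ne hu huv.symm) (fun h => absurd hv h),
            (hbas F hF).vcoord_self hv]
          exact zero_lt_one
        · obtain ⟨G, hG, haG⟩ := Set.mem_iUnion₂.1 hsU
          set a := γ s with ha
          have hzero : ∀ r ∈ G, ∀ r' ∈ G, r' ≠ r → vcoord G r a = 0 → vcoord G r' a ≠ 0 := by
            intro r hr r' hr' hrr h0 h0'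
            have hr'' : r' ∈ G.erase r := Finset.mem_erase.2 ⟨hrr, hr'⟩
            refine hx (Submodule.span ℝ ((insert y ((G.erase r).erase r') : Finset E) : Set E))
              ?_ ?_
            · simp only [hM, Finset.mem_biUnion, Finset.mem_image]
              exact ⟨G, hG, r, hr, r', hr'', rfl⟩
            · have haspan : a ∈ Submodule.span ℝ
                  ((insert y ((G.erase r).erase r') : Finset E) : Set E) := by
                rw [← (hbas G hG).sum_vcoord_smul a]
                refine Submodule.sum_mem _ fun v hv => ?_
                by_cases hvr : v = r
                · rw [hvr, h0, zero_smul]; exact Submodule.zero_mem _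
                by_cases hvr' : v = r'
                · rw [hvr', h0', zero_smul]; exact Submodule.zero_mem _
                refine Submodule.smul_mem _ _ (Submodule.subset_span ?_)
                simp [hvr, hvr', hv]
              have hyspan : y ∈ Submodule.span ℝ
                  ((insert y ((G.erase r).erase r') : Finset E) : Set E) :=
                Submodule.subset_span (by simp)
              have e : x = s⁻¹ • (a - y) + y := by
                rw [ha, hγ]
                simp only [add_sub_cancel_left, smul_smul, inv_mul_cancel₀ hs0.ne', one_smul]
                abel
              rw [e]
              exact Submodule.add_mem _ (Submodule.smul_mem _ _ (Submodule.sub_mem _ haspan hyspan))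
                hyspan
          by_cases hall : ∀ v ∈ G, vcoord G v a ≠ 0
          · exact Filter.mem_of_superset (vcone_mem_nhds fun v hv =>
              (haG v hv).lt_of_ne (hall v hv).symm) (Set.subset_biUnion_of_mem (u := vcone) hG)
          · push Not at hall
            obtain ⟨r, hr, hr0⟩ := hall
            obtain ⟨r', h1, h2, h3⟩ := hnb G hG r hr
            refine Filter.mem_of_superset (union_vcone_mem_nhds (hbas G hG) hr h1 (hbas _ h2) h3
              hr0 fun v hv hvr => (haG v hv).lt_of_ne (hzero r hr v hv hvr hr0).symm) ?_
            exact Set.union_subset (Set.subset_biUnion_of_mem (u := vcone) hG)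
              (Set.subset_biUnion_of_mem (u := vcone) h2)
    have := key (Set.right_mem_Icc.2 zero_le_one)
    simpa [hγ] using this
  have := hUc.closure_subset_iff.2 hgen (dense_compl_biUnion_submodule M hMtop x)
  simpa [hU] using this

end Connectivity

section Symmetry
variable {d : ℕ}

namespace IsExtremalPolytope
variable {P : Set (Euc d)} {𝓕 : Finset (Finset (Euc d))} (hP : IsExtremalPolytope P 𝓕)
include hP

theorem neighbor_inner {G : Finset (Euc d)} (hG : G ∈ 𝓕) {r r' : Euc d} (hr : r ∈ G)
    (hr' : r' ∉ G.erase r) (hG' : insert r' (G.erase r) ∈ 𝓕) {u : Euc d} (hu : u ∈ G.erase r) :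
    ⟪u, r'⟫ = ⟪u, r⟫ := by
  have h1 := hP.vertex_equation hG (Finset.mem_of_mem_erase hu)
  have h2 := hP.vertex_equation hG' (Finset.mem_insert_of_mem hu)
  rw [Finset.sum_insert hr', inner_add_right] at h2
  rw [← Finset.add_sum_erase G _ hr, inner_add_right] at h1
  linarith

theorem neighbor_norm {G : Finset (Euc d)} (hG : G ∈ 𝓕) {r r' : Euc d} (hr : r ∈ G)
    (hr' : r' ∉ G.erase r) (hG' : insert r' (G.erase r) ∈ 𝓕) : ‖r'‖ = ‖r‖ := by
  have h1 := hP.vertex_equation hG hr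
  have h2 := hP.vertex_equation hG' (Finset.mem_insert_self r' _)
  rw [Finset.sum_insert hr', inner_add_right, real_inner_self_eq_norm_sq] at h2
  rw [← Finset.add_sum_erase G _ hr, inner_add_right, real_inner_self_eq_norm_sq] at h1
  have h3 : ⟪r', ∑ v ∈ G.erase r, v⟫ = ⟪r, ∑ v ∈ G.erase r, v⟫ := by
    rw [inner_sum, inner_sum]
    refine Finset.sum_congr rfl fun u hu => ?_
    rw [real_inner_comm, hP.neighbor_inner hG hr hr' hG' hu, real_inner_comm]
  have h4 : ‖r'‖ ^ 2 = ‖r‖ ^ 2 := by linarith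
  exact (sq_eq_sq₀ (norm_nonneg _) (norm_nonneg _)).1 h4

/-- Orthogonal reflections carrying one facet to another facet preserve the polytope. -/
theorem map_mem_of_image_mem (σ : Euc d ≃ₗᵢ[ℝ] Euc d) {F : Finset (Euc d)} (hF : F ∈ 𝓕)
    (hσF : F.map σ.toEquiv.toEmbedding ∈ 𝓕) {x : Euc d} (hx : x ∈ P) : σ x ∈ P := by
  classical
  have hb : ∀ B ∈ 𝓕, IsVectorBasis B := fun B hB => ((hP.mem_iff B).1 hB).isBasis
  have hmap : ∀ G : Finset (Euc d), G.map σ.toEquiv.toEmbedding = G.image σ := fun G => by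
    rw [Finset.map_eq_image]; rfl
  rw [hmap] at hσF
  obtain ⟨G, hG, hxG⟩ := cover_of_closed_under_neighbors
    (𝓖 := 𝓕.filter fun G => G.image σ ∈ 𝓕) (fun G hG => hb G (Finset.mem_filter.1 hG).1)
    ⟨F, Finset.mem_filter.2 ⟨hF, hσF⟩⟩ (by
      intro G hG r hr
      obtain ⟨hG, hσG⟩ := Finset.mem_filter.1 hG
      obtain ⟨r', hr', hG', hneg⟩ := hP.exists_neighbor hG hr
      obtain ⟨q, hq, hq', hqneg⟩ := hP.exists_neighbor hσG (Finset.mem_image_of_mem σ hr)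
      refine ⟨r', hr', Finset.mem_filter.2 ⟨hG', ?_⟩, hneg⟩
      have hqr : q = σ r' := by
        refine (hb _ hσG).mirror_unique ?_ ?_
          (hP.neighbor_norm hσG (Finset.mem_image_of_mem σ hr) hq hq') ?_
          (fun u hu hne => hP.neighbor_inner hσG (Finset.mem_image_of_mem σ hr) hq hq'
            (Finset.mem_erase.2 ⟨hne, hu⟩)) ?_
        · rintro rfl
          rw [(hb _ hσG).vcoord_self (Finset.mem_image_of_mem σ hr)] at hqneg
          linarith
        · intro h
          rw [σ.injective h, (hb _ hG).vcoord_self hr] at hneg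
          linarith
        · rw [σ.norm_map, σ.norm_map, hP.neighbor_norm hG hr hr' hG']
        · intro u hu hne
          obtain ⟨w, hw, rfl⟩ := Finset.mem_image.1 hu
          rw [σ.inner_map_map, σ.inner_map_map]
          exact hP.neighbor_inner hG hr hr' hG'
            (Finset.mem_erase.2 ⟨fun h => hne (by rw [h]), hw⟩)
      rwa [Finset.image_insert, Finset.image_erase σ.injective, ← hqr]) x
  obtain ⟨hG, hσG⟩ := Finset.mem_filter.1 hG
  have h1 : x ∈ convexHull ℝ (insert 0 (G : Set (Euc d))) := by
    rw [← image_vsolid_eq (hb G hG) 0]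
    exact ⟨x, ⟨hxG, ((hP.mem_iff G).1 hG).le_one x hx⟩, by simp [shearAt_apply]⟩
  have h2 : σ x ∈ convexHull ℝ (σ '' insert 0 (G : Set (Euc d))) := by
    have := σ.toLinearEquiv.toLinearMap.image_convexHull (insert 0 (G : Set (Euc d)))
    rw [← show _ = convexHull ℝ (σ '' insert 0 (G : Set (Euc d))) from this]
    exact ⟨x, h1, rfl⟩
  refine convexHull_min ?_ hP.convex h2
  rintro _ ⟨y, rfl | hy, rfl⟩
  · rw [map_zero]; exact hP.zero_mem
  · exact ((hP.mem_iff _).1 hσG).subset (Finset.mem_coe.2 (Finset.mem_image_of_mem σ hy))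

/-- Each facet `F` with a distinguished vertex `v` has a mirror symmetry of the polytope which fixes
the other vertices of `F` and moves `v`. -/
theorem exists_mirror {F : Finset (Euc d)} (hF : F ∈ 𝓕) {v : Euc d} (hv : v ∈ F) :
    ∃ n : Euc d, ‖n‖ = 1 ∧ 0 < ⟪n, v⟫ ∧ (∀ u ∈ F, u ≠ v → ⟪n, u⟫ = 0) ∧
      ∀ x ∈ P, x - (2 * ⟪n, x⟫) • n ∈ P := by
  classical
  obtain ⟨v', hv', hF', hneg⟩ := hP.exists_neighbor hF hv
  have hb := ((hP.mem_iff F).1 hF).isBasis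
  have hvv : v - v' ≠ 0 := by
    intro h
    rw [← sub_eq_zero.1 h, hb.vcoord_self hv] at hneg
    linarith
  have hnorm := hP.neighbor_norm hF hv hv' hF'
  set n := ‖v - v'‖⁻¹ • (v - v') with hn
  have hpos : 0 < ‖v - v'‖ := norm_pos_iff.2 hvv
  have hn1 : ‖n‖ = 1 := by rw [hn, norm_smul, norm_inv, norm_norm, inv_mul_cancel₀ hpos.ne']
  have hnu : ∀ u ∈ F, u ≠ v → ⟪n, u⟫ = 0 := fun u hu hne => by
    rw [hn, inner_smul_left, real_inner_comm, inner_sub_right,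
      hP.neighbor_inner hF hv hv' hF' (Finset.mem_erase.2 ⟨hne, hu⟩), sub_self, mul_zero]
  have hsub : ‖v - v'‖ ^ 2 = 2 * ⟪v - v', v⟫ := by
    have h1 := norm_sub_sq_real v v'
    rw [inner_sub_left, real_inner_self_eq_norm_sq, real_inner_comm]
    rw [hnorm] at h1
    linarith
  have hnv : ⟪n, v⟫ = ‖v - v'‖ / 2 := by
    rw [hn, inner_smul_left]
    have : ⟪v - v', v⟫ = ‖v - v'‖ ^ 2 / 2 := by linarith
    rw [this]; simp; field_simp
  set σ := (ℝ ∙ n)ᗮ.reflection with hσ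
  have hσx : ∀ x, σ x = x - (2 * ⟪n, x⟫) • n := by
    intro x
    rw [hσ, Submodule.reflection_orthogonal_apply, Submodule.reflection_singleton_apply, hn1]
    simp
    module
  refine ⟨n, hn1, by rw [hnv]; positivity, hnu, fun x hx => ?_⟩
  rw [← hσx]
  refine hP.map_mem_of_image_mem σ hF ?_ hx
  convert hF' using 1
  rw [Finset.map_eq_image]
  change F.image σ = _
  conv_lhs => rw [← Finset.insert_erase hv]
  rw [Finset.image_insert]
  congr 1
  · rw [hσx, hnv, hn, smul_smul]
    rw [show 2 * (‖v - v'‖ / 2) * ‖v - v'‖⁻¹ = 1 by field_simp]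
    simp
  · ext w
    have hfix : ∀ u ∈ F.erase v, σ u = u := fun u hu => by
      rw [hσx, hnu u (Finset.mem_of_mem_erase hu) (Finset.ne_of_mem_erase hu)]; simp
    rw [Finset.mem_image]
    constructor
    · rintro ⟨u, hu, rfl⟩; rwa [hfix u hu]
    · exact fun hw => ⟨w, hw, hfix w hw⟩

end IsExtremalPolytope

end Symmetry

section Slicing
variable {E : Type*} [NormedAddCommGroup E] [NormedSpace ℝ E] [FiniteDimensional ℝ E]
  [MeasurableSpace E] [BorelSpace E]

theorem measurePreserving_line_shear (μ : Measure E) [μ.IsAddHaarMeasure] (l : E →L[ℝ] ℝ) (n : E) :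
    MeasurePreserving (fun p : E × ℝ => (p.1 + p.2 • n, l (p.1 + p.2 • n) - p.2))
      (μ.prod volume) (μ.prod volume) := by
  have h1 : MeasurePreserving (fun p : ℝ × E => (p.1, p.2 + p.1 • n))
      ((volume : Measure ℝ).prod μ) (volume.prod μ) :=
    MeasurePreserving.skew_product (f := id) (g := fun t x => x + t • n) (MeasurePreserving.id _)
      (by fun_prop) (Filter.Eventually.of_forall fun t => map_add_right_eq_self μ (t • n))
  have h2 : MeasurePreserving (fun p : E × ℝ => (p.1, l p.1 - p.2))
      (μ.prod volume) (μ.prod volume) :=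
    MeasurePreserving.skew_product (f := id) (g := fun x t => l x - t) (MeasurePreserving.id _)
      (by fun_prop) (Filter.Eventually.of_forall fun x =>
        (Measure.measurePreserving_sub_left volume (l x)).map_eq)
  have h3 : MeasurePreserving Prod.swap (μ.prod (volume : Measure ℝ)) (volume.prod μ) :=
    Measure.measurePreserving_swap
  have h4 : MeasurePreserving Prod.swap ((volume : Measure ℝ).prod μ) (μ.prod volume) :=
    Measure.measurePreserving_swap
  exact ((h2.comp h4).comp h1).comp h3

/-- If all line integrals of `φ` in direction `n` are nonnegative but the total integral is
nonpositive, then almost all of these line integrals vanish. -/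
theorem ae_line_integral_eq_zero (μ : Measure E) [μ.IsAddHaarMeasure] (l : E →L[ℝ] ℝ) {n : E}
    (hl : l n = 1) {φ : E → ℝ} (hφ : Integrable φ μ) (hline : ∀ x, 0 ≤ ∫ t : ℝ, φ (x + t • n))
    (hle : ∫ x, φ x ∂μ ≤ 0) : ∀ᵐ x ∂μ, l x ∈ Set.Icc (0 : ℝ) 1 → ∫ t : ℝ, φ (x + t • n) = 0 := by
  set w : ℝ → ℝ := (Set.Icc (0 : ℝ) 1).indicator fun _ => 1 with hw
  have hwi : Integrable w volume :=
    (integrable_indicator_iff measurableSet_Icc).2 (by simp)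
  have hw1 : ∫ t, w t = 1 := by
    rw [hw, integral_indicator measurableSet_Icc]; simp
  set T := fun p : E × ℝ => (p.1 + p.2 • n, l (p.1 + p.2 • n) - p.2) with hT
  have hTm := measurePreserving_line_shear μ l n
  have hprod : Integrable (fun p : E × ℝ => φ p.1 * w p.2) (μ.prod volume) := hφ.mul_prod hwi
  have hcomp : Integrable (fun p : E × ℝ => φ (p.1 + p.2 • n) * w (l p.1)) (μ.prod volume) := by
    have := hTm.integrable_comp_of_integrable hprod
    refine this.congr (Filter.Eventually.of_forall fun p => ?_)
    simp [Function.comp, hl]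
  have e1 : ∫ p : E × ℝ, φ (p.1 + p.2 • n) * w (l p.1) ∂(μ.prod volume) = ∫ x, φ x ∂μ := by
    have h1 : ∫ p : E × ℝ, φ p.1 * w p.2 ∂(μ.prod volume) = ∫ x, φ x ∂μ := by
      rw [integral_prod_mul, hw1, mul_one]
    rw [← h1]
    conv_rhs => rw [← hTm.map_eq]
    rw [integral_map hTm.measurable.aemeasurable (by rw [hTm.map_eq]; exact hprod.1)]
    simp [hl]
  rw [integral_prod _ hcomp] at e1
  simp_rw [integral_mul_const] at e1
  have hnn : ∀ x, 0 ≤ (∫ t : ℝ, φ (x + t • n)) * w (l x) := fun x =>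
    mul_nonneg (hline x) (Set.indicator_nonneg (fun _ _ => zero_le_one) _)
  have h_int : Integrable (fun x => (∫ t : ℝ, φ (x + t • n)) * w (l x)) μ := by
    have := hcomp.integral_prod_left
    simpa only [integral_mul_const] using this
  have h0 : ∫ x, (∫ t : ℝ, φ (x + t • n)) * w (l x) ∂μ = 0 :=
    le_antisymm (e1.le.trans hle) (integral_nonneg hnn)
  rw [integral_eq_zero_iff_of_nonneg hnn h_int] at h0
  filter_upwards [h0] with x hx hlx
  simpa [hw, hlx] using hx

end Slicing

section HalfBody
variable {d : ℕ}

theorem reflection_orthogonal_unit_apply {n : Euc d} (hn : ‖n‖ = 1) (x : Euc d) :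
    (ℝ ∙ n)ᗮ.reflection x = x - (2 * ⟪n, x⟫) • n := by
  rw [Submodule.reflection_orthogonal_apply, Submodule.reflection_singleton_apply, hn]
  simp
  module

/-- The part of `P` on the positive side of the hyperplane orthogonal to `n`. -/
def halfBody (P : Set (Euc d)) (n : Euc d) : Set (Euc d) := P ∩ {x | 0 ≤ ⟪n, x⟫}

theorem isClosed_halfSpace (n : Euc d) : IsClosed {x : Euc d | 0 ≤ ⟪n, x⟫} :=
  isClosed_le continuous_const (by fun_prop)

/-- A function symmetric under a mirror of `P` has half of its integral on each side. -/
theorem integral_halfBody {P : Set (Euc d)} (hc : IsCompact P) {n : Euc d} (hn : ‖n‖ = 1)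
    (hsym : ∀ x ∈ P, x - (2 * ⟪n, x⟫) • n ∈ P) {g : Euc d → ℝ} (hg : Continuous g)
    (hgs : ∀ x, g (x - (2 * ⟪n, x⟫) • n) = g x) :
    ∫ x in halfBody P n, g x = (∫ x in P, g x) / 2 := by
  set σ := (ℝ ∙ n)ᗮ.reflection with hσ
  have hσx : ∀ x, σ x = x - (2 * ⟪n, x⟫) • n := reflection_orthogonal_unit_apply hn
  have hσP : ∀ x, σ x ∈ P ↔ x ∈ P := fun x => by
    refine ⟨fun h => ?_, fun h => by rw [hσx]; exact hsym x h⟩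
    have h2 := hsym _ h
    rwa [← hσx, hσ, Submodule.reflection_reflection] at h2
  have hσn : ∀ x, ⟪n, σ x⟫ = -⟪n, x⟫ := fun x => by
    rw [hσx, inner_sub_right, inner_smul_right, real_inner_self_eq_norm_sq, hn]; ring
  have hQ : MeasurableSet (halfBody P n) :=
    hc.measurableSet.inter (isClosed_halfSpace n).measurableSet
  set Q' := P ∩ {x | ⟪n, x⟫ ≤ 0} with hQ'
  have hQ'm : MeasurableSet Q' := hc.measurableSet.inter
    (isClosed_le (f := fun x : Euc d => ⟪n, x⟫) (by fun_prop) continuous_const).measurableSet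
  have hpre : σ ⁻¹' Q' = halfBody P n := by
    ext x
    simp only [hQ', halfBody, Set.mem_preimage, Set.mem_inter_iff, Set.mem_ofPred_eq, hσP, hσn,
      neg_nonpos]
  have h1 : ∫ x in halfBody P n, g x = ∫ x in Q', g x := by
    rw [← hpre, ← σ.measurePreserving.setIntegral_preimage_emb
      σ.toHomeomorph.measurableEmbedding g Q']
    refine setIntegral_congr_fun (σ.continuous.measurable hQ'm) fun x _ => ?_
    rw [hσx, hgs]
  have h2 : P = halfBody P n ∪ Q' := by
    rw [halfBody, hQ', ← Set.inter_union_distrib_left]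
    refine (Set.inter_eq_left.2 fun x _ => ?_).symm
    exact le_total 0 ⟪n, x⟫
  have h3 : ∫ x in P, g x = (∫ x in halfBody P n, g x) + ∫ x in Q', g x := by
    conv_lhs => rw [h2]
    have hi := hc.integrableOn_continuous (μ := volume) hg
    refine setIntegral_union₀ ?_ hQ'm.nullMeasurableSet (hi.mono_set Set.inter_subset_left)
      (hi.mono_set Set.inter_subset_left)
    refine measure_mono_null (t := {x : Euc d | innerSL ℝ n x = 0}) ?_
      (measure_level_eq_zero volume (l := innerSL ℝ n) ?_ 0)
    · rintro x ⟨⟨_, h⟩, ⟨_, h'⟩⟩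
      exact le_antisymm h' h
    · intro h
      have : innerSL ℝ n n = 0 := by rw [h]; rfl
      rw [innerSL_apply_apply, real_inner_self_eq_norm_sq, hn] at this
      norm_num at this
  linarith

end HalfBody

section HalfMoments
variable {d : ℕ}

theorem inner_eq_sum_apply (a x : Euc d) : ⟪a, x⟫ = ∑ i, a i * x i := by
  rw [PiLp.inner_apply]
  exact Finset.sum_congr rfl fun i _ => by simp [mul_comm]

theorem inner_single_one (a : Euc d) (i : Fin d) : ⟪EuclideanSpace.single i (1 : ℝ), a⟫ = a i := by
  simp [EuclideanSpace.inner_single_left]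

/-- Determinant of a symmetric rank two update of the identity. -/
theorem det_one_add_update (b n : Euc d) (hn : ‖n‖ = 1) (hbn : ⟪b, n⟫ = 0) (m : ℝ) :
    (Matrix.of fun i j => (if i = j then (1 : ℝ) else 0) + b i * n j + n i * b j
      - m ^ 2 * (n i * n j)).det = 1 - m ^ 2 - ‖b‖ ^ 2 := by
  set U : Matrix (Fin d) (Fin 2) ℝ := Matrix.of fun i k => ![b i, n i] k with hU
  set W : Matrix (Fin 2) (Fin d) ℝ := Matrix.of fun k j => ![n j, b j - m ^ 2 * n j] k with hW
  have h1 : (Matrix.of fun i j => (if i = j then (1 : ℝ) else 0) + b i * n j + n i * b j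
      - m ^ 2 * (n i * n j)) = 1 + U * W := by
    ext i j
    simp only [Matrix.of_apply, Matrix.add_apply, Matrix.one_apply, Matrix.mul_apply,
      Fin.sum_univ_two, hU, hW, Matrix.cons_val_zero, Matrix.cons_val_one]
    ring
  have hnn : ∑ i, n i * n i = 1 := by
    rw [← inner_eq_sum_apply, real_inner_self_eq_norm_sq, hn, one_pow]
  have hbb : ∑ i, b i * b i = ‖b‖ ^ 2 := by
    rw [← inner_eq_sum_apply, real_inner_self_eq_norm_sq]
  have hbn' : ∑ i, b i * n i = 0 := by rw [← inner_eq_sum_apply, hbn]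
  have hnb' : ∑ i, n i * b i = 0 := by rw [← inner_eq_sum_apply, real_inner_comm, hbn]
  rw [h1, Matrix.det_one_add_mul_comm, Matrix.det_fin_two]
  simp only [Matrix.add_apply, Matrix.one_apply, Matrix.mul_apply, hU, hW, Matrix.of_apply,
    Matrix.cons_val_zero, Matrix.cons_val_one, sub_mul, Finset.sum_sub_distrib, mul_assoc,
    ← Finset.mul_sum, hnn, hbb, hbn', hnb']
  simp
  ring

namespace IsExtremalPolytope
variable {P : Set (Euc d)} {𝓕 : Finset (Finset (Euc d))} (hP : IsExtremalPolytope P 𝓕)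
include hP

theorem integral_inner (a : Euc d) : ∫ x in P, ⟪a, x⟫ = 0 := by
  have hc := fun i => continuous_euc_apply (d := d) i
  simp_rw [inner_eq_sum_apply]
  rw [integral_finsetSum _ fun k _ => hP.isCompact.integrableOn_continuous (by fun_prop)]
  simp [integral_const_mul, hP.integral_apply]

theorem integral_inner_mul_inner (a c : Euc d) :
    ∫ x in P, ⟪a, x⟫ * ⟪c, x⟫ = volume.real P * ⟪a, c⟫ := by
  have hc := fun i => continuous_euc_apply (d := d) i
  simp_rw [inner_eq_sum_apply, Finset.sum_mul_sum]
  rw [integral_finsetSum _ fun k _ => hP.isCompact.integrableOn_continuous (by fun_prop)]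
  rw [Finset.mul_sum]
  refine Finset.sum_congr rfl fun i _ => ?_
  rw [integral_finsetSum _ fun k _ => hP.isCompact.integrableOn_continuous (by fun_prop)]
  have : ∀ j, ∫ x in P, a i * x i * (c j * x j) = a i * c j * ∫ x in P, x i * x j := by
    intro j
    rw [← integral_const_mul]
    congr 1; ext x; ring
  simp_rw [this, hP.integral_mul]
  simp
  ring

section Mirror
variable {n : Euc d} (hn : ‖n‖ = 1) (hsym : ∀ x ∈ P, x - (2 * ⟪n, x⟫) • n ∈ P)

omit hP in
theorem _root_.inner_mirror {n : Euc d} (hn : ‖n‖ = 1) (x : Euc d) :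
    ⟪n, x - (2 * ⟪n, x⟫) • n⟫ = -⟪n, x⟫ := by
  rw [inner_sub_right, inner_smul_right, real_inner_self_eq_norm_sq, hn]; ring

theorem isConvexBody_halfBody (hn : ‖n‖ = 1) : IsConvexBody (halfBody P n) := by
  refine ⟨hP.isCompact.inter_right (isClosed_halfSpace n), hP.convex.inter ?_, ?_⟩
  · exact convex_halfSpace_ge (IsLinearMap.mk (fun _ _ => inner_add_right _ _ _)
      (fun _ _ => inner_smul_right _ _ _)) 0
  · have hopen : IsOpen (interior P ∩ {x | 0 < ⟪n, x⟫}) :=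
      isOpen_interior.inter (isOpen_lt continuous_const (by fun_prop))
    have hcont : Continuous fun t : ℝ => t • n := by fun_prop
    have h1 : ∀ᶠ t in nhdsWithin (0 : ℝ) (Set.Ioi 0), t • n ∈ interior P := by
      have := hcont.tendsto 0
      simp only [zero_smul] at this
      exact (this.mono_left nhdsWithin_le_nhds).eventually
        (isOpen_interior.mem_nhds hP.zero_mem_interior)
    obtain ⟨t, ht, ht0⟩ := (h1.and self_mem_nhdsWithin).exists
    refine ⟨t • n, interior_maximal ?_ hopen ⟨ht, ?_⟩⟩
    · exact fun x hx => ⟨interior_subset hx.1, (le_of_lt hx.2 : (0 : ℝ) ≤ _)⟩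
    · rw [Set.mem_ofPred_eq, inner_smul_right, real_inner_self_eq_norm_sq, hn]
      simpa using ht0

include hn hsym

theorem measureReal_halfBody : volume.real (halfBody P n) = volume.real P / 2 := by
  have := integral_halfBody hP.isCompact hn hsym (g := fun _ => 1) continuous_const fun _ => rfl
  simpa using this

/-- The normalized first moment of the height over the mirror. -/
theorem exists_half_moments : ∃ (m : ℝ) (b : Euc d), ⟪b, n⟫ = 0 ∧
    (∀ a, ∫ x in halfBody P n, ⟪a, x⟫ = volume.real P / 2 * (m * ⟪a, n⟫)) ∧
    ∀ a c, ∫ x in halfBody P n, ⟪a, x⟫ * ⟪c, x⟫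
      = volume.real P / 2 * (⟪a, c⟫ + ⟪b, a⟫ * ⟪n, c⟫ + ⟪n, a⟫ * ⟪b, c⟫) := by
  have hV := hP.measureReal_pos
  set V := volume.real P with hVd
  set Q := halfBody P n with hQ
  have hQc : IsCompact Q := (hP.isConvexBody_halfBody hn).1
  have h_int : ∀ g : Euc d → ℝ, Continuous g → IntegrableOn g Q := fun g hg =>
    hQc.integrableOn_continuous hg
  have hintP : ∀ g : Euc d → ℝ, Continuous g → IntegrableOn g P := fun g hg =>
    hP.isCompact.integrableOn_continuous hg
  have hnn : ⟪n, n⟫ = (1 : ℝ) := by rw [real_inner_self_eq_norm_sq, hn, one_pow]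
  set m := (V / 2)⁻¹ * ∫ x in Q, ⟪n, x⟫ with hm
  have hm' : ∫ x in Q, ⟪n, x⟫ = V / 2 * m := by rw [hm]; field_simp
  set b := (V / 2)⁻¹ • (∫ x in Q, ⟪n, x⟫ • x) - n with hb
  have hba : ∀ a, ∫ x in Q, ⟪n, x⟫ * ⟪a, x⟫ = V / 2 * (⟪b, a⟫ + ⟪n, a⟫) := by
    intro a
    have h1 : ∫ x in Q, ⟪a, ⟪n, x⟫ • x⟫ = ⟪a, ∫ x in Q, ⟪n, x⟫ • x⟫ :=
      _root_.integral_inner (hQc.integrableOn_continuous (by fun_prop)) a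
    simp_rw [inner_smul_right] at h1
    rw [h1, hb, inner_sub_left, inner_smul_left, real_inner_comm a]
    simp
    field_simp
  have hyy : ∫ x in Q, ⟪n, x⟫ * ⟪n, x⟫ = V / 2 := by
    rw [hQ, integral_halfBody hP.isCompact hn hsym (by fun_prop) fun x => ?_,
      hP.integral_inner_mul_inner, hnn, mul_one]
    rw [inner_mirror hn]; ring
  have hbn : ⟪b, n⟫ = 0 := by
    have := hba n
    rw [hyy, hnn] at this
    have h2 : V / 2 * ⟪b, n⟫ = 0 := by linarith
    exact (mul_eq_zero.1 h2).resolve_left (by positivity)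
  have hinv : ∀ a x : Euc d, ⟪a, x - (2 * ⟪n, x⟫) • n⟫ - ⟪n, x - (2 * ⟪n, x⟫) • n⟫ * ⟪a, n⟫
      = ⟪a, x⟫ - ⟪n, x⟫ * ⟪a, n⟫ := by
    intro a x
    rw [inner_mirror hn, inner_sub_right, inner_smul_right]; ring
  have hh : ∀ a, ∫ x in Q, (⟪a, x⟫ - ⟪n, x⟫ * ⟪a, n⟫) = 0 := by
    intro a
    rw [hQ, integral_halfBody hP.isCompact hn hsym (by fun_prop) (hinv a),
      integral_sub (hintP _ (by fun_prop)) (hintP _ (by fun_prop)), integral_mul_const,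
      hP.integral_inner, hP.integral_inner]
    simp
  have hhh : ∀ a c, ∫ x in Q, (⟪a, x⟫ - ⟪n, x⟫ * ⟪a, n⟫) * (⟪c, x⟫ - ⟪n, x⟫ * ⟪c, n⟫)
      = V / 2 * (⟪a, c⟫ - ⟪a, n⟫ * ⟪c, n⟫) := by
    intro a c
    rw [hQ, integral_halfBody hP.isCompact hn hsym (by fun_prop) fun x => by rw [hinv, hinv]]
    have e : ∀ x : Euc d, (⟪a, x⟫ - ⟪n, x⟫ * ⟪a, n⟫) * (⟪c, x⟫ - ⟪n, x⟫ * ⟪c, n⟫)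
        = ⟪a - ⟪a, n⟫ • n, x⟫ * ⟪c - ⟪c, n⟫ • n, x⟫ := by
      intro x
      simp only [inner_sub_left, inner_smul_left, RCLike.conj_to_real]; ring
    simp_rw [e]
    rw [hP.integral_inner_mul_inner]
    simp only [inner_sub_left, inner_sub_right, inner_smul_left, inner_smul_right,
      RCLike.conj_to_real, hnn]
    rw [real_inner_comm c n]
    ring
  refine ⟨m, b, hbn, fun a => ?_, fun a c => ?_⟩
  · have := hh a
    rw [integral_sub (h_int _ (by fun_prop)) (h_int _ (by fun_prop)), integral_mul_const, hm'] at this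
    linarith
  · have e : ∀ x : Euc d, ⟪a, x⟫ * ⟪c, x⟫ = (⟪a, x⟫ - ⟪n, x⟫ * ⟪a, n⟫) * (⟪c, x⟫ - ⟪n, x⟫ * ⟪c, n⟫)
        + ⟪a, n⟫ * (⟪n, x⟫ * ⟪c, x⟫) + ⟪c, n⟫ * (⟪n, x⟫ * ⟪a, x⟫)
        - ⟪a, n⟫ * ⟪c, n⟫ * (⟪n, x⟫ * ⟪n, x⟫) := by intro x; ring
    rw [integral_congr_ae (Filter.Eventually.of_forall e),
      integral_sub (h_int _ (by fun_prop)) (h_int _ (by fun_prop)),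
      integral_add (h_int _ (by fun_prop)) (h_int _ (by fun_prop)),
      integral_add (h_int _ (by fun_prop)) (h_int _ (by fun_prop)), integral_const_mul,
      integral_const_mul, integral_const_mul, hhh, hba, hba, hyy,
      real_inner_comm n a, real_inner_comm n c]
    ring

theorem exists_half_profile : ∃ (m : ℝ) (b : Euc d), ⟪b, n⟫ = 0 ∧
    ∫ x in halfBody P n, (3 * ⟪n, x⟫ - (2 * m + 2 * ⟪b, x⟫)) * (⟪n, x⟫ - (2 * m + 2 * ⟪b, x⟫))
      ≤ 0 := by
  obtain ⟨m, b, hbn, h1, h2⟩ := hP.exists_half_moments hn hsym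
  refine ⟨m, b, hbn, ?_⟩
  have hV := hP.measureReal_pos
  have hvol := hP.measureReal_halfBody hn hsym
  have hQb := hP.isConvexBody_halfBody hn
  have hnn : ⟪n, n⟫ = (1 : ℝ) := by rw [real_inner_self_eq_norm_sq, hn, one_pow]
  have hnb : ⟪n, b⟫ = (0 : ℝ) := by rw [real_inner_comm, hbn]
  set V := volume.real P with hVd
  have hcov : covMatrix (halfBody P n) = Matrix.of fun i j => (if i = j then (1 : ℝ) else 0)
      + b i * n j + n i * b j - m ^ 2 * (n i * n j) := by
    ext i j
    rw [covMatrix_apply hQb.1 hQb.measureReal_pos, hvol]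
    have hs : ∀ (a : Euc d) k, ⟪a, EuclideanSpace.single k (1 : ℝ)⟫ = a k := fun a k => by
      rw [real_inner_comm, inner_single_one]
    have e1 := h1 (EuclideanSpace.single i 1)
    have e2 := h1 (EuclideanSpace.single j 1)
    have e3 := h2 (EuclideanSpace.single i 1) (EuclideanSpace.single j 1)
    simp only [hs, inner_single_one] at e1 e2 e3
    rw [e1, e2, e3, Matrix.of_apply]
    simp only [PiLp.single_apply, eq_comm (a := j)]
    field_simp
  have hdet := hP.le_of_isConvexBody _ hQb
  rw [hcov, det_one_add_update b n hn hbn, hvol, ← hVd, div_le_div_iff₀ (by positivity)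
    (by positivity)] at hdet
  have hmb : 3 - 4 * (m ^ 2 + ‖b‖ ^ 2) ≤ 0 := by
    have hV2 : 0 < V ^ 2 := by positivity
    by_contra! hcon
    nlinarith
  have h_int : ∀ g : Euc d → ℝ, Continuous g → IntegrableOn g (halfBody P n) := fun g hg =>
    hQb.1.integrableOn_continuous hg
  have e : ∀ x : Euc d, (3 * ⟪n, x⟫ - (2 * m + 2 * ⟪b, x⟫)) * (⟪n, x⟫ - (2 * m + 2 * ⟪b, x⟫))
      = 3 * (⟪n, x⟫ * ⟪n, x⟫) - 8 * m * ⟪n, x⟫ - 8 * (⟪n, x⟫ * ⟪b, x⟫) + 4 * m ^ 2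
        + 8 * m * ⟪b, x⟫ + 4 * (⟪b, x⟫ * ⟪b, x⟫) := by intro x; ring
  simp_rw [e]
  rw [integral_add (h_int _ (by fun_prop)) (h_int _ (by fun_prop)),
    integral_add (h_int _ (by fun_prop)) (h_int _ (by fun_prop)),
    integral_add (h_int _ (by fun_prop)) (h_int _ (by fun_prop)),
    integral_sub (h_int _ (by fun_prop)) (h_int _ (by fun_prop)),
    integral_sub (h_int _ (by fun_prop)) (h_int _ (by fun_prop))]
  simp_rw [integral_const_mul, h1, h2, hnn, hbn, hnb, real_inner_self_eq_norm_sq]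
  rw [setIntegral_const, hvol, smul_eq_mul]
  have : V / 2 * (3 - 4 * (m ^ 2 + ‖b‖ ^ 2)) ≤ 0 :=
    mul_nonpos_of_nonneg_of_nonpos (by positivity) hmb
  linarith

end Mirror

end IsExtremalPolytope

end HalfMoments

section Profile
variable {d : ℕ}

theorem exists_eq_Icc_zero {C : Set ℝ} (hC : IsCompact C) (hconv : Convex ℝ C) (h0 : (0 : ℝ) ∈ C)
    (hnn : ∀ s ∈ C, 0 ≤ s) : ∃ u, 0 ≤ u ∧ C = Set.Icc 0 u := by
  obtain ⟨u, hu, hmax⟩ := hC.exists_isMaxOn ⟨0, h0⟩ continuousOn_id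
  refine ⟨u, hnn u hu, subset_antisymm (fun s hs => ⟨hnn s hs, hmax hs⟩) ?_⟩
  exact hconv.ordConnected.out h0 hu

theorem integral_Icc_profile {u : ℝ} (hu : 0 ≤ u) (c : ℝ) :
    ∫ s in Set.Icc 0 u, (3 * s - c) * (s - c) = u * (u - c) ^ 2 := by
  rw [integral_Icc_eq_integral_Ioc, ← intervalIntegral.integral_of_le hu,
    intervalIntegral.integral_eq_sub_of_hasDerivAt (f := fun s => s * (s - c) ^ 2)]
  · simp
  · intro s _
    have := (hasDerivAt_id s).mul (((hasDerivAt_id s).sub_const c).pow 2)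
    refine this.congr_deriv ?_
    simp only [id, Pi.pow_apply]
    push_cast
    ring
  · exact Continuous.intervalIntegrable (by fun_prop) _ _

variable {P : Set (Euc d)} {n : Euc d} {f : Euc d → ℝ}

/-- The integral of the profile polynomial along a line orthogonal to the mirror. -/
theorem line_integral_profile (hc : IsCompact P) (hconv : Convex ℝ P) (hn : ‖n‖ = 1)
    (hsym : ∀ x ∈ P, x - (2 * ⟪n, x⟫) • n ∈ P) (hf : ∀ x (t : ℝ), f (x + t • n) = f x)
    (x : Euc d) :
    ((∀ s : ℝ, 0 ≤ s → x - ⟪n, x⟫ • n + s • n ∉ P) ∧ ∫ t : ℝ, (halfBody P n).indicator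
        (fun z => (3 * ⟪n, z⟫ - f z) * (⟪n, z⟫ - f z)) (x + t • n) = 0) ∨
      ∃ u, 0 ≤ u ∧ (∀ s : ℝ, 0 ≤ s → (x - ⟪n, x⟫ • n + s • n ∈ P ↔ s ≤ u)) ∧
        ∫ t : ℝ, (halfBody P n).indicator
          (fun z => (3 * ⟪n, z⟫ - f z) * (⟪n, z⟫ - f z)) (x + t • n) = u * (u - f x) ^ 2 := by
  have hnn : ⟪n, n⟫ = (1 : ℝ) := by rw [real_inner_self_eq_norm_sq, hn, one_pow]
  set h := x - ⟪n, x⟫ • n with hh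
  have hnh : ⟪n, h⟫ = 0 := by rw [hh, inner_sub_right, inner_smul_right, hnn]; ring
  have hns : ∀ s : ℝ, ⟪n, h + s • n⟫ = s := fun s => by
    rw [inner_add_right, inner_smul_right, hnn, hnh]; ring
  have hfs : ∀ s : ℝ, f (h + s • n) = f x := fun s => by
    rw [show h + s • n = x + (s - ⟪n, x⟫) • n by rw [hh]; module, hf]
  set φ := (halfBody P n).indicator
          (fun z => (3 * ⟪n, z⟫ - f z) * (⟪n, z⟫ - f z)) with hφ
  set C := {s : ℝ | 0 ≤ s ∧ h + s • n ∈ P} with hC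
  have e1 : ∫ t : ℝ, φ (x + t • n) = ∫ s : ℝ, φ (h + s • n) := by
    rw [← integral_add_right_eq_self (fun s : ℝ => φ (h + s • n)) ⟪n, x⟫]
    congr 1; ext t; congr 1; rw [hh]; module
  have e2 : ∀ s : ℝ, φ (h + s • n) = C.indicator (fun s => (3 * s - f x) * (s - f x)) s := by
    intro s
    have : h + s • n ∈ halfBody P n ↔ s ∈ C := by
      rw [halfBody, Set.mem_inter_iff, Set.mem_ofPred_eq, hns, hC, Set.mem_ofPred_eq, and_comm]
    by_cases hs : s ∈ C
    · rw [Set.indicator_of_mem hs, hφ, Set.indicator_of_mem (this.2 hs), hns, hfs]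
    · rw [Set.indicator_of_notMem hs, hφ, Set.indicator_of_notMem (fun h => hs (this.1 h))]
  have hcont : Continuous fun s : ℝ => h + s • n := by fun_prop
  have hCcl : IsClosed C :=
    (isClosed_le continuous_const continuous_id).inter (hc.isClosed.preimage hcont)
  have hCc : IsCompact C := by
    refine (hc.image (f := fun z => ⟪n, z⟫) (by fun_prop)).of_isClosed_subset hCcl ?_
    exact fun s hs => ⟨h + s • n, hs.2, hns s⟩
  rw [e1]
  simp_rw [e2]
  rw [integral_indicator hCcl.measurableSet]
  by_cases hne : ∃ s, s ∈ C
  · obtain ⟨s, hs0, hs⟩ := hne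
    right
    have h0 : (0 : ℝ) ∈ C := by
      refine ⟨le_rfl, ?_⟩
      have h1 := hsym _ hs
      rw [hns] at h1
      have := hconv hs h1 (by norm_num : (0 : ℝ) ≤ 1 / 2) (by norm_num : (0 : ℝ) ≤ 1 / 2)
        (by norm_num)
      convert this using 1
      module
    obtain ⟨u, hu, hCu⟩ := exists_eq_Icc_zero hCc (fun s hs t ht a b ha hb hab => by
        refine ⟨by have := hs.1; have := ht.1; simp only [smul_eq_mul]; positivity, ?_⟩
        have := hconv hs.2 ht.2 ha hb hab
        convert this using 1
        rw [← eq_sub_iff_add_eq'] at hab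
        subst hab
        simp only [smul_eq_mul]
        module) h0 (fun s hs => hs.1)
    refine ⟨u, hu, fun s hs => ?_, by rw [hCu, integral_Icc_profile hu]⟩
    have h1 : s ∈ C ↔ s ∈ Set.Icc 0 u := by rw [hCu]
    constructor
    · exact fun h => (h1.1 ⟨hs, h⟩).2
    · exact fun h => (h1.2 ⟨hs, h⟩).2
  · left
    push Not at hne
    refine ⟨fun s hs hP => hne s ⟨hs, hP⟩, ?_⟩
    rw [Set.eq_empty_iff_forall_notMem.2 hne]
    simp

theorem dense_profile (hc : IsCompact P) (hconv : Convex ℝ P) (hn : ‖n‖ = 1)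
    (hsym : ∀ x ∈ P, x - (2 * ⟪n, x⟫) • n ∈ P) (hf : ∀ x (t : ℝ), f (x + t • n) = f x)
    (hfc : Continuous f)
    (hle : ∫ x in halfBody P n, (3 * ⟪n, x⟫ - f x) * (⟪n, x⟫ - f x) ≤ 0) {W : Set (Euc d)}
    (hW : IsOpen W) (hne : W.Nonempty) (hW1 : ∀ z ∈ W, ⟪n, z⟫ ∈ Set.Icc (0 : ℝ) 1) :
    ∃ z ∈ W, (∀ s : ℝ, 0 ≤ s → z - ⟪n, z⟫ • n + s • n ∉ P) ∨
      ∃ u, 0 ≤ u ∧ (∀ s : ℝ, 0 ≤ s → (z - ⟪n, z⟫ • n + s • n ∈ P ↔ s ≤ u)) ∧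
        (u = 0 ∨ u = f z) := by
  have hQ : IsCompact (halfBody P n) := hc.inter_right (isClosed_halfSpace n)
  have hae := ae_line_integral_eq_zero volume (innerSL ℝ n) (n := n)
    (φ := (halfBody P n).indicator (fun z => (3 * ⟪n, z⟫ - f z) * (⟪n, z⟫ - f z)))
    (by rw [innerSL_apply_apply, real_inner_self_eq_norm_sq, hn, one_pow])
    ((integrable_indicator_iff hQ.measurableSet).2 (hQ.integrableOn_continuous (by fun_prop)))
    (fun x => by
      rcases line_integral_profile hc hconv hn hsym hf x with h | ⟨u, hu, _, h⟩
      · exact h.2.ge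
      · rw [h]; positivity)
    (by rwa [integral_indicator hQ.measurableSet])
  obtain ⟨z, hzW, hz⟩ := (Measure.dense_of_ae hae).inter_open_nonempty W hW hne |>.imp
    fun z hz => (⟨hz.1, hz.2⟩ : z ∈ W ∧ _)
  refine ⟨z, hzW, ?_⟩
  have hz0 := hz (hW1 z hzW)
  rcases line_integral_profile hc hconv hn hsym hf z with h | ⟨u, hu, h1, h⟩
  · exact Or.inl h.1
  · refine Or.inr ⟨u, hu, h1, ?_⟩
    rw [h, mul_eq_zero, sq_eq_zero_iff, sub_eq_zero] at hz0
    exact hz0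

/-- The height of `P` over its mirror is at most the profile function. -/
theorem le_profile (hc : IsCompact P) (hconv : Convex ℝ P) (h0 : 0 ∈ interior P) (hn : ‖n‖ = 1)
    (hsym : ∀ x ∈ P, x - (2 * ⟪n, x⟫) • n ∈ P) (hf : ∀ x (t : ℝ), f (x + t • n) = f x)
    (hfc : Continuous f)
    (hle : ∫ x in halfBody P n, (3 * ⟪n, x⟫ - f x) * (⟪n, x⟫ - f x) ≤ 0) {x : Euc d}
    (hx : x ∈ P) (hx0 : 0 ≤ ⟪n, x⟫) : ⟪n, x⟫ ≤ f x := by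
  by_contra! hcon
  have hnn : ⟪n, n⟫ = (1 : ℝ) := by rw [real_inner_self_eq_norm_sq, hn, one_pow]
  obtain ⟨δ, hδ, hδ0⟩ : ∃ δ : ℝ, δ • n ∈ interior P ∧ 0 < δ := by
    have h1 : Filter.Tendsto (fun t : ℝ => t • n) (nhdsWithin 0 (Set.Ioi 0)) (nhds 0) := by
      have hcont : Continuous fun t : ℝ => t • n := by fun_prop
      have := hcont.tendsto 0
      simp only [zero_smul] at this
      exact this.mono_left nhdsWithin_le_nhds
    exact ((h1.eventually (isOpen_interior.mem_nhds h0)).and self_mem_nhdsWithin).exists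
  set O := interior P ∩ ({z | f z < ⟪n, z⟫} ∩ {z | 0 < ⟪n, z⟫}) with hO
  have hOo : IsOpen O := isOpen_interior.inter ((isOpen_lt hfc (by fun_prop)).inter
    (isOpen_lt continuous_const (by fun_prop)))
  obtain ⟨p, hp⟩ : O.Nonempty := by
    have hcont : Continuous fun t : ℝ => (1 - t) • x + t • (δ • n) := by fun_prop
    have h1 := (hcont.tendsto 0).mono_left (nhdsWithin_le_nhds (s := Set.Ioi 0))
    simp only [sub_zero, one_smul, zero_smul, add_zero] at h1
    have h2 := h1.eventually ((isOpen_lt hfc (by fun_prop : Continuous fun z : Euc d =>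
      ⟪n, z⟫)).mem_nhds hcon)
    obtain ⟨t, ⟨ht, ht0⟩, ht1⟩ := ((h2.and self_mem_nhdsWithin).and
      (nhdsWithin_le_nhds (Iio_mem_nhds (zero_lt_one' ℝ)))).exists
    have ht0' : 0 < t := ht0
    have ht1' : t < 1 := ht1
    refine ⟨_, ?_, ht, ?_⟩
    · exact hconv.combo_self_interior_mem_interior hx hδ (by linarith) ht0' (by ring)
    · rw [Set.mem_ofPred_eq, inner_add_right, inner_smul_right, inner_smul_right, inner_smul_right,
        hnn]
      have := mul_pos ht0' hδ0
      have := mul_nonneg (sub_nonneg.2 ht1'.le) hx0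
      linarith
  set c := ⟪n, p⟫ - 1 / 2 with hcd
  obtain ⟨z, ⟨hzO, hz0, hz1⟩, hz⟩ := dense_profile hc hconv hn hsym hf hfc hle
    (W := (fun z => z + c • n) ⁻¹' O ∩ ({z | 0 < ⟪n, z⟫} ∩ {z | ⟪n, z⟫ < 1}))
    ((hOo.preimage (by fun_prop)).inter ((isOpen_lt continuous_const (by fun_prop)).inter
      (isOpen_lt (by fun_prop) continuous_const)))
    ⟨p - c • n, by simpa using hp, by
      constructor <;> simp only [Set.mem_ofPred_eq, inner_sub_right, inner_smul_right, hnn, hcd] <;>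
      linarith⟩ (fun z hz => ⟨le_of_lt hz.2.1, le_of_lt hz.2.2⟩)
  have hzP : z + c • n ∈ P := interior_subset hzO.1
  have hz2 : f (z + c • n) < ⟪n, z + c • n⟫ := hzO.2.1
  have hz3 : 0 < ⟪n, z + c • n⟫ := hzO.2.2
  set s := ⟪n, z + c • n⟫ with hs
  have e : z - ⟪n, z⟫ • n + s • n = z + c • n := by
    rw [hs, inner_add_right, inner_smul_right, hnn]; module
  rw [hf] at hz2
  rcases hz with hz | ⟨u, hu, hiff, hz | hz⟩
  · exact hz s hz3.le (by rwa [e])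
  · have := (hiff s hz3.le).1 (by rwa [e])
    linarith
  · have := (hiff s hz3.le).1 (by rwa [e])
    linarith

/-- The graph of the profile function over the mirror section belongs to `P`. -/
theorem profile_mem (hc : IsCompact P) (hconv : Convex ℝ P) (h0 : 0 ∈ interior P) (hn : ‖n‖ = 1)
    (hsym : ∀ x ∈ P, x - (2 * ⟪n, x⟫) • n ∈ P) (hf : ∀ x (t : ℝ), f (x + t • n) = f x)
    (hfc : Continuous f)
    (hle : ∫ x in halfBody P n, (3 * ⟪n, x⟫ - f x) * (⟪n, x⟫ - f x) ≤ 0) {h : Euc d}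
    (hh : h ∈ P) (hh0 : ⟪n, h⟫ = 0) : h + f h • n ∈ P := by
  have hnn : ⟪n, n⟫ = (1 : ℝ) := by rw [real_inner_self_eq_norm_sq, hn, one_pow]
  have h_int : ∀ h ∈ interior P, ⟪n, h⟫ = 0 → h + f h • n ∈ P := by
    intro h hh hh0
    by_contra hcon
    set π : Euc d → Euc d := fun z => z - ⟪n, z⟫ • n with hπ
    have hπc : Continuous π := by fun_prop
    have hsub : π (h + (1 / 2 : ℝ) • n) = h := by
      simp only [hπ, inner_add_right, inner_smul_right, hnn, hh0]; module
    obtain ⟨z, ⟨⟨hz1, hz2⟩, _⟩, hz⟩ := dense_profile hc hconv hn hsym hf hfc hle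
      (W := (π ⁻¹' interior P ∩ (fun z => π z + f z • n) ⁻¹' Pᶜ)
        ∩ ({z | 0 < ⟪n, z⟫} ∩ {z | ⟪n, z⟫ < 1}))
      (((isOpen_interior.preimage hπc).inter (hc.isClosed.isOpen_compl.preimage (by fun_prop))).inter
        ((isOpen_lt continuous_const (by fun_prop)).inter (isOpen_lt (by fun_prop) continuous_const)))
      ⟨h + (1 / 2 : ℝ) • n, ⟨by rwa [Set.mem_preimage, hsub], by
        rw [Set.mem_preimage, hsub, hf]; exact hcon⟩, by
        constructor <;> simp only [Set.mem_ofPred_eq, inner_add_right, inner_smul_right, hnn, hh0] <;>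
        norm_num⟩ (fun z hz => ⟨le_of_lt hz.2.1, le_of_lt hz.2.2⟩)
    have hzP : π z ∈ interior P := hz1
    have hfz : f (π z) = f z := by
      rw [hπ, ← hf z (-⟪n, z⟫)]; congr 1; module
    have hnz : ⟪n, π z⟫ = 0 := by
      simp only [hπ, inner_sub_right, inner_smul_right, hnn]; ring
    have hf0 : 0 ≤ f z := by
      have := le_profile hc hconv h0 hn hsym hf hfc hle (interior_subset hzP) hnz.ge
      rwa [hnz, hfz] at this
    rcases hz with hz | ⟨u, hu, hiff, hz | hz⟩
    · exact hz 0 le_rfl (by rw [zero_smul, add_zero]; exact interior_subset hzP)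
    · have h1 : Filter.Tendsto (fun t : ℝ => π z + t • n) (nhdsWithin 0 (Set.Ioi 0))
          (nhds (π z)) := by
        have hcont : Continuous fun t : ℝ => π z + t • n := by fun_prop
        have := hcont.tendsto 0
        simp only [zero_smul, add_zero] at this
        exact this.mono_left nhdsWithin_le_nhds
      obtain ⟨t, ht, ht0⟩ := ((h1.eventually (isOpen_interior.mem_nhds hzP)).and
        self_mem_nhdsWithin).exists
      have ht0' : 0 < t := ht0
      have := (hiff t ht0'.le).1 (interior_subset ht)
      linarith
    · exact hz2 ((hiff (f z) hf0).2 hz.ge)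
  have hcont : Continuous fun t : ℝ => (1 - t) • h + f ((1 - t) • h) • n := by fun_prop
  have h1 := (hcont.tendsto 0).mono_left (nhdsWithin_le_nhds (s := Set.Ioi 0))
  simp only [sub_zero, one_smul] at h1
  refine hc.isClosed.mem_of_tendsto h1 ?_
  filter_upwards [self_mem_nhdsWithin, nhdsWithin_le_nhds (Iio_mem_nhds (zero_lt_one' ℝ))]
    with t ht0 ht1
  have ht0' : 0 < t := ht0
  have ht1' : t < 1 := ht1
  refine h_int _ ?_ (by rw [inner_smul_right, hh0, mul_zero])
  have := hconv.combo_self_interior_mem_interior hh h0 (a := 1 - t) (b := t) (by linarith) ht0'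
    (by ring)
  simpa using this

end Profile

section Conclusion
variable {d : ℕ}

theorem isSimplexWith_of_eq_convexHull_insert {P : Set (Euc d)} {F : Finset (Euc d)}
    (hF : F.card = d) {q : Euc d} (hP : P = convexHull ℝ (insert q (F : Set (Euc d))))
    (hne : (interior P).Nonempty) : IsSimplexWith (d + 1) P := by
  set e := Finset.equivFinOfCardEq hF with he
  set w : Fin (d + 1) → Euc d := Fin.cons q fun i => (e.symm i : Euc d) with hw
  have hr : Set.range w = insert q (F : Set (Euc d)) := by
    rw [hw, Fin.range_cons]
    congr 1
    ext x
    constructor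
    · rintro ⟨i, rfl⟩; exact (e.symm i).2
    · exact fun hx => ⟨e ⟨x, hx⟩, by simp⟩
  refine ⟨w, ?_, by rw [hr, hP]⟩
  rw [affineIndependent_iff_finrank_vectorSpan_eq ℝ w (n := d) (by simp), hr,
    ← direction_affineSpan]
  rw [hP, interior_convexHull_nonempty_iff_affineSpan_eq_top] at hne
  rw [hne, AffineSubspace.direction_top, finrank_top, finrank_euclideanSpace_fin]

namespace IsExtremalPolytope
variable {P : Set (Euc d)} {𝓕 : Finset (Finset (Euc d))} (hP : IsExtremalPolytope P 𝓕)
include hP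

theorem isSimplexWith (hd : 0 < d) : IsSimplexWith (d + 1) P := by
  classical
  obtain ⟨F, hF, -⟩ := hP.cover 0
  have hF1 := (hP.mem_iff F).1 hF
  have hcard := hP.card_eq hF
  obtain ⟨v, hv⟩ : F.Nonempty := Finset.card_pos.1 (by omega)
  obtain ⟨n, hn, hnv, hnu, hsym⟩ := hP.exists_mirror hF hv
  obtain ⟨m, b, hbn, hle⟩ := hP.exists_half_profile hn hsym
  have hnn : ⟪n, n⟫ = (1 : ℝ) := by rw [real_inner_self_eq_norm_sq, hn, one_pow]
  set f : Euc d → ℝ := fun x => 2 * m + 2 * ⟪b, x⟫ with hfd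
  have hf : ∀ x (t : ℝ), f (x + t • n) = f x := fun x t => by
    simp only [hfd, inner_add_right, inner_smul_right, hbn]; ring
  have hfc : Continuous f := by fun_prop
  have hupper : ∀ x ∈ P, 0 ≤ ⟪n, x⟫ → ⟪n, x⟫ ≤ f x := fun x hx h0 =>
    le_profile hP.isCompact hP.convex hP.zero_mem_interior hn hsym hf hfc hle hx h0
  have hlower : ∀ x ∈ P, ⟪n, x⟫ = 0 → x + f x • n ∈ P := fun x hx h0 =>
    profile_mem hP.isCompact hP.convex hP.zero_mem_interior hn hsym hf hfc hle hx h0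
  have hproj : ∀ x ∈ P, x - ⟪n, x⟫ • n ∈ P := by
    intro x hx
    have := hP.convex hx (hsym x hx) (by norm_num : (0 : ℝ) ≤ 1 / 2)
      (by norm_num : (0 : ℝ) ≤ 1 / 2) (by norm_num)
    convert this using 1
    module
  have hproj0 : ∀ x, ⟪n, x - ⟪n, x⟫ • n⟫ = 0 := fun x => by
    rw [inner_sub_right, inner_smul_right, hnn]; ring
  have hfproj : ∀ x, f (x - ⟪n, x⟫ • n) = f x := fun x => by
    rw [sub_eq_add_neg, ← neg_smul, hf]
  have hm : 0 < m := by
    have hcont : Continuous fun t : ℝ => t • n := by fun_prop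
    have h1 := (hcont.tendsto 0).mono_left (nhdsWithin_le_nhds (s := Set.Ioi 0))
    simp only [zero_smul] at h1
    obtain ⟨t, ht, ht0⟩ := ((h1.eventually (isOpen_interior.mem_nhds hP.zero_mem_interior)).and
      self_mem_nhdsWithin).exists
    have ht0' : 0 < t := ht0
    have h2 : ⟪n, t • n⟫ = t := by rw [inner_smul_right, hnn, mul_one]
    have h3 := hupper _ (interior_subset ht) (by rw [h2]; exact ht0'.le)
    rw [h2] at h3
    simp only [hfd, inner_smul_right, hbn] at h3
    linarith
  have hfu : ∀ u ∈ F, u ≠ v → f u = 0 := by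
    intro u hu hne
    have h1 := hlower u (hF1.subset hu) (hnu u hu hne)
    have h2 := hsym _ h1
    have h3 : ⟪n, u + f u • n⟫ = f u := by
      rw [inner_add_right, inner_smul_right, hnn, hnu u hu hne]; ring
    rw [h3] at h2
    have h4 := hF1.eq_of_combo hu h1 h2 (by norm_num : (0 : ℝ) < 1 / 2)
      (by norm_num : (0 : ℝ) < 1 / 2) (by norm_num) (by module)
    rw [h4, hnu u hu hne] at h3
    exact h3.symm
  have hfv : f v = ⟪n, v⟫ := by
    refine le_antisymm ?_ (hupper v (hF1.subset hv) hnv.le)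
    by_contra! hcon
    have hpos : 0 < f v := hnv.trans hcon
    have h1 := hproj v (hF1.subset hv)
    have h2 := hlower _ h1 (hproj0 v)
    rw [hfproj] at h2
    have h3 := hF1.eq_of_combo (a := 1 - ⟪n, v⟫ / f v) (b := ⟪n, v⟫ / f v) hv h1 h2
      (by rw [sub_pos, div_lt_one hpos]; exact hcon) (by positivity) (by ring) (by
        rw [smul_add, smul_smul, div_mul_cancel₀ _ hpos.ne']
        module)
    have h4 := hproj0 v
    rw [h3] at h4
    linarith
  set v' := v - (2 * ⟪n, v⟫) • n with hv'
  refine isSimplexWith_of_eq_convexHull_insert hcard (q := v') ?_ ⟨0, hP.zero_mem_interior⟩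
  apply subset_antisymm
  · intro x hx
    have hy1 : ⟪n, x⟫ ≤ f x := by
      rcases le_total 0 ⟪n, x⟫ with h | h
      · exact hupper x hx h
      · have := hupper _ (hproj x hx) (hproj0 x).ge
        rw [hproj0, hfproj] at this
        linarith
    have hy2 : -⟪n, x⟫ ≤ f x := by
      rcases le_total 0 ⟪n, x⟫ with h | h
      · linarith
      · have h1 := inner_mirror hn x
        have := hupper _ (hsym x hx) (by rw [h1]; linarith)
        rw [h1, sub_eq_add_neg, ← neg_smul, hf] at this
        exact this
    set p := x - ⟪n, x⟫ • n + f x • n with hp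
    have hpP : p ∈ P := by
      have := hlower _ (hproj x hx) (hproj0 x)
      rwa [hfproj] at this
    have hpn : ⟪n, p⟫ = f x := by
      rw [hp, inner_add_right, hproj0, inner_smul_right, hnn]; ring
    have hfp : f p = f x := by rw [hp, hf, hfproj]
    have hpsum := hF1.isBasis.sum_vcoord_smul p
    set c : Euc d → ℝ := fun w => vcoord F w p with hc
    have hcv : ⟪n, p⟫ = c v * ⟪n, v⟫ := by
      rw [← hpsum, inner_sum, Finset.sum_eq_single v]
      · rw [inner_smul_right]
      · intro u hu hne
        rw [inner_smul_right, hnu u hu hne, mul_zero]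
      · exact fun h => absurd hv h
    have hcb : 2 * ⟪b, p⟫ = -2 * m * sumCoord F p + c v * ⟪n, v⟫ := by
      have h1 : ∀ w ∈ F, 2 * ⟪b, c w • w⟫ = -2 * m * c w + if w = v then c v * ⟪n, v⟫ else 0 := by
        intro w hw
        rw [inner_smul_right]
        split_ifs with hwv
        · subst hwv
          simp only [hfd] at hfv
          have : 2 * ⟪b, w⟫ = ⟪n, w⟫ - 2 * m := by linarith
          linear_combination c w * this
        · have h2 := hfu w hw hwv
          simp only [hfd] at h2
          linear_combination c w * h2
      rw [← hpsum, inner_sum, Finset.mul_sum, Finset.sum_congr rfl h1, Finset.sum_add_distrib,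
        hpsum, sumCoord_apply, Finset.mul_sum, Finset.sum_ite_eq' F v, if_pos hv]
    have hs1 : sumCoord F p = 1 := by
      have h1 : f p = c v * ⟪n, v⟫ := by rw [hfp, ← hpn, hcv]
      simp only [hfd] at h1
      have h2 : 2 * m * (1 - sumCoord F p) = 0 := by linarith
      have := (mul_eq_zero.1 h2).resolve_left (by positivity)
      linarith
    have hcone := hF1.mem_vcone p hpP hs1
    have hfcv : f x = c v * ⟪n, v⟫ := by rw [← hpn, hcv]
    set β := (f x - ⟪n, x⟫) / (2 * ⟪n, v⟫) with hβ
    have hβ0 : 0 ≤ β := div_nonneg (by linarith) (by positivity)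
    have hβ1 : β ≤ c v := by
      rw [hβ, div_le_iff₀ (by positivity)]
      linarith
    have hx' : x = (c v - β) • v + β • v' + ∑ u ∈ F.erase v, c u • u := by
      have h1 : p = c v • v + ∑ u ∈ F.erase v, c u • u := by
        rw [Finset.add_sum_erase F (fun u => c u • u) hv]; exact hpsum.symm
      have h2 : x = p - (f x - ⟪n, x⟫) • n := by rw [hp]; module
      have h3 : f x - ⟪n, x⟫ = β * (2 * ⟪n, v⟫) := by rw [hβ]; field_simp
      rw [h2, h3, h1, hv']
      module
    have hsum : c v + ∑ u ∈ F.erase v, c u = 1 := by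
      rw [Finset.add_sum_erase F c hv, ← hs1, sumCoord_apply]
    set S : Set (Euc d) := insert v' (F : Set (Euc d)) with hS
    have hSF : ∀ u ∈ F, u ∈ convexHull ℝ S := fun u hu =>
      subset_convexHull ℝ S (Set.mem_insert_of_mem _ hu)
    have hSv' : v' ∈ convexHull ℝ S := subset_convexHull ℝ S (Set.mem_insert _ _)
    have key : c v • ((1 - β / c v) • v + (β / c v) • v') + ∑ u ∈ F.erase v, c u • u
        ∈ convexHull ℝ S := by
      have hcv0 : 0 ≤ c v := hcone v hv
      have hq : (1 - β / c v) • v + (β / c v) • v' ∈ convexHull ℝ S :=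
        convex_convexHull ℝ S (hSF v hv) hSv' (sub_nonneg.2 (div_le_one_of_le₀ hβ1 hcv0))
          (div_nonneg hβ0 hcv0) (by ring)
      have := (convex_convexHull ℝ S).sum_mem (t := F) (w := c)
        (z := fun u => if u = v then (1 - β / c v) • v + (β / c v) • v' else u)
        hcone (by rw [← Finset.add_sum_erase F c hv]; exact hsum) (fun u hu => by
          split_ifs
          · exact hq
          · exact hSF u hu)
      rw [← Finset.add_sum_erase F _ hv, if_pos rfl] at this
      convert this using 2
      refine Finset.sum_congr rfl fun u hu => ?_
      rw [if_neg (Finset.ne_of_mem_erase hu)]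
    rw [hx']
    rcases (hcone v hv).eq_or_lt with h0 | h0
    · have hcv0 : c v = 0 := h0.symm
      have hβ' : β = 0 := le_antisymm (by rw [← hcv0]; exact hβ1) hβ0
      rw [hβ', hcv0] at key ⊢
      simpa using key
    · have hcv0 : c v ≠ 0 := h0.ne'
      convert key using 2
      rw [smul_add, smul_smul, smul_smul, mul_sub, mul_one, mul_div_cancel₀ _ hcv0]
  · refine convexHull_min ?_ hP.convex
    rintro y (rfl | hy)
    · exact hsym v (hF1.subset hv)
    · exact hF1.subset hy

end IsExtremalPolytope

end Conclusion

section AffineInvariance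
variable {E : Type*} [NormedAddCommGroup E] [NormedSpace ℝ E]

/-- The affine map `x ↦ f x + t`. -/
def affineOf (f : E ≃L[ℝ] E) (t : E) : E →ᵃ[ℝ] E :=
  (f : E →ₗ[ℝ] E).toAffineMap + AffineMap.const ℝ E t

theorem coe_affineOf (f : E ≃L[ℝ] E) (t : E) : ⇑(affineOf f t) = fun x => f x + t := rfl

theorem bijective_add_const (f : E ≃L[ℝ] E) (t : E) : Function.Bijective fun x => f x + t :=
  (Equiv.addRight t).bijective.comp f.bijective

theorem IsSimplexWith.image_affine {n : ℕ} {F : Set E} (hF : IsSimplexWith n F)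
    (f : E ≃L[ℝ] E) (t : E) : IsSimplexWith n ((fun x => f x + t) '' F) := by
  obtain ⟨w, hw, rfl⟩ := hF
  refine ⟨affineOf f t ∘ w, hw.map' _ (bijective_add_const f t).injective, ?_⟩
  rw [← coe_affineOf, AffineMap.image_convexHull, Set.range_comp]

theorem image_symm_image_affine (f : E ≃L[ℝ] E) (t : E) (F : Set E) :
    (fun x => f.symm x + f.symm (-t)) '' ((fun x => f x + t) '' F) = F := by
  rw [Set.image_image]
  simp

theorem IsPolytope.image_affine {P : Set E} (hP : IsPolytope P) (f : E ≃L[ℝ] E) (t : E) :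
    IsPolytope ((fun x => f x + t) '' P) := by
  classical
  obtain ⟨S, rfl⟩ := hP
  refine ⟨S.image fun x => f x + t, ?_⟩
  rw [← coe_affineOf, AffineMap.image_convexHull, Finset.coe_image]

theorem sdim_image_affine (f : E ≃L[ℝ] E) (t : E) (F : Set E) :
    sdim ((fun x => f x + t) '' F) = sdim F := by
  have hlin : (affineOf f t).linear = (f : E →ₗ[ℝ] E) := by simp [affineOf]
  rw [sdim, sdim, ← coe_affineOf, ← AffineSubspace.map_span, AffineSubspace.map_direction, hlin]
  exact LinearEquiv.finrank_map_eq f.toLinearEquiv _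

theorem IsFacetOf.preimage_affine {n : ℕ} {P F : Set E} (f : E ≃L[ℝ] E) (t : E)
    (hF : IsFacetOf n ((fun x => f x + t) '' P) F) :
    IsFacetOf n P ((fun x => f x + t) ⁻¹' F) := by
  have himage := Set.image_preimage_eq F (bijective_add_const f t).surjective
  refine ⟨fun hne => ?_, ?_⟩
  · obtain ⟨l, hl⟩ := hF.1 (himage ▸ hne.image _)
    refine ⟨l.comp (f : E →L[ℝ] E), ?_⟩
    ext x
    rw [hl]
    simp
  · rw [← sdim_image_affine f t, himage, hF.2]

theorem IsFacetOf.isSimplexWith_image_affine {n : ℕ} {P : Set E}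
    (h : ∀ F : Set E, IsFacetOf n P F → IsSimplexWith n F) (f : E ≃L[ℝ] E) (t : E) {F : Set E}
    (hF : IsFacetOf n ((fun x => f x + t) '' P) F) : IsSimplexWith n F := by
  rw [← Set.image_preimage_eq F (bijective_add_const f t).surjective]
  exact (h _ (hF.preimage_affine f t)).image_affine f t

theorem IsSimplicialPolytope.pos {n : ℕ} {P : Set E} (hP : IsSimplicialPolytope n P)
    (hne : P.Nonempty) : 0 < n := by
  rcases Nat.eq_zero_or_pos n with rfl | h
  · obtain ⟨w, -, hw⟩ := hP.2.2 P ⟨IsExposed.refl P, hP.2.1⟩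
    simp [hw] at hne
  · exact h

end AffineInvariance

section Assembly
variable {d : ℕ}

theorem det_div_le_of_isoConst_le (hd : 0 < d) {K P : Set (Euc d)} (hK : IsConvexBody K)
    (hP : IsConvexBody P) (h : isoConst K ≤ isoConst P) :
    (covMatrix K).det / volume.real K ^ 2 ≤ (covMatrix P).det / volume.real P ^ 2 := by
  have hK0 := (div_pos (posDef_covMatrix hK).det_pos (pow_pos hK.measureReal_pos 2)).le
  have hP0 := (div_pos (posDef_covMatrix hP).det_pos (pow_pos hP.measureReal_pos 2)).le
  exact (Real.rpow_le_rpow_iff hK0 hP0 (by positivity)).1 h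

theorem IsIsotropic.integral_apply {K : Set (Euc d)} (h : IsIsotropic K) (hK : IsConvexBody K)
    (i : Fin d) : ∫ x in K, x i = 0 := by
  have h1 := centroid_apply hK.1 i
  rw [h.1, PiLp.zero_apply, eq_comm, mul_eq_zero] at h1
  exact h1.resolve_left (inv_ne_zero hK.measureReal_pos.ne')

theorem IsIsotropic.integral_mul {K : Set (Euc d)} (h : IsIsotropic K) (hK : IsConvexBody K)
    (i j : Fin d) : ∫ x in K, x i * x j = if i = j then volume.real K else 0 := by
  have h1 := covMatrix_apply hK.1 hK.measureReal_pos i j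
  have hV := hK.measureReal_pos.ne'
  rw [h.2, h.integral_apply hK, h.integral_apply hK, Matrix.one_apply, mul_zero, mul_zero,
    sub_zero] at h1
  split_ifs at h1 ⊢
  · field_simp at h1
    exact h1.symm
  · exact (mul_eq_zero.1 h1.symm).resolve_left (inv_ne_zero hV)

theorem IsIsotropic.zero_mem_interior {K : Set (Euc d)} (h : IsIsotropic K)
    (hK : IsConvexBody K) : 0 ∈ interior K := by
  by_contra h0
  obtain ⟨l, hl⟩ := geometric_hahn_banach_open_point hK.2.1.interior isOpen_interior h0
  rw [map_zero] at hl
  have hle : ∀ x ∈ K, l x ≤ 0 := by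
    intro x hx
    have hx' : x ∈ closure (interior K) := by
      rw [hK.2.1.closure_interior_eq_closure_of_nonempty_interior hK.2.2]
      exact subset_closure hx
    exact closure_minimal (fun y hy => (hl y hy).le)
      (isClosed_le l.continuous continuous_const) hx'
  have h_int : ∫ x in K, l x = 0 := by
    have hsum : ∀ x : Euc d, l x = ∑ i, (InnerProductSpace.toDual ℝ (Euc d)).symm l i * x i := by
      intro x
      rw [← inner_eq_sum_apply, InnerProductSpace.toDual_symm_apply]
    simp_rw [hsum]
    rw [integral_finsetSum _ fun i _ => hK.1.integrableOn_continuous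
      (by have := continuous_euc_apply i; fun_prop)]
    exact Finset.sum_eq_zero fun i _ => by rw [integral_const_mul, h.integral_apply hK, mul_zero]
  have hneg : ∫ x in K, -l x = 0 := by rw [integral_neg, h_int, neg_zero]
  have hae := (setIntegral_eq_zero_iff_of_nonneg_ae
    ((ae_restrict_iff' hK.1.measurableSet).2 (.of_forall fun x hx => neg_nonneg.2 (hle x hx)))
    (hK.1.integrableOn_continuous l.continuous.neg)).1 hneg
  rw [Filter.EventuallyEq, ae_restrict_iff' hK.1.measurableSet] at hae
  obtain ⟨y, hy⟩ := hK.2.2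
  have hpos : 0 < volume (interior K) := isOpen_interior.measure_pos _ ⟨y, hy⟩
  refine hpos.ne' (measure_mono_null ?_ hae)
  intro x hx hx'
  have := hx' (interior_subset hx)
  have := hl x hx
  simp_all

theorem isSimplexWith_of_isIsotropic (hd : 0 < d) {P : Set (Euc d)} (hP : IsConvexBody P)
    (hpoly : IsPolytope P) (hfac : ∀ F : Set (Euc d), IsFacetOf d P F → IsSimplexWith d F)
    (hiso : IsIsotropic P)
    (hmax : ∀ K : Set (Euc d), IsConvexBody K →
      (covMatrix K).det / volume.real K ^ 2 ≤ (covMatrix P).det / volume.real P ^ 2) :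
    IsSimplexWith (d + 1) P := by
  obtain ⟨S, hS⟩ := hpoly
  have hfin : Module.finrank ℝ (Euc d) = d := finrank_euclideanSpace_fin
  have h0 := hiso.zero_mem_interior hP
  obtain ⟨𝓕, hmem, hcover⟩ := exists_facets hS h0 (by rwa [hfin]) (by rwa [hfin])
  have hext : IsExtremalPolytope P 𝓕 :=
    { isCompact := hP.1
      convex := hP.2.1
      zero_mem_interior := h0
      mem_iff := hmem
      cover := hcover
      integral_apply := hiso.integral_apply hP
      integral_mul := hiso.integral_mul hP
      le_of_isConvexBody := fun K hK => by
        have := hmax K hK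
        rwa [hiso.2, Matrix.det_one] at this }
  exact hext.isSimplexWith hd

end Assembly

/-- If `P` is a `d`-dimensional simplicial polytope maximizing the isotropic
constant among all `d`-dimensional convex bodies, then `P` is a simplex (the convex hull of
`d + 1` affinely independent points). -/
theorem stmt2 {d : ℕ} (P : Set (Euc d)) (hbody : IsConvexBody P)
    (hsimp : IsSimplicialPolytope d P)
    (hmax : ∀ K : Set (Euc d), IsConvexBody K → isoConst K ≤ isoConst P) :
    IsSimplexWith (d + 1) P := by
  have hd : 0 < d := hsimp.pos (hbody.2.2.mono interior_subset)
  obtain ⟨f, t, hiso⟩ := exists_isIsotropic_image hbody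
  have hQ := isSimplexWith_of_isIsotropic hd (hbody.image_affine f t)
    (hsimp.1.image_affine f t)
    (fun F hF => IsFacetOf.isSimplexWith_image_affine hsimp.2.2 f t hF) hiso fun K hK => by
      rw [det_covMatrix_div_image_affine hbody.1 hbody.measureReal_pos]
      exact det_div_le_of_isoConst_le hd hK hbody (hmax K hK)
  rw [← image_symm_image_affine f t P]
  exact hQ.image_affine f.symm _

end
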